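/- arXiv:1601.04032 — 7 statements merged into one kernel-verified Lean document; each statement's English description precedes it below -/
import Mathlib

section
/- Let α, β ∈ ℂ, let U ⊆ ℂ be open, and let p, q : U → ℂ be holomorphic functions satisfying p′(z) = −q(z)² − z·p(z) − α and q′(z) = p(z)² + z·q(z) + β on U. Then the function w(z) = p(z) + q(z) − z satisfies the second-order differential equation 2·w·w″ = (w′)² − w⁴ − 4z·w³ − (2α + 2β + 3z²)·w² − (α − β + 1)² at every point of U. -/
/-!
With `w = p + q - z` and `v = p - q`, the system becomes `w' = v w - c`, where `c = α - β + 1`,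
and `2 v' = -v² - f`, where `f = w² + 4 z w + 2 α + 2 β + 3 z²`. Differentiating the first equation
gives `2 w w'' = 2 w² v' + 2 (v w) w'`. Substituting the second equation and `v w = w' + c` leaves
`2 w w'' = -(w' + c)² - f w² + 2 (w' + c) w' = (w')² - f w² - c²`.
-/

open scoped Topology

variable {𝕜 : Type*} [NontriviallyNormedField 𝕜]

theorem two_mul_deriv_deriv_of_riccati {w v : 𝕜 → 𝕜} {v' c f z : 𝕜}
    (hw : ∀ᶠ t in 𝓝 z, HasDerivAt w (v t * w t - c) t)
    (hv : HasDerivAt v v' z) (hv' : 2 * v' = -(v z) ^ 2 - f) :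
    2 * w z * deriv (deriv w) z = (deriv w z) ^ 2 - f * (w z) ^ 2 - c ^ 2 := by
  have deriv_w : deriv w =ᶠ[𝓝 z] fun t => v t * w t - c := hw.mono fun _ ht => ht.deriv
  have deriv_deriv_w : deriv (deriv w) z = v' * w z + v z * (v z * w z - c) :=
    deriv_w.deriv_eq.trans ((hv.mul hw.self_of_nhds).sub_const c).deriv
  rw [deriv_deriv_w, deriv_w.self_of_nhds]
  linear_combination (w z) ^ 2 * hv'

/-- The Hamiltonian system `p' = -q² - z p - α`, `q' = p² + z q + β` at a point `z`.
Differentiability is part of the condition, since `deriv` is `0` where a function is not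
differentiable. -/
structure SatisfiesHamiltonianSystemAt (α β : 𝕜) (p q : 𝕜 → 𝕜) (z : 𝕜) : Prop where
  hasDerivAt_p : HasDerivAt p (-(q z) ^ 2 - z * p z - α) z
  hasDerivAt_q : HasDerivAt q ((p z) ^ 2 + z * q z + β) z

namespace SatisfiesHamiltonianSystemAt

variable {α β : 𝕜} {p q : 𝕜 → 𝕜} {z : 𝕜}

theorem of_deriv (hp : DifferentiableAt 𝕜 p z) (hq : DifferentiableAt 𝕜 q z)
    (hp' : deriv p z = -(q z) ^ 2 - z * p z - α) (hq' : deriv q z = (p z) ^ 2 + z * q z + β) :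
    SatisfiesHamiltonianSystemAt α β p q z :=
  ⟨hp' ▸ hp.hasDerivAt, hq' ▸ hq.hasDerivAt⟩

theorem hasDerivAt_add_sub_id (h : SatisfiesHamiltonianSystemAt α β p q z) :
    HasDerivAt (fun t => p t + q t - t)
      ((p z - q z) * (p z + q z - z) - (α - β + 1)) z :=
  ((h.hasDerivAt_p.fun_add h.hasDerivAt_q).fun_sub (hasDerivAt_id' z)).congr_deriv (by ring)

theorem two_mul_deriv_sub (h : SatisfiesHamiltonianSystemAt α β p q z) :
    2 * deriv (fun t => p t - q t) z =
      -(p z - q z) ^ 2 - ((p z + q z - z) ^ 2 + 4 * z * (p z + q z - z)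
        + (2 * α + 2 * β + 3 * z ^ 2)) := by
  rw [(h.hasDerivAt_p.fun_sub h.hasDerivAt_q).deriv]
  ring

end SatisfiesHamiltonianSystemAt

theorem stmt_0_general {α β : 𝕜} {p q : 𝕜 → 𝕜} {z : 𝕜}
    (h : ∀ᶠ t in 𝓝 z, SatisfiesHamiltonianSystemAt α β p q t) :
    2 * (p z + q z - z) * deriv (deriv (fun w => p w + q w - w)) z =
      (deriv (fun w => p w + q w - w) z) ^ 2 - (p z + q z - z) ^ 4
        - 4 * z * (p z + q z - z) ^ 3
        - (2 * α + 2 * β + 3 * z ^ 2) * (p z + q z - z) ^ 2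
        - (α - β + 1) ^ 2 := by
  have hz := h.self_of_nhds
  have hasDerivAt_sub :=
    (hz.hasDerivAt_p.fun_sub hz.hasDerivAt_q).differentiableAt.hasDerivAt
  linear_combination two_mul_deriv_deriv_of_riccati
    (h.mono fun _ ht => ht.hasDerivAt_add_sub_id) hasDerivAt_sub hz.two_mul_deriv_sub

/-- If holomorphic `p, q` on an open set `U ⊆ ℂ` solve the Hamiltonian
system `p′ = −q² − z·p − α`, `q′ = p² + z·q + β`, then `w = p + q − z` satisfies
`2ww″ = (w′)² − w⁴ − 4zw³ − (2α+2β+3z²)w² − (α−β+1)²` on `U`. -/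
theorem stmt_0 (α β : ℂ) (U : Set ℂ) (hU : IsOpen U) (p q : ℂ → ℂ)
    (hp : DifferentiableOn ℂ p U) (hq : DifferentiableOn ℂ q U)
    (hp' : ∀ z ∈ U, deriv p z = -(q z) ^ 2 - z * p z - α)
    (hq' : ∀ z ∈ U, deriv q z = (p z) ^ 2 + z * q z + β) :
    ∀ z ∈ U,
      2 * (p z + q z - z) * deriv (deriv (fun w => p w + q w - w)) z =
        (deriv (fun w => p w + q w - w) z) ^ 2 - (p z + q z - z) ^ 4
          - 4 * z * (p z + q z - z) ^ 3
          - (2 * α + 2 * β + 3 * z ^ 2) * (p z + q z - z) ^ 2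
          - (α - β + 1) ^ 2 := fun _ hz =>
  stmt_0_general <| (hU.eventually_mem hz).mono fun t ht => .of_deriv
    (hp.differentiableAt (hU.mem_nhds ht)) (hq.differentiableAt (hU.mem_nhds ht))
    (hp' t ht) (hq' t ht)
end

section
/- Let α, β ∈ ℂ, let ω ∈ ℂ satisfy ω³ = 1, let U ⊆ ℂ be open, and let p, q : U → ℂ be holomorphic functions satisfying p′(z) = −q(z)² − z·p(z) − α and q′(z) = p(z)² + z·q(z) + β on U. Then the function w̃(z) = ω·p(z) + ω²·q(z) − z satisfies 2·w̃·w̃″ = (w̃′)² − w̃⁴ − 4z·w̃³ − (2ωα + 2ω²β + 3z²)·w̃² − (ωα − ω²β + 1)² at every point of U. -/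
/-!
The system is invariant under `(p, q, α, β) ↦ (ωp, ω²q, ωα, ω²β)` for `ω³ = 1`, which reduces
everything to `ω = 1`. There `w = p + q - z` and `v = p - q` satisfy the pair of Riccati-type
equations `w' = vw - c` with `c = α - β + 1`, and `2v' = f - v²` with `f` a polynomial in `w` and
`z`. Differentiating the first equation and replacing `vw` by `w' + c` throughout eliminates `v` and
leaves `2ww'' = w'² + fw² - c²`.
-/

open scoped Topology

section

variable {𝕜 : Type*} [NontriviallyNormedField 𝕜]

theorem two_mul_mul_deriv_deriv_of_riccati {v w : 𝕜 → 𝕜} {c f v' z : 𝕜}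
    (hw : ∀ᶠ x in 𝓝 z, HasDerivAt w (v x * w x - c) x) (hv : HasDerivAt v v' z)
    (hv' : 2 * v' = f - v z ^ 2) :
    2 * w z * deriv (deriv w) z = deriv w z ^ 2 + f * w z ^ 2 - c ^ 2 := by
  have deriv_w : deriv w =ᶠ[𝓝 z] fun x => v x * w x - c := hw.mono fun _ h => h.deriv
  have deriv_deriv_w : deriv (deriv w) z = v' * w z + v z * deriv w z := by
    have hwz : HasDerivAt w (deriv w z) z := hw.self_of_nhds.differentiableAt.hasDerivAt
    rw [deriv_w.deriv_eq]
    exact ((hv.fun_mul hwz).sub_const c).deriv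
  have v_mul_w : v z * w z = deriv w z + c := by rw [deriv_w.eq_of_nhds]; ring
  calc 2 * w z * deriv (deriv w) z
      = (2 * v') * w z ^ 2 + 2 * (v z * w z) * deriv w z := by rw [deriv_deriv_w]; ring
    _ = f * w z ^ 2 - (v z * w z) ^ 2 + 2 * (v z * w z) * deriv w z := by rw [hv']; ring
    _ = deriv w z ^ 2 + f * w z ^ 2 - c ^ 2 := by rw [v_mul_w]; ring

/-- The functions `p` and `q` solve the Hamiltonian system
`p' = -q² - zp - α`, `q' = p² + zq + β` on `U`. Both equations are stated with `HasDerivAt`, so that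
differentiability at the points of `U` is part of being a solution. -/
structure IsHamiltonianSolutionOn (α β : 𝕜) (p q : 𝕜 → 𝕜) (U : Set 𝕜) : Prop where
  hasDerivAt_left : ∀ z ∈ U, HasDerivAt p (-(q z) ^ 2 - z * p z - α) z
  hasDerivAt_right : ∀ z ∈ U, HasDerivAt q ((p z) ^ 2 + z * q z + β) z

namespace IsHamiltonianSolutionOn

variable {α β ω z : 𝕜} {p q : 𝕜 → 𝕜} {U : Set 𝕜}

theorem of_deriv (hU : IsOpen U) (hp : DifferentiableOn 𝕜 p U) (hq : DifferentiableOn 𝕜 q U)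
    (hp' : ∀ z ∈ U, deriv p z = -(q z) ^ 2 - z * p z - α)
    (hq' : ∀ z ∈ U, deriv q z = (p z) ^ 2 + z * q z + β) :
    IsHamiltonianSolutionOn α β p q U where
  hasDerivAt_left z hz := hp' z hz ▸ (hp.differentiableAt (hU.mem_nhds hz)).hasDerivAt
  hasDerivAt_right z hz := hq' z hz ▸ (hq.differentiableAt (hU.mem_nhds hz)).hasDerivAt

theorem rotate (h : IsHamiltonianSolutionOn α β p q U) (hω : ω ^ 3 = 1) :
    IsHamiltonianSolutionOn (ω * α) (ω ^ 2 * β) (fun z => ω * p z) (fun z => ω ^ 2 * q z) U where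
  hasDerivAt_left z hz := by
    refine ((h.hasDerivAt_left z hz).const_mul ω).congr_deriv ?_
    linear_combination ω * q z ^ 2 * hω
  hasDerivAt_right z hz := by
    refine ((h.hasDerivAt_right z hz).const_mul (ω ^ 2)).congr_deriv ?_
    ring

theorem hasDerivAt_add_sub_id (h : IsHamiltonianSolutionOn α β p q U) (hz : z ∈ U) :
    HasDerivAt (fun x => p x + q x - x)
      ((p z - q z) * (p z + q z - z) - (α - β + 1)) z := by
  refine (((h.hasDerivAt_left z hz).fun_add (h.hasDerivAt_right z hz)).fun_sub
    (hasDerivAt_id' z)).congr_deriv ?_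
  ring

theorem hasDerivAt_sub (h : IsHamiltonianSolutionOn α β p q U) (hz : z ∈ U) :
    HasDerivAt (fun x => p x - q x)
      (-(p z ^ 2 + q z ^ 2) - z * (p z + q z) - (α + β)) z := by
  refine ((h.hasDerivAt_left z hz).fun_sub (h.hasDerivAt_right z hz)).congr_deriv ?_
  ring

theorem two_mul_mul_deriv_deriv_add_sub_id (h : IsHamiltonianSolutionOn α β p q U)
    (hU : IsOpen U) (hz : z ∈ U) :
    2 * (p z + q z - z) * deriv (deriv fun x => p x + q x - x) z =
      deriv (fun x => p x + q x - x) z ^ 2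
        - (p z + q z - z) ^ 4 - 4 * z * (p z + q z - z) ^ 3
        - (2 * α + 2 * β + 3 * z ^ 2) * (p z + q z - z) ^ 2 - (α - β + 1) ^ 2 := by
  set w : 𝕜 → 𝕜 := fun x => p x + q x - x with w_def
  have hw : ∀ᶠ x in 𝓝 z, HasDerivAt w ((p x - q x) * w x - (α - β + 1)) x :=
    (hU.eventually_mem hz).mono fun _ => h.hasDerivAt_add_sub_id
  have riccati : 2 * (-(p z ^ 2 + q z ^ 2) - z * (p z + q z) - (α + β)) =
      -(w z ^ 2 + 4 * z * w z + (2 * α + 2 * β + 3 * z ^ 2)) - (p z - q z) ^ 2 := by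
    rw [w_def]; ring
  linear_combination two_mul_mul_deriv_deriv_of_riccati hw (h.hasDerivAt_sub hz) riccati

end IsHamiltonianSolutionOn

theorem stmt_1_general {α β ω : 𝕜} (hω : ω ^ 3 = 1) {U : Set 𝕜} (hU : IsOpen U) {p q : 𝕜 → 𝕜}
    (h : IsHamiltonianSolutionOn α β p q U) :
    ∀ z ∈ U,
      2 * (ω * p z + ω ^ 2 * q z - z) *
          deriv (deriv (fun w => ω * p w + ω ^ 2 * q w - w)) z =
        (deriv (fun w => ω * p w + ω ^ 2 * q w - w) z) ^ 2
          - (ω * p z + ω ^ 2 * q z - z) ^ 4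
          - 4 * z * (ω * p z + ω ^ 2 * q z - z) ^ 3
          - (2 * ω * α + 2 * ω ^ 2 * β + 3 * z ^ 2) * (ω * p z + ω ^ 2 * q z - z) ^ 2
          - (ω * α - ω ^ 2 * β + 1) ^ 2 := by
  intro z hz
  simpa only [mul_assoc] using (h.rotate hω).two_mul_mul_deriv_deriv_add_sub_id hU hz

end

/-- If holomorphic `p, q` on an open set `U ⊆ ℂ` solve the Hamiltonian
system and `ω³ = 1`, then `w̃ = ω·p + ω²·q − z` satisfies
`2w̃w̃″ = (w̃′)² − w̃⁴ − 4zw̃³ − (2ωα+2ω²β+3z²)w̃² − (ωα−ω²β+1)²` on `U`. -/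
theorem stmt_1 (α β ω : ℂ) (hω : ω ^ 3 = 1) (U : Set ℂ) (hU : IsOpen U) (p q : ℂ → ℂ)
    (hp : DifferentiableOn ℂ p U) (hq : DifferentiableOn ℂ q U)
    (hp' : ∀ z ∈ U, deriv p z = -(q z) ^ 2 - z * p z - α)
    (hq' : ∀ z ∈ U, deriv q z = (p z) ^ 2 + z * q z + β) :
    ∀ z ∈ U,
      2 * (ω * p z + ω ^ 2 * q z - z) *
          deriv (deriv (fun w => ω * p w + ω ^ 2 * q w - w)) z =
        (deriv (fun w => ω * p w + ω ^ 2 * q w - w) z) ^ 2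
          - (ω * p z + ω ^ 2 * q z - z) ^ 4
          - 4 * z * (ω * p z + ω ^ 2 * q z - z) ^ 3
          - (2 * ω * α + 2 * ω ^ 2 * β + 3 * z ^ 2) * (ω * p z + ω ^ 2 * q z - z) ^ 2
          - (ω * α - ω ^ 2 * β + 1) ^ 2 := by
  exact stmt_1_general hω hU (.of_deriv hU hp hq hp' hq')
end

section
/- Let α, β ∈ ℂ, let D ⊆ ℂ be an open set containing λ, and let p, q be holomorphic on D ∖ {λ} and satisfy p′(z) = −q(z)² − z·p(z) − α and q′(z) = p(z)² + z·q(z) + β there. Suppose |p(z)| → ∞ as z → λ. Then there exists ρ ∈ ℂ with ρ³ = 1 such that (z − λ)·p(z) → ρ and (z − λ)·q(z) → −ρ² as z → λ; in particular p and q have simple poles at λ with residues ρ and −ρ² respectively. -/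
open Topology Filter

/-!
Since `1 / p → 0`, the singularity of `p` is a pole. The first equation makes `q ^ 2` meromorphic,
so `q` grows at most like a power of `1 / |z - l|` and is meromorphic as well. At a pole of `u` of
order `m`, the derivative `u'` has a pole of order `m + 1` and dominates `a u + b` for `a`, `b`
analytic. Comparing orders in both equations gives `2 n = m + 1` and `2 m = n + 1` for the pole
orders `m` of `p` and `n` of `q`, hence `m = n = 1`; comparing leading coefficients gives
`-σ ^ 2 = -ρ` and `ρ ^ 2 = -σ` for the residues `ρ` of `p` and `σ` of `q`.
-/

section Growth

open Asymptotics

variable {E : Type*} [NormedAddCommGroup E]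

lemma exists_isBigO_inv_pow_of_meromorphicAt {𝕜 : Type*} [NontriviallyNormedField 𝕜]
    [NormedSpace 𝕜 E] {f : 𝕜 → E} {x : 𝕜} (hf : MeromorphicAt f x) :
    ∃ n : ℕ, f =O[𝓝[≠] x] fun z ↦ ((z - x) ^ n)⁻¹ := by
  obtain ⟨n, hn⟩ := hf
  have hbounded : (fun z ↦ (z - x) ^ n • f z) =O[𝓝[≠] x] fun _ ↦ (1 : 𝕜) :=
    (hn.continuousAt.tendsto.mono_left nhdsWithin_le_nhds).isBigO_one 𝕜
  refine ⟨n, ((isBigO_refl (fun z ↦ ((z - x) ^ n)⁻¹) _).smul hbounded).congr' ?_ ?_⟩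
  · filter_upwards [self_mem_nhdsWithin] with z hz
    exact inv_smul_smul₀ (pow_ne_zero n (sub_ne_zero.2 hz)) (f z)
  · exact .of_forall fun z ↦ mul_one _

lemma meromorphicAt_of_isBigO_inv_pow [NormedSpace ℂ E] [CompleteSpace E] {f : ℂ → E} {x : ℂ}
    {n : ℕ} (hd : ∀ᶠ z in 𝓝[≠] x, DifferentiableAt ℂ f z)
    (hf : f =O[𝓝[≠] x] fun z ↦ ((z - x) ^ n)⁻¹) : MeromorphicAt f x := by
  have hgrowth : (fun z ↦ (z - x) ^ (n + 1) • f z) =O[𝓝[≠] x] fun z ↦ z - x := by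
    refine ((isBigO_refl (fun z ↦ (z - x) ^ (n + 1)) _).smul hf).congr' .rfl ?_
    filter_upwards [self_mem_nhdsWithin] with z hz
    have hzx : z - x ≠ 0 := sub_ne_zero.2 hz
    rw [smul_eq_mul, pow_succ', mul_inv_cancel_right₀ (pow_ne_zero n hzx)]
  have hlim : Tendsto (fun z ↦ z - x) (𝓝[≠] x) (𝓝 0) :=
    tendsto_sub_nhds_zero_iff.2 nhdsWithin_le_nhds
  refine ⟨n + 1, Complex.analyticAt_of_differentiable_on_punctured_nhds_of_continuousAt ?_ ?_⟩
  · filter_upwards [hd] with z hz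
    fun_prop
  · rw [continuousAt_iff_punctured_nhds]
    simpa using hgrowth.trans_tendsto hlim

lemma meromorphicAt_of_tendsto_cobounded {f : ℂ → ℂ} {x : ℂ}
    (hd : ∀ᶠ z in 𝓝[≠] x, DifferentiableAt ℂ f z)
    (hf : Tendsto f (𝓝[≠] x) (Bornology.cobounded ℂ)) : MeromorphicAt f x := by
  have hinv : Tendsto f⁻¹ (𝓝[≠] x) (𝓝 0) := tendsto_inv₀_cobounded.comp hf
  have hdiff : ∀ᶠ z in 𝓝[≠] x, DifferentiableAt ℂ f⁻¹ z := by
    filter_upwards [hd, hf.eventually_ne_cobounded 0] with z hz hz0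
    exact hz.inv hz0
  refine MeromorphicAt.inv_iff.1 (meromorphicAt_of_isBigO_inv_pow (n := 0) hdiff ?_)
  simpa using hinv.isBigO_one ℂ

lemma meromorphicAt_of_pow {f : ℂ → ℂ} {x : ℂ} {k : ℕ} (hk : k ≠ 0)
    (hd : ∀ᶠ z in 𝓝[≠] x, DifferentiableAt ℂ f z) (hf : MeromorphicAt (f ^ k) x) :
    MeromorphicAt f x := by
  obtain ⟨n, hn⟩ := exists_isBigO_inv_pow_of_meromorphicAt hf
  refine meromorphicAt_of_isBigO_inv_pow (n := n) hd (.of_pow hk (hn.trans (.of_bound' ?_)))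
  filter_upwards [self_mem_nhdsWithin, nhdsWithin_le_nhds (Metric.ball_mem_nhds x one_pos)]
    with z hz hball
  have hone_le : 1 ≤ ‖((z - x) ^ n)⁻¹‖ := by
    rw [norm_inv, norm_pow]
    refine (one_le_inv₀ (pow_pos (norm_pos_iff.2 (sub_ne_zero.2 hz)) n)).2 ?_
    exact pow_le_one₀ (norm_nonneg _) (mem_ball_iff_norm.1 hball).le
  simpa only [Pi.pow_apply, norm_pow] using le_self_pow₀ hone_le hk

end Growth

section LeadingTerms

variable {𝕜 E : Type*} [NontriviallyNormedField 𝕜] [NormedAddCommGroup E] [NormedSpace 𝕜 E]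
  {x : 𝕜}

lemma tendsto_sub_smul_of_meromorphicOrderAt_eq_neg_one {f : 𝕜 → E}
    (hf : meromorphicOrderAt f x = (-1 : ℤ)) :
    Tendsto (fun z ↦ (z - x) • f z) (𝓝[≠] x) (𝓝 (meromorphicTrailingCoeffAt f x)) := by
  have hmero : MeromorphicAt f x :=
    meromorphicAt_of_meromorphicOrderAt_ne_zero (hf ▸ by decide)
  refine hmero.tendsto_nhds_meromorphicTrailingCoeffAt.congr fun z ↦ ?_
  simp [hf]

lemma meromorphicTrailingCoeffAt_deriv [CompleteSpace E] {f : 𝕜 → E} {n : ℤ}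
    (hn : (n : 𝕜) ≠ 0) (hf : meromorphicOrderAt f x = n) :
    meromorphicTrailingCoeffAt (deriv f) x = (n : 𝕜) • meromorphicTrailingCoeffAt f x := by
  have hmero : MeromorphicAt f x :=
    meromorphicAt_of_meromorphicOrderAt_ne_zero (hf ▸ mod_cast fun h ↦ hn (by simp [h]))
  obtain ⟨g, hg, hgx, hfg⟩ := (meromorphicOrderAt_eq_int_iff hmero).1 hf
  have hderiv : deriv f =ᶠ[𝓝[≠] x]
      fun z ↦ (z - x) ^ (n - 1) • ((n : 𝕜) • g z + (z - x) • deriv g z) := by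
    filter_upwards [EventuallyEq.nhdsNE_deriv hfg, self_mem_nhdsWithin,
      hg.eventually_analyticAt.filter_mono nhdsWithin_le_nhds] with z hz hzx hgz
    have hsub : z - x ≠ 0 := sub_ne_zero.2 hzx
    have hpow : HasDerivAt (fun w ↦ (w - x) ^ n) (n * (z - x) ^ (n - 1)) z := by
      simpa using (hasDerivAt_zpow n (z - x) (.inl hsub)).comp_sub_const z x
    rw [hz, (hpow.fun_smul hgz.differentiableAt.hasDerivAt).deriv, smul_add, smul_smul, smul_smul,
      ← zpow_add_one₀ hsub, sub_add_cancel, mul_comm, add_comm]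
  have hanalytic : AnalyticAt 𝕜 (fun z ↦ (n : 𝕜) • g z + (z - x) • deriv g z) x := by
    have := hg.deriv
    fun_prop
  rw [hg.meromorphicTrailingCoeffAt_of_ne_zero_of_eq_nhdsNE hgx hfg,
    hanalytic.meromorphicTrailingCoeffAt_of_ne_zero_of_eq_nhdsNE
      (by simpa using ⟨hn, hgx⟩) hderiv]
  simp

variable [CharZero 𝕜] [CompleteSpace 𝕜] {a b f g : 𝕜 → 𝕜} {n : ℤ}

lemma meromorphicOrderAt_deriv_lt_mul_add (ha : AnalyticAt 𝕜 a x) (hb : AnalyticAt 𝕜 b x)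
    (hn : n < 0) (hf : meromorphicOrderAt f x = n) :
    meromorphicOrderAt (deriv f) x < meromorphicOrderAt (a * f + b) x := by
  have hmero : MeromorphicAt f x :=
    meromorphicAt_of_meromorphicOrderAt_ne_zero (by simp [hf, hn.ne])
  have hmul : (n : WithTop ℤ) ≤ meromorphicOrderAt (a * f) x := by
    rw [meromorphicOrderAt_mul ha.meromorphicAt hmero, hf]
    exact le_add_of_nonneg_left ha.meromorphicOrderAt_nonneg
  have hconst : (n : WithTop ℤ) ≤ meromorphicOrderAt b x :=
    le_trans (mod_cast hn.le) hb.meromorphicOrderAt_nonneg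
  calc meromorphicOrderAt (deriv f) x = ((n - 1 : ℤ) : WithTop ℤ) :=
        meromorphicOrderAt_deriv_eq_sub_one (mod_cast hn.ne) hf
    _ < n := mod_cast sub_one_lt n
    _ ≤ min (meromorphicOrderAt (a * f) x) (meromorphicOrderAt b x) := le_min hmul hconst
    _ ≤ meromorphicOrderAt (a * f + b) x :=
        meromorphicOrderAt_add (ha.meromorphicAt.mul hmero) hb.meromorphicAt

lemma meromorphicOrderAt_of_eventuallyEq_deriv_add (ha : AnalyticAt 𝕜 a x) (hb : AnalyticAt 𝕜 b x)
    (hn : n < 0) (hf : meromorphicOrderAt f x = n) (hg : g =ᶠ[𝓝[≠] x] deriv f + (a * f + b)) :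
    meromorphicOrderAt g x = (n - 1 : ℤ) := by
  have hmero : MeromorphicAt f x :=
    meromorphicAt_of_meromorphicOrderAt_ne_zero (by simp [hf, hn.ne])
  rw [meromorphicOrderAt_congr hg, meromorphicOrderAt_add_eq_left_of_lt
    ((ha.meromorphicAt.mul hmero).add hb.meromorphicAt)
    (meromorphicOrderAt_deriv_lt_mul_add ha hb hn hf)]
  exact meromorphicOrderAt_deriv_eq_sub_one (mod_cast hn.ne) hf

lemma meromorphicTrailingCoeffAt_of_eventuallyEq_deriv_add
    (ha : AnalyticAt 𝕜 a x) (hb : AnalyticAt 𝕜 b x)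
    (hn : n < 0) (hf : meromorphicOrderAt f x = n) (hg : g =ᶠ[𝓝[≠] x] deriv f + (a * f + b)) :
    meromorphicTrailingCoeffAt g x = n * meromorphicTrailingCoeffAt f x := by
  have hmero : MeromorphicAt f x :=
    meromorphicAt_of_meromorphicOrderAt_ne_zero (by simp [hf, hn.ne])
  rw [meromorphicTrailingCoeffAt_congr_nhdsNE hg,
    MeromorphicAt.meromorphicTrailingCoeffAt_add_eq_left_of_lt
      ((ha.meromorphicAt.mul hmero).add hb.meromorphicAt)
      (meromorphicOrderAt_deriv_lt_mul_add ha hb hn hf)]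
  exact meromorphicTrailingCoeffAt_deriv (mod_cast hn.ne) hf

end LeadingTerms

section QuadraticSystem

variable {𝕜 : Type*} [NontriviallyNormedField 𝕜] [CharZero 𝕜] [CompleteSpace 𝕜]
  {a b c d p q : 𝕜 → 𝕜} {x : 𝕜}

lemma meromorphicOrderAt_eq_neg_one_of_quadratic_system
    (ha : AnalyticAt 𝕜 a x) (hb : AnalyticAt 𝕜 b x) (hc : AnalyticAt 𝕜 c x) (hd : AnalyticAt 𝕜 d x)
    (hq : MeromorphicAt q x) (hneg : meromorphicOrderAt p x < 0)
    (hp' : -(q ^ 2) =ᶠ[𝓝[≠] x] deriv p + (a * p + b))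
    (hq' : p ^ 2 =ᶠ[𝓝[≠] x] deriv q + (c * q + d)) :
    meromorphicOrderAt p x = (-1 : ℤ) ∧ meromorphicOrderAt q x = (-1 : ℤ) := by
  have hp : MeromorphicAt p x := meromorphicAt_of_meromorphicOrderAt_ne_zero hneg.ne
  obtain ⟨m, hm⟩ := WithTop.ne_top_iff_exists.1 hneg.ne_top
  have hm_neg : m < 0 := by rwa [← hm, WithTop.coe_lt_zero] at hneg
  have hq_sq := meromorphicOrderAt_of_eventuallyEq_deriv_add ha hb hm_neg hm.symm hp'
  rw [← meromorphicOrderAt_neg, pow_two, meromorphicOrderAt_mul hq hq] at hq_sq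
  have hq_ne_top : meromorphicOrderAt q x ≠ ⊤ := fun htop ↦
    WithTop.top_ne_coe (by simpa only [htop, top_add] using hq_sq)
  obtain ⟨n, hn⟩ := WithTop.ne_top_iff_exists.1 hq_ne_top
  have hnm : n + n = m - 1 := by rw [← hn] at hq_sq; exact_mod_cast hq_sq
  have hp_sq := meromorphicOrderAt_of_eventuallyEq_deriv_add hc hd (by lia) hn.symm hq'
  rw [pow_two, meromorphicOrderAt_mul hp hp, ← hm] at hp_sq
  have hmn : m + m = n - 1 := mod_cast hp_sq
  obtain ⟨rfl, rfl⟩ : m = -1 ∧ n = -1 := by lia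
  exact ⟨hm.symm, hn.symm⟩

lemma meromorphicTrailingCoeffAt_of_quadratic_system
    (ha : AnalyticAt 𝕜 a x) (hb : AnalyticAt 𝕜 b x) (hc : AnalyticAt 𝕜 c x) (hd : AnalyticAt 𝕜 d x)
    (hp : meromorphicOrderAt p x = (-1 : ℤ)) (hq : meromorphicOrderAt q x = (-1 : ℤ))
    (hp' : -(q ^ 2) =ᶠ[𝓝[≠] x] deriv p + (a * p + b))
    (hq' : p ^ 2 =ᶠ[𝓝[≠] x] deriv q + (c * q + d)) :
    meromorphicTrailingCoeffAt p x ^ 3 = 1 ∧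
      meromorphicTrailingCoeffAt q x = -meromorphicTrailingCoeffAt p x ^ 2 := by
  have hp_mero : MeromorphicAt p x := meromorphicAt_of_meromorphicOrderAt_ne_zero (by simp [hp])
  have hq_mero : MeromorphicAt q x := meromorphicAt_of_meromorphicOrderAt_ne_zero (by simp [hq])
  have hρ_ne : meromorphicTrailingCoeffAt p x ≠ 0 :=
    hp_mero.meromorphicTrailingCoeffAt_ne_zero (by simp [hp])
  have hσ_sq := meromorphicTrailingCoeffAt_of_eventuallyEq_deriv_add ha hb (by simp) hp hp'
  have hρ_sq := meromorphicTrailingCoeffAt_of_eventuallyEq_deriv_add hc hd (by simp) hq hq'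
  rw [meromorphicTrailingCoeffAt_neg, pow_two,
    hq_mero.meromorphicTrailingCoeffAt_mul hq_mero] at hσ_sq
  rw [pow_two, hp_mero.meromorphicTrailingCoeffAt_mul hp_mero] at hρ_sq
  push_cast at hσ_sq hρ_sq
  have hσ : meromorphicTrailingCoeffAt q x = -meromorphicTrailingCoeffAt p x ^ 2 := by
    linear_combination hρ_sq
  refine ⟨mul_left_cancel₀ hρ_ne ?_, hσ⟩
  rw [hσ] at hσ_sq
  linear_combination -hσ_sq

end QuadraticSystem

theorem stmt_3_general {a b c d p q : ℂ → ℂ} {l : ℂ}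
    (ha : AnalyticAt ℂ a l) (hb : AnalyticAt ℂ b l) (hc : AnalyticAt ℂ c l) (hd : AnalyticAt ℂ d l)
    (hp : ∀ᶠ z in 𝓝[≠] l, HasDerivAt p (-(q z) ^ 2 - a z * p z - b z) z)
    (hq : ∀ᶠ z in 𝓝[≠] l, HasDerivAt q ((p z) ^ 2 + c z * q z + d z) z)
    (hpole : Tendsto (fun z ↦ ‖p z‖) (𝓝[≠] l) atTop) :
    ∃ ρ : ℂ, ρ ^ 3 = 1 ∧
      Tendsto (fun z ↦ (z - l) * p z) (𝓝[≠] l) (𝓝 ρ) ∧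
      Tendsto (fun z ↦ (z - l) * q z) (𝓝[≠] l) (𝓝 (-ρ ^ 2)) := by
  have hp' : -(q ^ 2) =ᶠ[𝓝[≠] l] deriv p + (a * p + b) := by
    filter_upwards [hp] with z hz
    simp [hz.deriv]
  have hq' : p ^ 2 =ᶠ[𝓝[≠] l] deriv q + (-c * q + -d) := by
    filter_upwards [hq] with z hz
    simp only [Pi.pow_apply, Pi.add_apply, Pi.mul_apply, Pi.neg_apply, hz.deriv]
    ring
  have hcob := tendsto_norm_atTop_iff_cobounded.1 hpole
  have hp_mero : MeromorphicAt p l :=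
    meromorphicAt_of_tendsto_cobounded (hp.mono fun z hz ↦ hz.differentiableAt) hcob
  have hp_neg := (tendsto_cobounded_iff_meromorphicOrderAt_neg hp_mero).1 hcob
  have hq_sq_mero : MeromorphicAt (q ^ 2) l := MeromorphicAt.neg_iff.1 <|
    (hp_mero.deriv.add ((ha.meromorphicAt.mul hp_mero).add hb.meromorphicAt)).congr hp'.symm
  have hq_mero : MeromorphicAt q l :=
    meromorphicAt_of_pow two_ne_zero (hq.mono fun z hz ↦ hz.differentiableAt) hq_sq_mero
  obtain ⟨hp_ord, hq_ord⟩ := meromorphicOrderAt_eq_neg_one_of_quadratic_system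
    ha hb hc.neg hd.neg hq_mero hp_neg hp' hq'
  obtain ⟨hρ, hσ⟩ := meromorphicTrailingCoeffAt_of_quadratic_system
    ha hb hc.neg hd.neg hp_ord hq_ord hp' hq'
  exact ⟨_, hρ, tendsto_sub_smul_of_meromorphicOrderAt_eq_neg_one hp_ord,
    hσ ▸ tendsto_sub_smul_of_meromorphicOrderAt_eq_neg_one hq_ord⟩

/-- At an isolated singularity `l` of a local solution `(p, q)` of the
Hamiltonian system at which `|p| → ∞`, both `p` and `q` have simple poles, with residues
`ρ` and `−ρ²` respectively, where `ρ` is some cube root of unity. -/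
theorem stmt_3 (α β : ℂ) (D : Set ℂ) (hD : IsOpen D) (l : ℂ) (hl : l ∈ D) (p q : ℂ → ℂ)
    (hp : DifferentiableOn ℂ p (D \ {l})) (hq : DifferentiableOn ℂ q (D \ {l}))
    (hp' : ∀ z ∈ D \ {l}, deriv p z = -(q z) ^ 2 - z * p z - α)
    (hq' : ∀ z ∈ D \ {l}, deriv q z = (p z) ^ 2 + z * q z + β)
    (hpole : Tendsto (fun z => ‖p z‖) (𝓝[≠] l) atTop) :
    ∃ ρ : ℂ, ρ ^ 3 = 1 ∧
      Tendsto (fun z => (z - l) * p z) (𝓝[≠] l) (𝓝 ρ) ∧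
      Tendsto (fun z => (z - l) * q z) (𝓝[≠] l) (𝓝 (-ρ ^ 2)) := by
  have hnhds : ∀ᶠ z in 𝓝[≠] l, D \ {l} ∈ 𝓝 z :=
    eventually_of_mem (sdiff_mem_nhdsWithin_compl (hD.mem_nhds hl) {l})
      fun _ ↦ (hD.sdiff isClosed_singleton).mem_nhds
  exact stmt_3_general analyticAt_id analyticAt_const analyticAt_id analyticAt_const
    (hnhds.mono fun z hz ↦ hp' z (mem_of_mem_nhds hz) ▸ (hp.differentiableAt hz).hasDerivAt)
    (hnhds.mono fun z hz ↦ hq' z (mem_of_mem_nhds hz) ▸ (hq.differentiableAt hz).hasDerivAt) hpole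
end

section
/- Let α, β ∈ ℂ, let D ⊆ ℂ be an open set containing λ, and let p, q be holomorphic on D ∖ {λ} and satisfy p′(z) = −q(z)² − z·p(z) − α and q′(z) = p(z)² + z·q(z) + β there. Suppose p has a simple pole at λ with residue 1, i.e. (z − λ)·p(z) → 1 as z → λ. Then, as z → λ: p(z) − (z − λ)⁻¹ → λ/2, q(z) + (z − λ)⁻¹ → λ/2, (p(z) − (z − λ)⁻¹ − λ/2)/(z − λ) → 1 + (α − 2β)/3 − λ²/4, and (q(z) + (z − λ)⁻¹ − λ/2)/(z − λ) → 1 + (2α − β)/3 + λ²/4. -/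
open Topology Filter

/-!
A solution with a simple pole at `l` splits there as `c / (z - l) + g z` with `g` analytic. If `p`
splits in this way, the equation for `p′` bounds `((z - l) q)²`, so by Riemann's removable
singularity theorem `q` splits as `d / (z - l) + h z` too. Both equations of the system have the
Riccati form `u′ = k v² + a u + b`; clearing denominators and comparing the coefficients of `1`,
`z - l` and `(z - l)²` gives `d = -1`, then `g l` and `h l`, and finally a linear system for `g′ l`
and `h′ l`.
-/

lemma exists_analyticAt_eventuallyEq_of_isBoundedUnder {E : Type*} [NormedAddCommGroup E]
    [NormedSpace ℂ E] [CompleteSpace E] {f : ℂ → E} {l : ℂ}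
    (hd : ∀ᶠ z in 𝓝[≠] l, DifferentiableAt ℂ f z)
    (hb : IsBoundedUnder (· ≤ ·) (𝓝[≠] l) fun z => ‖f z‖) :
    ∃ F : ℂ → E, AnalyticAt ℂ F l ∧ f =ᶠ[𝓝[≠] l] F := by
  have hb' : IsBoundedUnder (· ≤ ·) (𝓝[≠] l) fun z => ‖f z - f l‖ :=
    (isBoundedUnder_le_add hb (isBoundedUnder_const (a := ‖f l‖))).mono_le
      (.of_forall fun z => norm_sub_le (f z) (f l))
  have hlim := Complex.tendsto_limUnder_of_differentiable_on_punctured_nhds_of_bounded_under hd hb'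
  refine ⟨Function.update f l (limUnder (𝓝[≠] l) f),
    Complex.analyticAt_of_differentiable_on_punctured_nhds_of_continuousAt ?_
      (continuousAt_update_same.2 hlim), (Function.update_eventuallyEq_nhdsNE f l l _).symm⟩
  filter_upwards [hd, self_mem_nhdsWithin] with z hz hzl
  refine hz.congr_of_eventuallyEq ?_
  filter_upwards [isOpen_ne.mem_nhds hzl] with w hw using Function.update_of_ne hw _ _

section NormedField

variable {𝕜 : Type*} [NontriviallyNormedField 𝕜]

lemma coeffs_eq_zero_of_eventually_eq_zero {l c₀ c₁ : 𝕜} {R : 𝕜 → 𝕜} (hR : ContinuousAt R l)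
    (h : ∀ᶠ z in 𝓝[≠] l, c₀ + (z - l) * (c₁ + (z - l) * R z) = 0) :
    c₀ = 0 ∧ c₁ = 0 ∧ R l = 0 := by
  have eval_eq_zero {f : 𝕜 → 𝕜} (hf : ContinuousAt f l) (hf0 : ∀ᶠ z in 𝓝[≠] l, f z = 0) :
      f l = 0 :=
    ((hf.eventuallyEq_nhds_iff_eventuallyEq_nhdsNE continuousAt_const).1 hf0).eq_of_nhds
  have hc₀ : c₀ = 0 := by simpa using eval_eq_zero (by fun_prop) h
  have h₁ : ∀ᶠ z in 𝓝[≠] l, c₁ + (z - l) * R z = 0 := by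
    filter_upwards [h, self_mem_nhdsWithin] with z hz hzl
    simpa [hc₀, sub_ne_zero.2 hzl] using hz
  have hc₁ : c₁ = 0 := by simpa using eval_eq_zero (by fun_prop) h₁
  refine ⟨hc₀, hc₁, eval_eq_zero hR ?_⟩
  filter_upwards [h₁, self_mem_nhdsWithin] with z hz hzl
  simpa [hc₁, sub_ne_zero.2 hzl] using hz

/-- Laurent decomposition at a pole of order at most one: near `l`, away from `l` itself, `f` is the
sum of its polar part `c / (z - l)` and of a function `g` analytic at `l`. The residue `c` may
be zero. -/
structure HasSimplePoleExpansion (f : 𝕜 → 𝕜) (l c : 𝕜) (g : 𝕜 → 𝕜) : Prop where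
  analyticAt : AnalyticAt 𝕜 g l
  eventuallyEq : f =ᶠ[𝓝[≠] l] fun z => c * (z - l)⁻¹ + g z

namespace HasSimplePoleExpansion

variable {f g u v D E : 𝕜 → 𝕜} {l c d : 𝕜}

lemma tendsto_sub_mul (hf : HasSimplePoleExpansion f l c g) :
    Tendsto (fun z => (z - l) * f z) (𝓝[≠] l) (𝓝 c) := by
  have hg : ContinuousAt g l := hf.analyticAt.continuousAt
  have hlim : Tendsto (fun z => c + (z - l) * g z) (𝓝[≠] l) (𝓝 c) := by
    have hcont : ContinuousAt (fun z => c + (z - l) * g z) l := by fun_prop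
    simpa using hcont.continuousWithinAt.tendsto (s := {l}ᶜ)
  refine hlim.congr' ?_
  filter_upwards [hf.eventuallyEq, self_mem_nhdsWithin] with z hz hzl
  have : z - l ≠ 0 := sub_ne_zero.2 hzl
  rw [hz]
  field_simp

lemma tendsto_sub_polar (hf : HasSimplePoleExpansion f l c g) :
    Tendsto (fun z => f z - c * (z - l)⁻¹) (𝓝[≠] l) (𝓝 (g l)) := by
  refine (hf.analyticAt.continuousAt.continuousWithinAt (s := {l}ᶜ)).tendsto.congr' ?_
  filter_upwards [hf.eventuallyEq] with z hz
  rw [hz, add_sub_cancel_left]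

lemma tendsto_sub_polar_sub_div (hf : HasSimplePoleExpansion f l c g) :
    Tendsto (fun z => (f z - c * (z - l)⁻¹ - g l) / (z - l)) (𝓝[≠] l) (𝓝 (deriv g l)) := by
  refine hf.analyticAt.differentiableAt.hasDerivAt.tendsto_slope.congr' ?_
  filter_upwards [hf.eventuallyEq] with z hz
  rw [hz, add_sub_cancel_left, slope_def_field]

variable [CompleteSpace 𝕜]

lemma eventually_deriv_eq (hf : HasSimplePoleExpansion f l c g) :
    ∀ᶠ z in 𝓝[≠] l, deriv f z = -c / (z - l) ^ 2 + deriv g z := by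
  filter_upwards [hf.eventuallyEq.nhdsNE_deriv, self_mem_nhdsWithin,
    hf.analyticAt.eventually_analyticAt.filter_mono nhdsWithin_le_nhds] with z hz hzl hgz
  have hinv : HasDerivAt (fun w => (w - l)⁻¹) (-1 / (z - l) ^ 2) z :=
    ((hasDerivAt_id z).sub_const l).inv (sub_ne_zero.2 hzl)
  rw [hz, ((hinv.const_mul c).fun_add hgz.differentiableAt.hasDerivAt).deriv]
  ring

section Riccati

variable {k : 𝕜} {a b : 𝕜 → 𝕜}

lemma tendsto_sub_mul_sq_of_riccati (hu : HasSimplePoleExpansion u l c D) (hk : k ≠ 0)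
    (ha : ContinuousAt a l) (hb : ContinuousAt b l)
    (hode : ∀ᶠ z in 𝓝[≠] l, deriv u z = k * v z ^ 2 + a z * u z + b z) :
    Tendsto (fun z => ((z - l) * v z) ^ 2) (𝓝[≠] l) (𝓝 (-c / k)) := by
  have hD : ContinuousAt D l := hu.analyticAt.continuousAt
  have hD' : ContinuousAt (deriv D) l := hu.analyticAt.deriv.continuousAt
  have hcont : ContinuousAt (fun z => (-c + (z - l) ^ 2 * deriv D z
      - (z - l) * a z * (c + (z - l) * D z) - (z - l) ^ 2 * b z) / k) l := by fun_prop
  have hlim := hcont.continuousWithinAt.tendsto (s := {l}ᶜ)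
  simp only [sub_self, ne_eq, OfNat.ofNat_ne_zero, not_false_eq_true, zero_pow, zero_mul, add_zero,
    sub_zero] at hlim
  refine hlim.congr' ?_
  filter_upwards [hu.eventuallyEq, hu.eventually_deriv_eq, hode, self_mem_nhdsWithin]
    with z huz hu'z hodez hzl
  have : z - l ≠ 0 := sub_ne_zero.2 hzl
  rw [hu'z, huz] at hodez
  field_simp at hodez ⊢
  linear_combination hodez

/-- The coefficients of `1`, `z - l` and `(z - l)²` in `(z - l)² (u′ - k v² - a u - b) = 0`. -/
lemma coeff_relations_of_riccati (hu : HasSimplePoleExpansion u l c D)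
    (hv : HasSimplePoleExpansion v l d E) (ha : DifferentiableAt 𝕜 a l) (hb : ContinuousAt b l)
    (hode : ∀ᶠ z in 𝓝[≠] l, deriv u z = k * v z ^ 2 + a z * u z + b z) :
    c + k * d ^ 2 = 0 ∧ 2 * k * d * E l + a l * c = 0 ∧
      deriv D l = k * (2 * d * deriv E l + E l ^ 2) + a l * D l + deriv a l * c + b l := by
  have hD : ContinuousAt D l := hu.analyticAt.continuousAt
  have hD' : ContinuousAt (deriv D) l := hu.analyticAt.deriv.continuousAt
  have hE : ContinuousAt E l := hv.analyticAt.continuousAt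
  have ha₀ : ContinuousAt a l := ha.continuousAt
  have hE₁ : ContinuousAt (dslope E l) l :=
    continuousAt_dslope_same.2 hv.analyticAt.differentiableAt
  have ha₁ : ContinuousAt (dslope a l) l := continuousAt_dslope_same.2 ha
  have hexpansion : ∀ᶠ z in 𝓝[≠] l, (c + k * d ^ 2) + (z - l) * ((2 * k * d * E l + a l * c)
      + (z - l) * (k * (2 * d * dslope E l z + E z ^ 2) + a z * D z + dslope a l z * c + b z
        - deriv D z)) = 0 := by
    filter_upwards [hu.eventuallyEq, hu.eventually_deriv_eq, hv.eventuallyEq, hode,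
      self_mem_nhdsWithin] with z huz hu'z hvz hodez hzl
    have hz : z - l ≠ 0 := sub_ne_zero.2 hzl
    have hEz : (z - l) * dslope E l z = E z - E l := sub_smul_dslope E l z
    have haz : (z - l) * dslope a l z = a z - a l := sub_smul_dslope a l z
    rw [hu'z, huz, hvz] at hodez
    field_simp at hodez
    linear_combination (z - l) * 2 * k * d * hEz + (z - l) * c * haz - hodez
  obtain ⟨h₀, h₁, h₂⟩ := coeffs_eq_zero_of_eventually_eq_zero (by fun_prop) hexpansion
  simp only [dslope_same] at h₂
  exact ⟨h₀, h₁, by linear_combination -h₂⟩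

end Riccati

end HasSimplePoleExpansion

end NormedField

namespace HasSimplePoleExpansion

lemma exists_of_isBoundedUnder {f : ℂ → ℂ} {l : ℂ} (hd : ∀ᶠ z in 𝓝[≠] l, DifferentiableAt ℂ f z)
    (hb : IsBoundedUnder (· ≤ ·) (𝓝[≠] l) fun z => ‖(z - l) * f z‖) :
    ∃ c g, HasSimplePoleExpansion f l c g := by
  obtain ⟨F, hF, hfF⟩ := exists_analyticAt_eventuallyEq_of_isBoundedUnder
    (hd.mono fun z hz => by fun_prop) hb
  obtain ⟨s, hs⟩ := hF
  refine ⟨F l, dslope F l, ⟨_, hs.has_fpower_series_dslope_fslope⟩, ?_⟩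
  filter_upwards [hfF, self_mem_nhdsWithin] with z hz hzl
  have : z - l ≠ 0 := sub_ne_zero.2 hzl
  have hFz : (z - l) * dslope F l z = F z - F l := sub_smul_dslope F l z
  field_simp
  linear_combination hz - hFz

lemma exists_of_tendsto {f : ℂ → ℂ} {l c : ℂ} (hd : ∀ᶠ z in 𝓝[≠] l, DifferentiableAt ℂ f z)
    (hres : Tendsto (fun z => (z - l) * f z) (𝓝[≠] l) (𝓝 c)) :
    ∃ g, HasSimplePoleExpansion f l c g := by
  obtain ⟨c', g, hf⟩ := exists_of_isBoundedUnder hd hres.norm.isBoundedUnder_le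
  exact ⟨g, tendsto_nhds_unique hf.tendsto_sub_mul hres ▸ hf⟩

lemma exists_of_riccati {u v D a b : ℂ → ℂ} {l c k : ℂ} (hu : HasSimplePoleExpansion u l c D)
    (hv : ∀ᶠ z in 𝓝[≠] l, DifferentiableAt ℂ v z) (hk : k ≠ 0)
    (ha : ContinuousAt a l) (hb : ContinuousAt b l)
    (hode : ∀ᶠ z in 𝓝[≠] l, deriv u z = k * v z ^ 2 + a z * u z + b z) :
    ∃ d E, HasSimplePoleExpansion v l d E := by
  refine exists_of_isBoundedUnder hv ?_
  obtain ⟨C, hC⟩ := (hu.tendsto_sub_mul_sq_of_riccati hk ha hb hode).norm.isBoundedUnder_le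
  refine ⟨C + 1, ?_⟩
  rw [eventually_map] at hC ⊢
  filter_upwards [hC] with z hz
  rw [norm_pow] at hz
  nlinarith [sq_nonneg (‖(z - l) * v z‖ - 1)]

lemma coeffs_of_hamiltonian {p q g h : ℂ → ℂ} {α β l d : ℂ}
    (hp : HasSimplePoleExpansion p l 1 g) (hq : HasSimplePoleExpansion q l d h)
    (hp' : ∀ᶠ z in 𝓝[≠] l, deriv p z = -1 * q z ^ 2 + -z * p z + -α)
    (hq' : ∀ᶠ z in 𝓝[≠] l, deriv q z = 1 * p z ^ 2 + z * q z + β) :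
    d = -1 ∧ g l = l / 2 ∧ h l = l / 2 ∧ deriv g l = 1 + (α - 2 * β) / 3 - l ^ 2 / 4 ∧
      deriv h l = 1 + (2 * α - β) / 3 + l ^ 2 / 4 := by
  obtain ⟨-, p₁, p₂⟩ := hp.coeff_relations_of_riccati hq (by fun_prop) (by fun_prop) hp'
  obtain ⟨q₀, q₁, q₂⟩ := hq.coeff_relations_of_riccati hp (by fun_prop) (by fun_prop) hq'
  obtain rfl : d = -1 := by linear_combination q₀
  have hg : g l = l / 2 := by linear_combination q₁ / 2
  have hh : h l = l / 2 := by linear_combination p₁ / 2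
  rw [hg, hh] at p₂ q₂
  simp only [deriv_neg, deriv_id''] at p₂ q₂
  refine ⟨rfl, hg, hh, ?_, ?_⟩
  · linear_combination -p₂ / 3 - 2 / 3 * q₂
  · linear_combination -q₂ / 3 - 2 / 3 * p₂

end HasSimplePoleExpansion

/-- Laurent coefficients at a pole `l` with residue `1` of a local
solution `(p, q)` of the Hamiltonian system:
`p(z) = (z−l)⁻¹ + l/2 + (1 + (α−2β)/3 − l²/4)(z−l) + ⋯` and
`q(z) = −(z−l)⁻¹ + l/2 + (1 + (2α−β)/3 + l²/4)(z−l) + ⋯`. -/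
theorem stmt_4 (α β : ℂ) (D : Set ℂ) (hD : IsOpen D) (l : ℂ) (hl : l ∈ D) (p q : ℂ → ℂ)
    (hp : DifferentiableOn ℂ p (D \ {l})) (hq : DifferentiableOn ℂ q (D \ {l}))
    (hp' : ∀ z ∈ D \ {l}, deriv p z = -(q z) ^ 2 - z * p z - α)
    (hq' : ∀ z ∈ D \ {l}, deriv q z = (p z) ^ 2 + z * q z + β)
    (hres : Tendsto (fun z => (z - l) * p z) (𝓝[≠] l) (𝓝 1)) :
    Tendsto (fun z => p z - (z - l)⁻¹) (𝓝[≠] l) (𝓝 (l / 2)) ∧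
    Tendsto (fun z => q z + (z - l)⁻¹) (𝓝[≠] l) (𝓝 (l / 2)) ∧
    Tendsto (fun z => (p z - (z - l)⁻¹ - l / 2) / (z - l)) (𝓝[≠] l)
      (𝓝 (1 + (α - 2 * β) / 3 - l ^ 2 / 4)) ∧
    Tendsto (fun z => (q z + (z - l)⁻¹ - l / 2) / (z - l)) (𝓝[≠] l)
      (𝓝 (1 + (2 * α - β) / 3 + l ^ 2 / 4)) := by
  have hmem : ∀ᶠ z in 𝓝[≠] l, z ∈ D \ {l} :=
    sdiff_mem_nhdsWithin_compl (hD.mem_nhds hl) {l}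
  have hopen : IsOpen (D \ {l}) := hD.sdiff isClosed_singleton
  have hpd : ∀ᶠ z in 𝓝[≠] l, DifferentiableAt ℂ p z :=
    hmem.mono fun z hz => hp.differentiableAt (hopen.mem_nhds hz)
  have hqd : ∀ᶠ z in 𝓝[≠] l, DifferentiableAt ℂ q z :=
    hmem.mono fun z hz => hq.differentiableAt (hopen.mem_nhds hz)
  have hp_riccati : ∀ᶠ z in 𝓝[≠] l, deriv p z = -1 * q z ^ 2 + -z * p z + -α :=
    hmem.mono fun z hz => by rw [hp' z hz]; ring
  have hq_riccati : ∀ᶠ z in 𝓝[≠] l, deriv q z = 1 * p z ^ 2 + z * q z + β :=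
    hmem.mono fun z hz => by rw [hq' z hz]; ring
  obtain ⟨g, hpg⟩ := HasSimplePoleExpansion.exists_of_tendsto hpd hres
  obtain ⟨d, h, hqh⟩ :=
    hpg.exists_of_riccati hqd (by norm_num) (by fun_prop) (by fun_prop) hp_riccati
  obtain ⟨rfl, hg, hh, hg', hh'⟩ := hpg.coeffs_of_hamiltonian hqh hp_riccati hq_riccati
  rw [← hg', ← hh']
  refine ⟨?_, ?_, ?_, ?_⟩
  · simpa [hg] using hpg.tendsto_sub_polar
  · simpa [hh] using hqh.tendsto_sub_polar
  · simpa [hg] using hpg.tendsto_sub_polar_sub_div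
  · simpa [hh] using hqh.tendsto_sub_polar_sub_div
end

section
/- Let α, β ∈ ℂ, let D ⊆ ℂ be an open set containing λ, and let p, q be holomorphic on D ∖ {λ} and satisfy p′(z) = −q(z)² − z·p(z) − α and q′(z) = p(z)² + z·q(z) + β there. Suppose p has a simple pole at λ with residue 1. Then the function w(z) = p(z) + q(z) − z extends holomorphically across λ, and the extension satisfies w(λ) = 0 and w′(λ) = 1 + α − β. -/
open Topology Filter

/-!
If `p` has a simple pole with residue `c ≠ 0`, the first equation shows that `q` also has a simple
pole, of residue `b` with `b ^ 2 = c`, and the second gives `b = -c ^ 2`; hence `c ^ 3 = 1`. Since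
`(c ^ 2 * p, c * q)` solves the system with parameters `(c ^ 2 * α, c * β)`, one may take `c = 1`.
Then the residues of `p` and `q` cancel in `w = p + q - z`, which extends across the pole. The two
equations add up to `w′ = (p - q) * w + (β - α - 1)`, where `p - q` has a simple pole of residue
`2`. Comparing the terms of order `-1` and `0` in this equation gives `2 * w(l) = 0` and
`w′(l) = 2 * w′(l) + (β - α - 1)`.
-/

theorem tendsto_sub_self_nhdsNE {G : Type*} [TopologicalSpace G] [AddGroup G]
    [IsTopologicalAddGroup G] (l : G) : Tendsto (fun z => z - l) (𝓝[≠] l) (𝓝 0) :=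
  tendsto_sub_nhds_zero_iff.2 nhdsWithin_le_nhds

section SimplePole

variable {E : Type*} [NormedAddCommGroup E] [NormedSpace ℂ E] [CompleteSpace E]
  {f : ℂ → E} {l : ℂ} {a : E}

theorem exists_tendsto_of_tendsto_sub_smul_zero
    (hf : ∀ᶠ z in 𝓝[≠] l, DifferentiableAt ℂ f z)
    (h0 : Tendsto (fun z => (z - l) • f z) (𝓝[≠] l) (𝓝 0)) :
    ∃ a, Tendsto f (𝓝[≠] l) (𝓝 a) := by
  have hdiff : Tendsto (fun z => (z - l) • (f z - f l)) (𝓝[≠] l) (𝓝 0) := by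
    simpa only [smul_sub, zero_smul, sub_zero] using
      h0.sub ((tendsto_sub_self_nhdsNE l).smul_const (f l))
  have hlittle : (fun z => f z - f l) =o[𝓝[≠] l] fun z => (z - l)⁻¹ := by
    refine ((Asymptotics.isBigO_refl (fun z => (z - l)⁻¹) (𝓝[≠] l)).smul_isLittleO
      ((Asymptotics.isLittleO_one_iff ℂ).2 hdiff)).congr' ?_ (by simp)
    filter_upwards [self_mem_nhdsWithin] with z hz
    exact inv_smul_smul₀ (sub_ne_zero.2 hz) _
  exact ⟨_, Complex.tendsto_limUnder_of_differentiable_on_punctured_nhds_of_isLittleO hf hlittle⟩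

theorem analyticAt_update_of_tendsto (hf : ∀ᶠ z in 𝓝[≠] l, DifferentiableAt ℂ f z)
    (ha : Tendsto f (𝓝[≠] l) (𝓝 a)) : AnalyticAt ℂ (Function.update f l a) l := by
  refine Complex.analyticAt_of_differentiable_on_punctured_nhds_of_continuousAt ?_
    (continuousAt_update_same.2 ha)
  filter_upwards [hf, eventually_nhdsNE_eventually_nhds_iff.2
    (Function.update_eventuallyEq_nhdsNE f l l a)] with z hfz heq
  exact hfz.congr_of_eventuallyEq heq

theorem tendsto_sub_sq_smul_deriv (hf : ∀ᶠ z in 𝓝[≠] l, DifferentiableAt ℂ f z)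
    (ha : Tendsto (fun z => (z - l) • f z) (𝓝[≠] l) (𝓝 a)) :
    Tendsto (fun z => (z - l) ^ 2 • deriv f z) (𝓝[≠] l) (𝓝 (-a)) := by
  have hderiv : ∀ᶠ z in 𝓝[≠] l,
      HasDerivAt (fun z => (z - l) • f z) ((z - l) • deriv f z + f z) z := by
    filter_upwards [hf] with z hz
    simpa only [one_smul] using ((hasDerivAt_id' z).sub_const l).fun_smul hz.hasDerivAt
  set F := Function.update (fun z => (z - l) • f z) l a
  have hF : AnalyticAt ℂ F l :=
    analyticAt_update_of_tendsto (hderiv.mono fun z hz => hz.differentiableAt) ha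
  have hFf : F =ᶠ[𝓝[≠] l] fun z => (z - l) • f z := Function.update_eventuallyEq_nhdsNE ..
  have hcont : ContinuousAt (fun z => (z - l) • deriv F z - F z) l :=
    ((continuousAt_id.sub continuousAt_const).smul hF.deriv.continuousAt).sub hF.continuousAt
  have hlim : Tendsto (fun z => (z - l) • deriv F z - F z) (𝓝[≠] l) (𝓝 (-a)) := by
    simpa [F] using hcont.tendsto.mono_left nhdsWithin_le_nhds
  refine hlim.congr' ?_
  filter_upwards [hFf, hFf.nhdsNE_deriv, hderiv] with z hz hz' hd
  rw [hz, hz', hd.deriv, smul_add, smul_smul, ← sq, add_sub_cancel_right]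

end SimplePole

section LinearODE

variable {𝕜 E : Type*} [NontriviallyNormedField 𝕜] [NormedAddCommGroup E] [NormedSpace 𝕜 E]
  {w h : 𝕜 → E} {g : 𝕜 → 𝕜} {l m : 𝕜} {k : E}

theorem smul_eq_zero_of_deriv_eq_simplePole_smul_add (hw : ContinuousAt w l)
    (hw' : ContinuousAt (deriv w) l) (hg : Tendsto (fun z => (z - l) * g z) (𝓝[≠] l) (𝓝 m))
    (hh : Tendsto h (𝓝[≠] l) (𝓝 k)) (hode : ∀ᶠ z in 𝓝[≠] l, deriv w z = g z • w z + h z) :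
    m • w l = 0 := by
  have hleft : Tendsto (fun z => (z - l) • deriv w z) (𝓝[≠] l) (𝓝 0) := by
    simpa only [zero_smul] using
      (tendsto_sub_self_nhdsNE l).smul (hw'.tendsto.mono_left nhdsWithin_le_nhds)
  have hright : Tendsto (fun z => ((z - l) * g z) • w z + (z - l) • h z) (𝓝[≠] l)
      (𝓝 (m • w l)) := by
    simpa only [zero_smul, add_zero] using
      (hg.smul (hw.tendsto.mono_left nhdsWithin_le_nhds)).add
        ((tendsto_sub_self_nhdsNE l).smul hh)
  refine tendsto_nhds_unique (hright.congr' ?_) hleft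
  filter_upwards [hode] with z hz
  rw [hz, smul_add, smul_smul]

theorem deriv_eq_smul_deriv_add_of_deriv_eq_simplePole_smul_add (hw : DifferentiableAt 𝕜 w l)
    (hw' : ContinuousAt (deriv w) l) (hg : Tendsto (fun z => (z - l) * g z) (𝓝[≠] l) (𝓝 m))
    (hh : Tendsto h (𝓝[≠] l) (𝓝 k)) (hode : ∀ᶠ z in 𝓝[≠] l, deriv w z = g z • w z + h z)
    (hwl : w l = 0) : deriv w l = m • deriv w l + k := by
  have hright : Tendsto (fun z => ((z - l) * g z) • slope w l z + h z) (𝓝[≠] l)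
      (𝓝 (m • deriv w l + k)) :=
    (hg.smul hw.hasDerivAt.tendsto_slope).add hh
  refine tendsto_nhds_unique (hw'.tendsto.mono_left nhdsWithin_le_nhds) (hright.congr' ?_)
  filter_upwards [hode] with z hz
  rw [hz, mul_comm, mul_smul, sub_smul_slope, hwl, vsub_eq_sub, sub_zero]

end LinearODE

/-- The Hamiltonian system (H) with parameters `α`, `β`, for the pair `(p, q)`, at the single
point `z`. Imposing it for `z` near but different from `l` expresses that `(p, q)` is a local
solution with an isolated singularity at `l`. -/
structure SolvesHamiltonianAt (α β : ℂ) (p q : ℂ → ℂ) (z : ℂ) : Prop where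
  hasDerivAt_fst : HasDerivAt p (-(q z) ^ 2 - z * p z - α) z
  hasDerivAt_snd : HasDerivAt q ((p z) ^ 2 + z * q z + β) z

namespace SolvesHamiltonianAt

variable {α β c l z : ℂ} {p q : ℂ → ℂ}

theorem rescale (hc : c ^ 3 = 1) (h : SolvesHamiltonianAt α β p q z) :
    SolvesHamiltonianAt (c ^ 2 * α) (c * β) (fun z => c ^ 2 * p z) (fun z => c * q z) z where
  hasDerivAt_fst := (h.hasDerivAt_fst.const_mul (c ^ 2)).congr_deriv (by ring)
  hasDerivAt_snd := (h.hasDerivAt_snd.const_mul c).congr_deriv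
    (by linear_combination -(c * p z ^ 2) * hc)

theorem hasDerivAt_fst_add_snd_sub_id (h : SolvesHamiltonianAt α β p q z) :
    HasDerivAt (fun z => p z + q z - z) ((p z - q z) * (p z + q z - z) + (β - α - 1)) z :=
  ((h.hasDerivAt_fst.add h.hasDerivAt_snd).sub (hasDerivAt_id' z)).congr_deriv (by ring)

theorem tendsto_sub_mul_snd_sq
    (h : ∀ᶠ z in 𝓝[≠] l, SolvesHamiltonianAt α β p q z)
    (hres : Tendsto (fun z => (z - l) * p z) (𝓝[≠] l) (𝓝 c)) :
    Tendsto (fun z => ((z - l) * q z) ^ 2) (𝓝[≠] l) (𝓝 c) := by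
  have hp' : Tendsto (fun z => (z - l) ^ 2 * deriv p z) (𝓝[≠] l) (𝓝 (-c)) :=
    tendsto_sub_sq_smul_deriv (h.mono fun z hz => hz.hasDerivAt_fst.differentiableAt) hres
  have hid : Tendsto (fun z => z) (𝓝[≠] l) (𝓝 l) := nhdsWithin_le_nhds
  have hsub := tendsto_sub_self_nhdsNE l
  have hlim : Tendsto
      (fun z => -((z - l) ^ 2 * deriv p z) - (z - l) * z * ((z - l) * p z) - α * (z - l) ^ 2)
      (𝓝[≠] l) (𝓝 c) := by
    convert (hp'.neg.sub ((hsub.mul hid).mul hres)).sub ((hsub.pow 2).const_mul α) using 2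
    ring
  refine hlim.congr' ?_
  filter_upwards [h] with z hz
  rw [hz.hasDerivAt_fst.deriv]
  ring

theorem exists_tendsto_sub_mul_snd
    (h : ∀ᶠ z in 𝓝[≠] l, SolvesHamiltonianAt α β p q z)
    (hres : Tendsto (fun z => (z - l) * p z) (𝓝[≠] l) (𝓝 c)) :
    ∃ b, Tendsto (fun z => (z - l) * q z) (𝓝[≠] l) (𝓝 b) := by
  have hsq : Tendsto (fun z => ((z - l) * ((z - l) * q z)) ^ 2) (𝓝[≠] l) (𝓝 0) := by
    simpa [mul_pow] using
      ((tendsto_sub_self_nhdsNE l).pow 2).mul (tendsto_sub_mul_snd_sq h hres)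
  have hzero : Tendsto (fun z => (z - l) * ((z - l) * q z)) (𝓝[≠] l) (𝓝 0) := by
    rw [← Asymptotics.isLittleO_one_iff ℂ] at hsq ⊢
    exact Asymptotics.IsLittleO.of_pow (by simpa only [Pi.pow_def, one_pow] using hsq) two_ne_zero
  refine exists_tendsto_of_tendsto_sub_smul_zero ?_ hzero
  filter_upwards [h] with z hz
  exact (differentiableAt_id.sub_const l).mul hz.hasDerivAt_snd.differentiableAt

theorem tendsto_sub_mul_snd
    (h : ∀ᶠ z in 𝓝[≠] l, SolvesHamiltonianAt α β p q z)
    (hres : Tendsto (fun z => (z - l) * p z) (𝓝[≠] l) (𝓝 c)) :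
    Tendsto (fun z => (z - l) * q z) (𝓝[≠] l) (𝓝 (-c ^ 2)) := by
  obtain ⟨b, hb⟩ := exists_tendsto_sub_mul_snd h hres
  have hq' : Tendsto (fun z => (z - l) ^ 2 * deriv q z) (𝓝[≠] l) (𝓝 (-b)) :=
    tendsto_sub_sq_smul_deriv (h.mono fun z hz => hz.hasDerivAt_snd.differentiableAt) hb
  have hid : Tendsto (fun z => z) (𝓝[≠] l) (𝓝 l) := nhdsWithin_le_nhds
  have hsub := tendsto_sub_self_nhdsNE l
  have hlim : Tendsto
      (fun z => ((z - l) * p z) ^ 2 + (z - l) * z * ((z - l) * q z) + β * (z - l) ^ 2)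
      (𝓝[≠] l) (𝓝 (c ^ 2)) := by
    convert ((hres.pow 2).add ((hsub.mul hid).mul hb)).add ((hsub.pow 2).const_mul β) using 2
    ring
  have hbc : -b = c ^ 2 := by
    refine tendsto_nhds_unique hq' (hlim.congr' ?_)
    filter_upwards [h] with z hz
    rw [hz.hasDerivAt_snd.deriv]
    ring
  rwa [← hbc, neg_neg]

theorem residue_pow_three_eq_one
    (h : ∀ᶠ z in 𝓝[≠] l, SolvesHamiltonianAt α β p q z)
    (hres : Tendsto (fun z => (z - l) * p z) (𝓝[≠] l) (𝓝 c))
    (hc : c ≠ 0) : c ^ 3 = 1 := by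
  have hcube : (-c ^ 2) ^ 2 = c := tendsto_nhds_unique
    ((tendsto_sub_mul_snd h hres).pow 2) (tendsto_sub_mul_snd_sq h hres)
  exact mul_left_cancel₀ hc (by linear_combination hcube)

theorem tendsto_sub_mul_fst_sub_snd
    (h : ∀ᶠ z in 𝓝[≠] l, SolvesHamiltonianAt α β p q z)
    (hres : Tendsto (fun z => (z - l) * p z) (𝓝[≠] l) (𝓝 1)) :
    Tendsto (fun z => (z - l) * (p z - q z)) (𝓝[≠] l) (𝓝 2) := by
  convert hres.sub (tendsto_sub_mul_snd h hres) using 2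
  · ring
  · norm_num

theorem exists_tendsto_fst_add_snd_sub_id
    (h : ∀ᶠ z in 𝓝[≠] l, SolvesHamiltonianAt α β p q z)
    (hres : Tendsto (fun z => (z - l) * p z) (𝓝[≠] l) (𝓝 1)) :
    ∃ a, Tendsto (fun z => p z + q z - z) (𝓝[≠] l) (𝓝 a) := by
  refine exists_tendsto_of_tendsto_sub_smul_zero
    (h.mono fun z hz => hz.hasDerivAt_fst_add_snd_sub_id.differentiableAt) ?_
  have hid : Tendsto (fun z => z) (𝓝[≠] l) (𝓝 l) := nhdsWithin_le_nhds
  have hsub := tendsto_sub_self_nhdsNE l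
  convert (hres.add (tendsto_sub_mul_snd h hres)).sub (hsub.mul hid) using 2
  · simp only [smul_eq_mul]
    ring
  · ring

theorem analyticAt_and_deriv_update_fst_add_snd_sub_id
    (h : ∀ᶠ z in 𝓝[≠] l, SolvesHamiltonianAt α β p q z)
    (hres : Tendsto (fun z => (z - l) * p z) (𝓝[≠] l) (𝓝 1)) :
    AnalyticAt ℂ (Function.update (fun z => p z + q z - z) l 0) l ∧
      deriv (Function.update (fun z => p z + q z - z) l 0) l = 1 + α - β := by
  obtain ⟨a, ha⟩ := exists_tendsto_fst_add_snd_sub_id h hres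
  set w := Function.update (fun z => p z + q z - z) l a with hw
  have hwl : w l = a := Function.update_self ..
  have hwan : AnalyticAt ℂ w l := analyticAt_update_of_tendsto
    (h.mono fun z hz => hz.hasDerivAt_fst_add_snd_sub_id.differentiableAt) ha
  have heq : w =ᶠ[𝓝[≠] l] fun z => p z + q z - z := Function.update_eventuallyEq_nhdsNE ..
  have hode : ∀ᶠ z in 𝓝[≠] l, deriv w z = (p z - q z) • w z + (β - α - 1) := by
    filter_upwards [h, heq, heq.nhdsNE_deriv] with z hz hwz hwz'
    rw [hwz', hz.hasDerivAt_fst_add_snd_sub_id.deriv, hwz, smul_eq_mul]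
  have hpole := tendsto_sub_mul_fst_sub_snd h hres
  have ha0 : a = 0 := by
    simpa [hwl] using smul_eq_zero_of_deriv_eq_simplePole_smul_add hwan.continuousAt
      hwan.deriv.continuousAt hpole tendsto_const_nhds hode
  have hderiv : deriv w l = 2 * deriv w l + (β - α - 1) := by
    simpa using deriv_eq_smul_deriv_add_of_deriv_eq_simplePole_smul_add hwan.differentiableAt
      hwan.deriv.continuousAt hpole tendsto_const_nhds hode (hwl.trans ha0)
  rw [← ha0, ← hw]
  exact ⟨hwan, by linear_combination -hderiv⟩

end SolvesHamiltonianAt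

theorem stmt_5_general (α β c : ℂ) (hc : c ≠ 0) (D : Set ℂ) (hD : IsOpen D) (l : ℂ) (hl : l ∈ D)
    (p q : ℂ → ℂ) (hp : DifferentiableOn ℂ p (D \ {l})) (hq : DifferentiableOn ℂ q (D \ {l}))
    (hp' : ∀ z ∈ D \ {l}, deriv p z = -(q z) ^ 2 - z * p z - α)
    (hq' : ∀ z ∈ D \ {l}, deriv q z = (p z) ^ 2 + z * q z + β)
    (hres : Tendsto (fun z => (z - l) * p z) (𝓝[≠] l) (𝓝 c)) :
    ∃ w : ℂ → ℂ, DifferentiableOn ℂ w D ∧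
      (∀ z ∈ D \ {l}, w z = c ^ 2 * p z + c * q z - z) ∧
      w l = 0 ∧ deriv w l = 1 + c ^ 2 * α - c * β := by
  have hDl : IsOpen (D \ {l}) := hD.sdiff isClosed_singleton
  have hsolves : ∀ᶠ z in 𝓝[≠] l, SolvesHamiltonianAt α β p q z := by
    filter_upwards [sdiff_mem_nhdsWithin_compl (hD.mem_nhds hl) {l}] with z hz
    exact ⟨hp' z hz ▸ (hp.differentiableAt (hDl.mem_nhds hz)).hasDerivAt,
      hq' z hz ▸ (hq.differentiableAt (hDl.mem_nhds hz)).hasDerivAt⟩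
  have hc3 : c ^ 3 = 1 := SolvesHamiltonianAt.residue_pow_three_eq_one hsolves hres hc
  have hres1 : Tendsto (fun z => (z - l) * (c ^ 2 * p z)) (𝓝[≠] l) (𝓝 1) := by
    convert hres.const_mul (c ^ 2) using 2
    · ring
    · rw [← hc3, pow_succ]
  obtain ⟨hw, hderiv⟩ := SolvesHamiltonianAt.analyticAt_and_deriv_update_fst_add_snd_sub_id
    (hsolves.mono fun z hz => hz.rescale hc3) hres1
  set w := Function.update (fun z => c ^ 2 * p z + c * q z - z) l 0
  have hwe : ∀ z ∈ D \ {l}, w z = c ^ 2 * p z + c * q z - z :=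
    fun z hz => Function.update_of_ne hz.2 ..
  have hwD : DifferentiableOn ℂ w (D \ {l}) :=
    (((hp.const_mul (c ^ 2)).add (hq.const_mul c)).sub differentiableOn_id).congr hwe
  exact ⟨w, (Complex.differentiableOn_compl_singleton_and_continuousAt_iff
    (hD.mem_nhds hl)).1 ⟨hwD, hw.continuousAt⟩, hwe, Function.update_self .., hderiv⟩

/-- If `p` has a simple pole at `l` with residue `1` for a local solution
`(p, q)` of the Hamiltonian system, then `w = p + q − z` extends holomorphically across `l`,
with `w(l) = 0` and `w′(l) = 1 + α − β`. -/
theorem stmt_5 (α β : ℂ) (D : Set ℂ) (hD : IsOpen D) (l : ℂ) (hl : l ∈ D) (p q : ℂ → ℂ)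
    (hp : DifferentiableOn ℂ p (D \ {l})) (hq : DifferentiableOn ℂ q (D \ {l}))
    (hp' : ∀ z ∈ D \ {l}, deriv p z = -(q z) ^ 2 - z * p z - α)
    (hq' : ∀ z ∈ D \ {l}, deriv q z = (p z) ^ 2 + z * q z + β)
    (hres : Tendsto (fun z => (z - l) * p z) (𝓝[≠] l) (𝓝 1)) :
    ∃ w : ℂ → ℂ, DifferentiableOn ℂ w D ∧
      (∀ z ∈ D \ {l}, w z = p z + q z - z) ∧
      w l = 0 ∧ deriv w l = 1 + α - β := by
  simpa using stmt_5_general α β 1 one_ne_zero D hD l hl p q hp hq hp' hq' hres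
end

section
/- Let α, β ∈ ℂ, let ω ∈ ℂ satisfy ω³ = 1, let U ⊆ ℂ be open, and let p, q be holomorphic on U and satisfy p′(z) = −q(z)² − z·p(z) − α and q′(z) = p(z)² + z·q(z) + β on U. Suppose the function f(z) = ω·p(z) + ω²·q(z) − z has no zeros in U. Then the functions p̃(z) = p(z) − ω²·(ωα − ω²β + 1)/f(z) and q̃(z) = q(z) + ω·(ωα − ω²β + 1)/f(z) are holomorphic on U and satisfy the Hamiltonian system with parameters (ωβ − ω², ω²α + ω), i.e. p̃′(z) = −q̃(z)² − z·p̃(z) − (ωβ − ω²) and q̃′(z) = p̃(z)² + z·q̃(z) + (ω²α + ω) on U. -/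
/-!
Write `f = ωp + ω²q - z` and `κ = ωα - ω²β + 1`. Along a solution, `ω³ = 1` makes `f` satisfy the
linear equation `f' = (ωp - ω²q)f - κ`, so that `u = κ / f` satisfies the Riccati equation
`u' = u² - (ωp - ω²q)u`. Substituting `p̃ = p - ω²u` and `q̃ = q + ωu` into the Hamiltonian system,
the terms in `u²` cancel, and what remains of either equation is a multiple of `uf = κ`.
-/

section

variable {𝕜 : Type*} [NontriviallyNormedField 𝕜] {α β ω z : 𝕜} {p q : 𝕜 → 𝕜} {U : Set 𝕜}

/-- `(p, q)` solves on `U` the Hamiltonian system with parameters `(α, β)`. The derivatives are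
taken within `U`, so that `U` need not be open. -/
structure IsHamiltonianSolutionOn_s6 (α β : 𝕜) (p q : 𝕜 → 𝕜) (U : Set 𝕜) : Prop where
  hasDerivWithinAt_fst : ∀ z ∈ U, HasDerivWithinAt p (-(q z) ^ 2 - z * p z - α) U z
  hasDerivWithinAt_snd : ∀ z ∈ U, HasDerivWithinAt q ((p z) ^ 2 + z * q z + β) U z

/-- The function `f = ωp + ω²q - z`, by which the Bäcklund transformation `B_ω` divides. -/
def backlundDenom (ω : 𝕜) (p q : 𝕜 → 𝕜) (z : 𝕜) : 𝕜 :=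
  ω * p z + ω ^ 2 * q z - z

/-- The constant `κ = ωα - ω²β + 1` in the numerators of the Bäcklund transformation `B_ω`. -/
def backlundCoeff (α β ω : 𝕜) : 𝕜 :=
  ω * α - ω ^ 2 * β + 1

/-- The function `u = κ / f`, multiples of which the Bäcklund transformation `B_ω` adds to the two
components of a solution. -/
def backlundShift (α β ω : 𝕜) (p q : 𝕜 → 𝕜) (z : 𝕜) : 𝕜 :=
  backlundCoeff α β ω / backlundDenom ω p q z

/-- The first component `p̃` of the image of `(p, q)` under the Bäcklund transformation `B_ω`. -/
def backlundFst (α β ω : 𝕜) (p q : 𝕜 → 𝕜) (z : 𝕜) : 𝕜 :=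
  p z - ω ^ 2 * backlundCoeff α β ω / backlundDenom ω p q z

/-- The second component `q̃` of the image of `(p, q)` under the Bäcklund transformation `B_ω`. -/
def backlundSnd (α β ω : 𝕜) (p q : 𝕜 → 𝕜) (z : 𝕜) : 𝕜 :=
  q z + ω * backlundCoeff α β ω / backlundDenom ω p q z

theorem backlundFst_eq_sub_shift :
    backlundFst α β ω p q = fun z => p z - ω ^ 2 * backlundShift α β ω p q z :=
  funext fun _ => congrArg _ (mul_div_assoc _ _ _)

theorem backlundSnd_eq_add_shift :
    backlundSnd α β ω p q = fun z => q z + ω * backlundShift α β ω p q z :=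
  funext fun _ => congrArg _ (mul_div_assoc _ _ _)

theorem backlundShift_mul_denom (hf : backlundDenom ω p q z ≠ 0) :
    backlundShift α β ω p q z * backlundDenom ω p q z = backlundCoeff α β ω :=
  div_mul_cancel₀ _ hf

theorem isHamiltonianSolutionOn_iff_deriv (hU : IsOpen U) :
    IsHamiltonianSolutionOn_s6 α β p q U ↔
      DifferentiableOn 𝕜 p U ∧ DifferentiableOn 𝕜 q U ∧
        (∀ z ∈ U, deriv p z = -(q z) ^ 2 - z * p z - α) ∧
        (∀ z ∈ U, deriv q z = (p z) ^ 2 + z * q z + β) := by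
  constructor
  · rintro ⟨hp, hq⟩
    exact ⟨fun z hz => (hp z hz).differentiableWithinAt,
      fun z hz => (hq z hz).differentiableWithinAt,
      fun z hz => ((hp z hz).hasDerivAt (hU.mem_nhds hz)).deriv,
      fun z hz => ((hq z hz).hasDerivAt (hU.mem_nhds hz)).deriv⟩
  · rintro ⟨hp, hq, hp', hq'⟩
    exact ⟨fun z hz => hp' z hz ▸ (hp.hasDerivAt (hU.mem_nhds hz)).hasDerivWithinAt,
      fun z hz => hq' z hz ▸ (hq.hasDerivAt (hU.mem_nhds hz)).hasDerivWithinAt⟩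

theorem hasDerivWithinAt_const_div_of_linear {f : 𝕜 → 𝕜} {c g : 𝕜}
    (hf' : HasDerivWithinAt f (g * f z - c) U z) (hf : f z ≠ 0) :
    HasDerivWithinAt (fun w => c / f w) ((c / f z) ^ 2 - g * (c / f z)) U z := by
  refine ((hasDerivWithinAt_const z U c).fun_div hf' hf).congr_deriv ?_
  field_simp
  ring

namespace IsHamiltonianSolutionOn_s6

variable (h : IsHamiltonianSolutionOn_s6 α β p q U) (hω : ω ^ 3 = 1) (hz : z ∈ U)

include h hω hz

theorem hasDerivWithinAt_backlundDenom :
    HasDerivWithinAt (backlundDenom ω p q)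
      ((ω * p z - ω ^ 2 * q z) * backlundDenom ω p q z - backlundCoeff α β ω) U z := by
  refine ((((h.hasDerivWithinAt_fst z hz).const_mul ω).add
    ((h.hasDerivWithinAt_snd z hz).const_mul (ω ^ 2))).sub (hasDerivWithinAt_id z U)).congr_deriv ?_
  simp only [backlundDenom, backlundCoeff]
  linear_combination (ω * q z ^ 2) * hω

theorem hasDerivWithinAt_backlundShift (hf : backlundDenom ω p q z ≠ 0) :
    HasDerivWithinAt (backlundShift α β ω p q)
      (backlundShift α β ω p q z ^ 2 - (ω * p z - ω ^ 2 * q z) * backlundShift α β ω p q z) U z :=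
  hasDerivWithinAt_const_div_of_linear (h.hasDerivWithinAt_backlundDenom hω hz) hf

theorem hasDerivWithinAt_backlundFst (hf : backlundDenom ω p q z ≠ 0) :
    HasDerivWithinAt (backlundFst α β ω p q)
      (-(backlundSnd α β ω p q z) ^ 2 - z * backlundFst α β ω p q z - (ω * β - ω ^ 2)) U z := by
  have huf := backlundShift_mul_denom (α := α) (β := β) hf
  rw [backlundFst_eq_sub_shift, backlundSnd_eq_add_shift]
  refine ((h.hasDerivWithinAt_fst z hz).sub
    ((h.hasDerivWithinAt_backlundShift hω hz hf).const_mul (ω ^ 2))).congr_deriv ?_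
  simp only [backlundDenom, backlundCoeff] at huf
  set u := backlundShift α β ω p q z
  linear_combination ω ^ 2 * huf + (α - ω * β - 2 * ω * u * q z) * hω

theorem hasDerivWithinAt_backlundSnd (hf : backlundDenom ω p q z ≠ 0) :
    HasDerivWithinAt (backlundSnd α β ω p q)
      ((backlundFst α β ω p q z) ^ 2 + z * backlundSnd α β ω p q z + (ω ^ 2 * α + ω)) U z := by
  have huf := backlundShift_mul_denom (α := α) (β := β) hf
  rw [backlundFst_eq_sub_shift, backlundSnd_eq_add_shift]
  refine ((h.hasDerivWithinAt_snd z hz).add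
    ((h.hasDerivWithinAt_backlundShift hω hz hf).const_mul ω)).congr_deriv ?_
  simp only [backlundDenom, backlundCoeff] at huf
  set u := backlundShift α β ω p q z
  linear_combination ω * huf - (β + ω * u ^ 2) * hω

end IsHamiltonianSolutionOn_s6

theorem stmt_6_general (hω : ω ^ 3 = 1) (h : IsHamiltonianSolutionOn_s6 α β p q U)
    (hf : ∀ z ∈ U, backlundDenom ω p q z ≠ 0) :
    IsHamiltonianSolutionOn_s6 (ω * β - ω ^ 2) (ω ^ 2 * α + ω)
      (backlundFst α β ω p q) (backlundSnd α β ω p q) U where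
  hasDerivWithinAt_fst z hz := h.hasDerivWithinAt_backlundFst hω hz (hf z hz)
  hasDerivWithinAt_snd z hz := h.hasDerivWithinAt_backlundSnd hω hz (hf z hz)

end

/-- The Bäcklund transformation `B_ω`: if `(p, q)` solves the Hamiltonian
system with parameters `(α, β)` on an open set `U` where `f = ω·p + ω²·q − z` has no zeros,
then `p̃ = p − ω²·(ωα − ω²β + 1)/f` and `q̃ = q + ω·(ωα − ω²β + 1)/f` solve the system with
parameters `(ωβ − ω², ω²α + ω)` on `U`. -/
theorem stmt_6 (α β ω : ℂ) (hω : ω ^ 3 = 1) (U : Set ℂ) (hU : IsOpen U) (p q : ℂ → ℂ)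
    (hp : DifferentiableOn ℂ p U) (hq : DifferentiableOn ℂ q U)
    (hp' : ∀ z ∈ U, deriv p z = -(q z) ^ 2 - z * p z - α)
    (hq' : ∀ z ∈ U, deriv q z = (p z) ^ 2 + z * q z + β)
    (hf : ∀ z ∈ U, ω * p z + ω ^ 2 * q z - z ≠ 0) :
    DifferentiableOn ℂ
        (fun z => p z - ω ^ 2 * (ω * α - ω ^ 2 * β + 1) / (ω * p z + ω ^ 2 * q z - z)) U ∧
    DifferentiableOn ℂ
        (fun z => q z + ω * (ω * α - ω ^ 2 * β + 1) / (ω * p z + ω ^ 2 * q z - z)) U ∧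
    (∀ z ∈ U,
      deriv (fun w => p w - ω ^ 2 * (ω * α - ω ^ 2 * β + 1) / (ω * p w + ω ^ 2 * q w - w)) z =
        -(q z + ω * (ω * α - ω ^ 2 * β + 1) / (ω * p z + ω ^ 2 * q z - z)) ^ 2
          - z * (p z - ω ^ 2 * (ω * α - ω ^ 2 * β + 1) / (ω * p z + ω ^ 2 * q z - z))
          - (ω * β - ω ^ 2)) ∧
    (∀ z ∈ U,
      deriv (fun w => q w + ω * (ω * α - ω ^ 2 * β + 1) / (ω * p w + ω ^ 2 * q w - w)) z =
        (p z - ω ^ 2 * (ω * α - ω ^ 2 * β + 1) / (ω * p z + ω ^ 2 * q z - z)) ^ 2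
          + z * (q z + ω * (ω * α - ω ^ 2 * β + 1) / (ω * p z + ω ^ 2 * q z - z))
          + (ω ^ 2 * α + ω)) :=
  (isHamiltonianSolutionOn_iff_deriv hU).1 <|
    stmt_6_general hω ((isHamiltonianSolutionOn_iff_deriv hU).2 ⟨hp, hq, hp', hq'⟩) hf
end

section
/- Let α, β ∈ ℂ and let (p, q) be a pair of functions meromorphic on all of ℂ satisfying p′(z) = −q(z)² − z·p(z) − α and q′(z) = p(z)² + z·q(z) + β at every point where both are holomorphic. Then p and q have order of growth at most four: there is a constant C such that T(r, p) + T(r, q) ≤ C·r⁴ for all r ≥ 1, where T denotes the Nevanlinna characteristic. -/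
open Filter Topology Asymptotics

/-- The positive part of the logarithm, `log⁺ x = max 0 (log x)`. -/
noncomputable def logPlus (x : ℝ) : ℝ := max 0 (Real.log x)

/-- The Nevanlinna proximity function
`m(r, f) = (2π)⁻¹ ∫₀^{2π} log⁺ |f(r e^{iθ})| dθ`. -/
noncomputable def proximity (f : ℂ → ℂ) (r : ℝ) : ℝ :=
  (2 * Real.pi)⁻¹ * ∫ θ in (0:ℝ)..(2 * Real.pi),
    logPlus ‖f ((r : ℂ) * Complex.exp ((θ : ℂ) * Complex.I))‖

/-- The multiplicity of `z₀` as a pole of `f`: the least `k` such that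
`(z − z₀)^k · f(z)` has a finite limit at `z₀` (and `0` if there is no such `k`). -/
noncomputable def poleMult (f : ℂ → ℂ) (z₀ : ℂ) : ℕ :=
  sInf {k : ℕ | ∃ c : ℂ, Tendsto (fun z => (z - z₀) ^ k * f z) (𝓝[≠] z₀) (𝓝 c)}

/-- The unintegrated counting function of poles,
`n(t, f) = Σ_{|z| ≤ t} (multiplicity of z as pole of f)`. -/
noncomputable def nPoles (f : ℂ → ℂ) (t : ℝ) : ℝ :=
  ∑ᶠ z ∈ Metric.closedBall (0 : ℂ) t, (poleMult f z : ℝ)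

/-- The integrated counting function of poles,
`N(r, f) = ∫₀^r (n(t,f) − n(0,f))/t dt + n(0,f) log r`. -/
noncomputable def countingN (f : ℂ → ℂ) (r : ℝ) : ℝ :=
  (∫ t in (0:ℝ)..r, (nPoles f t - nPoles f 0) / t) + nPoles f 0 * Real.log r

/-- The Nevanlinna characteristic `T(r, f) = m(r, f) + N(r, f)`. -/
noncomputable def nevT (f : ℂ → ℂ) (r : ℝ) : ℝ := proximity f r + countingN f r

/-- `(p, q)` is a (meromorphic) solution on `ℂ` of the Hamiltonian system
`p′ = −q² − z·p − α`, `q′ = p² + z·q + β`. -/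
def IsHamSolution (α β : ℂ) (p q : ℂ → ℂ) : Prop :=
  MeromorphicOn p Set.univ ∧ MeromorphicOn q Set.univ ∧
    ∀ z : ℂ, AnalyticAt ℂ p z → AnalyticAt ℂ q z →
      deriv p z = -(q z) ^ 2 - z * p z - α ∧ deriv q z = (p z) ^ 2 + z * q z + β

/-- A function is rational if it agrees with a quotient of polynomials away from
finitely many points. -/
def IsRationalFn (f : ℂ → ℂ) : Prop :=
  ∃ P Q : Polynomial ℂ, Q ≠ 0 ∧ ∀ᶠ z in Filter.cofinite, f z = P.eval z / Q.eval z

/-- `z₀` is a pole of `f`: `|f| → ∞` at `z₀`. -/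
def IsPole (f : ℂ → ℂ) (z₀ : ℂ) : Prop :=
  Tendsto (fun z => ‖f z‖) (𝓝[≠] z₀) atTop

/-- `f` has residue `ρ` at a simple pole `z₀`: `(z − z₀)·f(z) → ρ` at `z₀`. -/
def HasResidue (f : ℂ → ℂ) (z₀ ρ : ℂ) : Prop :=
  Tendsto (fun z => (z - z₀) * f z) (𝓝[≠] z₀) (𝓝 ρ)

/-- `n(r, S)`: the number of points of `S` in the closed disc of radius `r`. -/
noncomputable def setCount (S : Set ℂ) (r : ℝ) : ℝ :=
  ((S ∩ Metric.closedBall (0 : ℂ) r).ncard : ℝ)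

/-- The closed sector `{t·e^{iθ} : t > 0, a ≤ θ ≤ b}`. -/
def ClosedSector (a b : ℝ) : Set ℂ :=
  {z | ∃ t θ : ℝ, 0 < t ∧ a ≤ θ ∧ θ ≤ b ∧ z = (t : ℂ) * Complex.exp ((θ : ℂ) * Complex.I)}

/-!
Along a solution, `H = (p³ + q³) / 3 + z p q + α q + β p` has derivative `p q`. A lower-order
correction cancels the leading part of this derivative, and integrating along segments that avoid
the poles shows that the corrected energy is `O(|z|³)`. Where `‖(p, q)‖` is large compared with
`r ≥ |z|`, this forces `p³ + q³` to be comparatively small, so that `|(1 / q)′|` is bounded above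
and below: `1 / q` is a coordinate of bounded distortion on a disc of radius `δ / r`. Hence all
poles in `|z| ≤ r` are simple and `δ / r`-separated, so there are `O(r⁴)` of them. For the proximity
function, cut the circle `|z| = r` into `O(r²)` arcs of length at most `δ / r`; on each arc the
state has at most a simple-pole singularity in the angle, which contributes a bounded amount.
-/

section PointwiseAlgebra

open scoped ComplexConjugate

/-- The size `√(|p|² + |q|² + 1)` of a state `(p, q)`. -/
noncomputable def stateNorm (p q : ℂ) : ℝ := √(‖p‖ ^ 2 + ‖q‖ ^ 2 + 1)

/-- The cubic `p²q̄ + q²p̄`, which measures how far `p³ + q³` is from vanishing. -/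
def mixedCubic (p q : ℂ) : ℂ := p ^ 2 * conj q + q ^ 2 * conj p

/-- The cubic `p²q̄ − q²p̄`, the numerator of the correction term of `energy`. -/
def skewCubic (p q : ℂ) : ℂ := p ^ 2 * conj q - q ^ 2 * conj p

lemma stateNorm_sq (p q : ℂ) : stateNorm p q ^ 2 = ‖p‖ ^ 2 + ‖q‖ ^ 2 + 1 :=
  Real.sq_sqrt (by positivity)

lemma ofReal_stateNorm_sq (p q : ℂ) :
    ((stateNorm p q : ℂ)) ^ 2 = p * conj p + q * conj q + 1 := by
  rw [Complex.mul_conj', Complex.mul_conj']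
  exact_mod_cast stateNorm_sq p q

lemma one_le_stateNorm (p q : ℂ) : 1 ≤ stateNorm p q :=
  Real.one_le_sqrt.2 (by nlinarith [sq_nonneg ‖p‖, sq_nonneg ‖q‖])

lemma stateNorm_pos (p q : ℂ) : 0 < stateNorm p q :=
  one_pos.trans_le (one_le_stateNorm p q)

lemma norm_fst_le_stateNorm (p q : ℂ) : ‖p‖ ≤ stateNorm p q :=
  Real.le_sqrt_of_sq_le (by nlinarith [sq_nonneg ‖q‖])

lemma norm_snd_le_stateNorm (p q : ℂ) : ‖q‖ ≤ stateNorm p q :=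
  Real.le_sqrt_of_sq_le (by nlinarith [sq_nonneg ‖p‖])

lemma norm_mul_norm_le_stateNorm_sq (p q : ℂ) : 2 * (‖p‖ * ‖q‖) ≤ stateNorm p q ^ 2 := by
  nlinarith [stateNorm_sq p q, sq_nonneg (‖p‖ - ‖q‖)]

lemma continuous_stateNorm : Continuous fun x : ℂ × ℂ => stateNorm x.1 x.2 := by
  unfold stateNorm
  fun_prop

lemma norm_sq_add_norm_sq_le_stateNorm_sq (p q : ℂ) :
    ‖p‖ ^ 2 + ‖q‖ ^ 2 ≤ stateNorm p q ^ 2 := by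
  linarith [stateNorm_sq p q]

lemma norm_cube_add_cube_sq_le (p q : ℂ) :
    ‖p ^ 3 + q ^ 3‖ ^ 2 ≤ (‖p‖ ^ 2 + ‖q‖ ^ 2) ^ 3 :=
  calc ‖p ^ 3 + q ^ 3‖ ^ 2 ≤ (‖p‖ ^ 3 + ‖q‖ ^ 3) ^ 2 := by
        gcongr
        exact (norm_add_le _ _).trans_eq (by rw [norm_pow, norm_pow])
    _ ≤ (‖p‖ ^ 2 + ‖q‖ ^ 2) ^ 3 := by
        have : 0 ≤ (‖p‖ * ‖q‖) ^ 2 * (2 * (‖p‖ ^ 2 + ‖q‖ ^ 2) + (‖p‖ - ‖q‖) ^ 2) := by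
          positivity
        linarith

lemma norm_cube_add_cube_le_stateNorm (p q : ℂ) : ‖p ^ 3 + q ^ 3‖ ≤ stateNorm p q ^ 3 := by
  refine le_of_sq_le_sq ?_ (pow_nonneg (stateNorm_pos p q).le 3)
  calc ‖p ^ 3 + q ^ 3‖ ^ 2 ≤ (‖p‖ ^ 2 + ‖q‖ ^ 2) ^ 3 := norm_cube_add_cube_sq_le p q
    _ ≤ (stateNorm p q ^ 2) ^ 3 := by gcongr; exact norm_sq_add_norm_sq_le_stateNorm_sq p q
    _ = (stateNorm p q ^ 3) ^ 2 := by ring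

lemma norm_mixedCubic_sq_add (p q : ℂ) :
    ‖mixedCubic p q‖ ^ 2 + (‖p‖ ^ 2 - ‖q‖ ^ 2) ^ 2 * (‖p‖ ^ 2 + ‖q‖ ^ 2) =
      ‖p ^ 3 + q ^ 3‖ ^ 2 := by
  simp only [mixedCubic, Complex.sq_norm, Complex.normSq_apply]
  simp only [pow_succ, pow_zero, one_mul, Complex.add_re, Complex.mul_re, Complex.conj_re,
    Complex.mul_im, Complex.conj_im, mul_neg, sub_neg_eq_add, Complex.add_im]
  ring

lemma norm_mixedCubic_le (p q : ℂ) : ‖mixedCubic p q‖ ≤ ‖p ^ 3 + q ^ 3‖ := by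
  refine le_of_sq_le_sq ?_ (norm_nonneg _)
  have : 0 ≤ (‖p‖ ^ 2 - ‖q‖ ^ 2) ^ 2 * (‖p‖ ^ 2 + ‖q‖ ^ 2) := by positivity
  linarith [norm_mixedCubic_sq_add p q]

lemma sq_sub_sq_mul_le_norm_cube_add_cube_sq (p q : ℂ) :
    (‖p‖ ^ 2 - ‖q‖ ^ 2) ^ 2 * (‖p‖ ^ 2 + ‖q‖ ^ 2) ≤ ‖p ^ 3 + q ^ 3‖ ^ 2 := by
  linarith [norm_mixedCubic_sq_add p q, sq_nonneg ‖mixedCubic p q‖]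

lemma norm_skewCubic_eq (p q : ℂ) : ‖skewCubic p q‖ = ‖mixedCubic p (-q)‖ := by
  rw [← norm_neg]
  congr 1
  simp only [skewCubic, mixedCubic, map_neg]
  ring

lemma norm_skewCubic_sq_le (p q : ℂ) : ‖skewCubic p q‖ ^ 2 ≤ (‖p‖ ^ 2 + ‖q‖ ^ 2) ^ 3 :=
  calc ‖skewCubic p q‖ ^ 2 ≤ ‖p ^ 3 + (-q) ^ 3‖ ^ 2 := by
        rw [norm_skewCubic_eq]
        gcongr
        exact norm_mixedCubic_le p (-q)
    _ ≤ (‖p‖ ^ 2 + ‖q‖ ^ 2) ^ 3 := by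
        simpa only [norm_neg] using norm_cube_add_cube_sq_le p (-q)

lemma norm_skewCubic_le (p q : ℂ) : ‖skewCubic p q‖ ≤ stateNorm p q ^ 3 := by
  refine le_of_sq_le_sq ?_ (pow_nonneg (stateNorm_pos p q).le 3)
  calc ‖skewCubic p q‖ ^ 2 ≤ (‖p‖ ^ 2 + ‖q‖ ^ 2) ^ 3 := norm_skewCubic_sq_le p q
    _ ≤ (stateNorm p q ^ 2) ^ 3 := by gcongr; exact norm_sq_add_norm_sq_le_stateNorm_sq p q
    _ = (stateNorm p q ^ 3) ^ 2 := by ring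

lemma norm_skewCubic_mul_le (p q : ℂ) :
    ‖skewCubic p q * (p * conj p - q * conj q)‖ ≤ ‖p ^ 3 + q ^ 3‖ * stateNorm p q ^ 2 := by
  have hD : p * conj p - q * conj q = ((‖p‖ ^ 2 - ‖q‖ ^ 2 : ℝ) : ℂ) := by
    rw [Complex.mul_conj', Complex.mul_conj']
    push_cast
    rfl
  rw [norm_mul, hD, Complex.norm_real]
  refine le_of_sq_le_sq ?_ (by positivity)
  rw [mul_pow, Real.norm_eq_abs, sq_abs]
  calc ‖skewCubic p q‖ ^ 2 * (‖p‖ ^ 2 - ‖q‖ ^ 2) ^ 2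
      ≤ (‖p‖ ^ 2 + ‖q‖ ^ 2) ^ 3 * (‖p‖ ^ 2 - ‖q‖ ^ 2) ^ 2 := by
        gcongr
        exact norm_skewCubic_sq_le p q
    _ = ((‖p‖ ^ 2 - ‖q‖ ^ 2) ^ 2 * (‖p‖ ^ 2 + ‖q‖ ^ 2)) * (‖p‖ ^ 2 + ‖q‖ ^ 2) ^ 2 := by ring
    _ ≤ ‖p ^ 3 + q ^ 3‖ ^ 2 * (stateNorm p q ^ 2) ^ 2 := by
        gcongr
        · exact sq_sub_sq_mul_le_norm_cube_add_cube_sq p q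
        · exact norm_sq_add_norm_sq_le_stateNorm_sq p q
    _ = (‖p ^ 3 + q ^ 3‖ * stateNorm p q ^ 2) ^ 2 := by ring

/-- The Hamiltonian `(p³ + q³)/3 + zpq + αq + βp`, corrected by a non-holomorphic term
`(p²q̄ − q²p̄)/(|p|² + |q|² + 1)`. The correction cancels the leading part of the derivative `pq`
of the Hamiltonian along solutions, which makes the energy grow at most like `|z|³`. -/
noncomputable def energy (α β z p q : ℂ) : ℂ :=
  (p ^ 3 + q ^ 3) / 3 + z * p * q + α * q + β * p + skewCubic p q / (stateNorm p q : ℂ) ^ 2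

lemma continuous_energy (α β : ℂ) :
    Continuous fun x : ℂ × ℂ × ℂ => energy α β x.1 x.2.1 x.2.2 := by
  have hm : Continuous fun x : ℂ × ℂ × ℂ => (stateNorm x.2.1 x.2.2 : ℂ) :=
    Complex.continuous_ofReal.comp (continuous_stateNorm.comp continuous_snd)
  unfold energy skewCubic
  refine Continuous.add (by fun_prop) (Continuous.div₀ (by fun_prop) (by fun_prop) fun x => ?_)
  exact pow_ne_zero 2 (Complex.ofReal_ne_zero.2 (stateNorm_pos _ _).ne')

/-- The quotient `|p³ + q³| / (|p|² + |q|² + 1)`, which controls the derivatives of `energy`. -/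
noncomputable def cubeRatio (p q : ℂ) : ℝ := ‖p ^ 3 + q ^ 3‖ / stateNorm p q ^ 2

/-- The Wirtinger derivative `∂/∂z` of `energy` along solutions. -/
noncomputable def energyDz (α β z p q : ℂ) : ℂ :=
  (p * q - (p ^ 3 + q ^ 3) * conj (mixedCubic p q)
    + z * (skewCubic p q * (p * conj p - q * conj q)
        - 2 * mixedCubic p q * (stateNorm p q : ℂ) ^ 2)
    + (skewCubic p q * (α * conj p - β * conj q)
        - 2 * (α * p * conj q + β * q * conj p) * (stateNorm p q : ℂ) ^ 2))
    / (stateNorm p q : ℂ) ^ 4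

/-- The Wirtinger derivative `∂/∂z̄` of `energy` along solutions. -/
noncomputable def energyDzBar (α β z p q : ℂ) : ℂ :=
  ((p ^ 3 + q ^ 3) * conj (p ^ 3 + q ^ 3) + ((p * conj p) ^ 2 + (q * conj q) ^ 2)
    + conj z * (skewCubic p q * (p * conj p - q * conj q)
        + mixedCubic p q * (stateNorm p q : ℂ) ^ 2)
    + (skewCubic p q * (conj α * p - conj β * q)
        + (conj β * p ^ 2 + conj α * q ^ 2) * (stateNorm p q : ℂ) ^ 2))
    / (stateNorm p q : ℂ) ^ 4

lemma norm_ofReal_stateNorm (p q : ℂ) : ‖(stateNorm p q : ℂ)‖ = stateNorm p q := by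
  rw [Complex.norm_real, Real.norm_of_nonneg (stateNorm_pos p q).le]

lemma cubeRatio_nonneg (p q : ℂ) : 0 ≤ cubeRatio p q := by
  unfold cubeRatio
  positivity

lemma cubeRatio_le_stateNorm (p q : ℂ) : cubeRatio p q ≤ stateNorm p q := by
  have := stateNorm_pos p q
  rw [cubeRatio, div_le_iff₀ (by positivity)]
  linarith [norm_cube_add_cube_le_stateNorm p q]

lemma norm_add_mul_add_div_le {p q u v w z : ℂ} {c : ℝ}
    (hu : ‖u‖ ≤ ‖p ^ 3 + q ^ 3‖ ^ 2 + stateNorm p q ^ 4)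
    (hv : ‖v‖ ≤ 3 * ‖p ^ 3 + q ^ 3‖ * stateNorm p q ^ 2)
    (hw : ‖w‖ ≤ c * stateNorm p q ^ 4) :
    ‖(u + z * v + w) / (stateNorm p q : ℂ) ^ 4‖ ≤
      cubeRatio p q ^ 2 + 3 * ‖z‖ * cubeRatio p q + 1 + c := by
  have hm := stateNorm_pos p q
  have hsum : ‖u + z * v + w‖ ≤ ‖p ^ 3 + q ^ 3‖ ^ 2 + stateNorm p q ^ 4
      + ‖z‖ * (3 * ‖p ^ 3 + q ^ 3‖ * stateNorm p q ^ 2) + c * stateNorm p q ^ 4 := by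
    refine norm_add₃_le.trans ?_
    rw [norm_mul]
    gcongr
  rw [norm_div, norm_pow, norm_ofReal_stateNorm, div_le_iff₀ (by positivity)]
  refine hsum.trans_eq ?_
  unfold cubeRatio
  field_simp
  ring

lemma norm_skewCubic_mul_linear_le (a b : ℂ) {p q x y : ℂ} (hx : ‖x‖ ≤ stateNorm p q)
    (hy : ‖y‖ ≤ stateNorm p q) :
    ‖skewCubic p q * (a * x - b * y)‖ ≤ (‖a‖ + ‖b‖) * stateNorm p q ^ 4 := by
  have hlin : ‖a * x - b * y‖ ≤ ‖a‖ * stateNorm p q + ‖b‖ * stateNorm p q := by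
    refine (norm_sub_le _ _).trans ?_
    rw [norm_mul, norm_mul]
    gcongr
  calc ‖skewCubic p q * (a * x - b * y)‖
      ≤ stateNorm p q ^ 3 * (‖a‖ * stateNorm p q + ‖b‖ * stateNorm p q) := by
        rw [norm_mul]
        gcongr
        · exact pow_nonneg (stateNorm_pos p q).le 3
        · exact norm_skewCubic_le p q
    _ = (‖a‖ + ‖b‖) * stateNorm p q ^ 4 := by ring

lemma norm_energyDz_le (α β z p q : ℂ) :
    ‖energyDz α β z p q‖ ≤
      cubeRatio p q ^ 2 + 3 * ‖z‖ * cubeRatio p q + 1 + 2 * (‖α‖ + ‖β‖) := by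
  have hpq := norm_mul_norm_le_stateNorm_sq p q
  refine norm_add_mul_add_div_le ?_ ?_ ?_
  · calc ‖p * q - (p ^ 3 + q ^ 3) * conj (mixedCubic p q)‖
        ≤ ‖p‖ * ‖q‖ + ‖p ^ 3 + q ^ 3‖ * ‖mixedCubic p q‖ :=
          (norm_sub_le _ _).trans_eq (by simp only [norm_mul, RCLike.norm_conj])
      _ ≤ stateNorm p q ^ 4 + ‖p ^ 3 + q ^ 3‖ * ‖p ^ 3 + q ^ 3‖ := by
          gcongr
          · have := pow_le_pow_right₀ (one_le_stateNorm p q) (show 2 ≤ 4 by norm_num)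
            linarith [mul_nonneg (norm_nonneg p) (norm_nonneg q)]
          · exact norm_mixedCubic_le p q
      _ = ‖p ^ 3 + q ^ 3‖ ^ 2 + stateNorm p q ^ 4 := by ring
  · refine (norm_sub_le _ _).trans ?_
    rw [norm_mul (2 * _), norm_mul 2, norm_pow, norm_ofReal_stateNorm, Complex.norm_ofNat]
    nlinarith [norm_skewCubic_mul_le p q, norm_mixedCubic_le p q]
  · have hskew := norm_skewCubic_mul_linear_le α β
      ((RCLike.norm_conj p).trans_le (norm_fst_le_stateNorm p q))
      ((RCLike.norm_conj q).trans_le (norm_snd_le_stateNorm p q))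
    have hlin : ‖2 * (α * p * conj q + β * q * conj p)‖ ≤ (‖α‖ + ‖β‖) * stateNorm p q ^ 2 :=
      calc ‖2 * (α * p * conj q + β * q * conj p)‖
          ≤ 2 * (‖α‖ * ‖p‖ * ‖q‖ + ‖β‖ * ‖q‖ * ‖p‖) := by
            rw [norm_mul, Complex.norm_ofNat]
            gcongr
            exact (norm_add_le _ _).trans_eq (by simp only [norm_mul, RCLike.norm_conj])
        _ = (‖α‖ + ‖β‖) * (2 * (‖p‖ * ‖q‖)) := by ring
        _ ≤ (‖α‖ + ‖β‖) * stateNorm p q ^ 2 := by gcongr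
    refine (norm_sub_le _ _).trans ?_
    rw [norm_mul (2 * _), norm_pow, norm_ofReal_stateNorm]
    nlinarith [sq_nonneg (stateNorm p q)]

lemma norm_energyDzBar_le (α β z p q : ℂ) :
    ‖energyDzBar α β z p q‖ ≤
      cubeRatio p q ^ 2 + 3 * ‖z‖ * cubeRatio p q + 1 + 2 * (‖α‖ + ‖β‖) := by
  rw [← RCLike.norm_conj z]
  refine norm_add_mul_add_div_le ?_ ?_ ?_
  · have hquartic : ‖(p * conj p) ^ 2 + (q * conj q) ^ 2‖ ≤ stateNorm p q ^ 4 :=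
      calc ‖(p * conj p) ^ 2 + (q * conj q) ^ 2‖ ≤ (‖p‖ ^ 2) ^ 2 + (‖q‖ ^ 2) ^ 2 :=
            (norm_add_le _ _).trans_eq (by simp only [norm_mul, RCLike.norm_conj, sq])
        _ ≤ (‖p‖ ^ 2 + ‖q‖ ^ 2) ^ 2 := by nlinarith [mul_nonneg (sq_nonneg ‖p‖) (sq_nonneg ‖q‖)]
        _ ≤ (stateNorm p q ^ 2) ^ 2 := by
            gcongr
            exact norm_sq_add_norm_sq_le_stateNorm_sq p q
        _ = stateNorm p q ^ 4 := by ring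
    refine (norm_add_le _ _).trans (add_le_add ?_ hquartic)
    rw [norm_mul, RCLike.norm_conj, sq]
  · refine (norm_add_le _ _).trans ?_
    rw [norm_mul (mixedCubic p q), norm_pow, norm_ofReal_stateNorm]
    nlinarith [norm_skewCubic_mul_le p q, norm_mixedCubic_le p q,
      mul_nonneg (norm_nonneg (p ^ 3 + q ^ 3)) (sq_nonneg (stateNorm p q))]
  · have hskew := norm_skewCubic_mul_linear_le (conj α) (conj β)
      (norm_fst_le_stateNorm p q) (norm_snd_le_stateNorm p q)
    have hlin : ‖conj β * p ^ 2 + conj α * q ^ 2‖ ≤ (‖α‖ + ‖β‖) * stateNorm p q ^ 2 :=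
      calc ‖conj β * p ^ 2 + conj α * q ^ 2‖ ≤ ‖β‖ * ‖p‖ ^ 2 + ‖α‖ * ‖q‖ ^ 2 :=
            (norm_add_le _ _).trans_eq (by simp only [norm_mul, norm_pow, RCLike.norm_conj])
        _ ≤ ‖β‖ * stateNorm p q ^ 2 + ‖α‖ * stateNorm p q ^ 2 := by
            gcongr
            · exact norm_fst_le_stateNorm p q
            · exact norm_snd_le_stateNorm p q
        _ = (‖α‖ + ‖β‖) * stateNorm p q ^ 2 := by ring
    rw [RCLike.norm_conj, RCLike.norm_conj] at hskew
    refine (norm_add_le _ _).trans ?_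
    rw [norm_mul (_ + _) (_ ^ 2), norm_pow, norm_ofReal_stateNorm]
    nlinarith [sq_nonneg (stateNorm p q)]

lemma cubeRatio_le_energy (α β z p q : ℂ) :
    cubeRatio p q ≤
      3 * (‖energy α β z p q‖ / stateNorm p q ^ 2) + 2 * ‖z‖ + 3 + 3 * (‖α‖ + ‖β‖) := by
  have hm := one_le_stateNorm p q
  have hpq := norm_mul_norm_le_stateNorm_sq p q
  have hmm : stateNorm p q ≤ stateNorm p q ^ 2 := by nlinarith
  have hskew : ‖skewCubic p q / (stateNorm p q : ℂ) ^ 2‖ ≤ stateNorm p q ^ 2 := by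
    rw [norm_div, norm_pow, norm_ofReal_stateNorm, div_le_iff₀ (by positivity)]
    nlinarith [norm_skewCubic_le p q, sq_nonneg (stateNorm p q)]
  have hlower : ‖z * p * q + α * q + β * p‖ ≤ (‖z‖ / 2 + ‖α‖ + ‖β‖) * stateNorm p q ^ 2 :=
    calc ‖z * p * q + α * q + β * p‖ ≤ ‖z‖ * ‖p‖ * ‖q‖ + ‖α‖ * ‖q‖ + ‖β‖ * ‖p‖ :=
          norm_add₃_le.trans_eq (by simp only [norm_mul])
      _ ≤ (‖z‖ / 2 + ‖α‖ + ‖β‖) * stateNorm p q ^ 2 := by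
          nlinarith [mul_le_mul_of_nonneg_left hpq (norm_nonneg z),
            mul_le_mul_of_nonneg_left ((norm_snd_le_stateNorm p q).trans hmm) (norm_nonneg α),
            mul_le_mul_of_nonneg_left ((norm_fst_le_stateNorm p q).trans hmm) (norm_nonneg β)]
  have hcube : ‖p ^ 3 + q ^ 3‖ ≤
      3 * (‖energy α β z p q‖ + (‖z‖ / 2 + ‖α‖ + ‖β‖) * stateNorm p q ^ 2
        + stateNorm p q ^ 2) :=
    calc ‖p ^ 3 + q ^ 3‖
        = ‖3 * (energy α β z p q - (z * p * q + α * q + β * p)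
            - skewCubic p q / (stateNorm p q : ℂ) ^ 2)‖ := by unfold energy; ring_nf
      _ ≤ _ := by
          rw [norm_mul, Complex.norm_ofNat]
          gcongr
          exact (norm_sub_le _ _).trans (add_le_add ((norm_sub_le _ _).trans (by gcongr)) hskew)
  rw [cubeRatio, div_le_iff₀ (by positivity), add_mul, add_mul, add_mul, mul_assoc 3,
    div_mul_cancel₀ _ (by positivity)]
  nlinarith [mul_nonneg (norm_nonneg z) (sq_nonneg (stateNorm p q))]

lemma cubeRatio_le_of_norm_energy_le {α β z p q : ℂ} {w : ℝ} (hw : 0 ≤ w)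
    (h : ‖energy α β z p q‖ ≤ w ^ 3) :
    cubeRatio p q ≤ 3 * w + 2 * ‖z‖ + 3 + 3 * (‖α‖ + ‖β‖) := by
  have hm := stateNorm_pos p q
  rcases le_total (stateNorm p q) w with hmw | hwm
  · linarith [cubeRatio_le_stateNorm p q, norm_nonneg z, norm_nonneg α, norm_nonneg β]
  · have : ‖energy α β z p q‖ / stateNorm p q ^ 2 ≤ w := by
      rw [div_le_iff₀ (by positivity)]
      nlinarith [pow_le_pow_left₀ hw hwm 2]
    linarith [cubeRatio_le_energy α β z p q]

lemma norm_energyDz_add_norm_energyDzBar_lt {α β z p q : ℂ} {M l : ℝ}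
    (hM : 20 + 5 * (‖α‖ + ‖β‖) ≤ M) (hl : 1 ≤ l) (hz : ‖z‖ ≤ l)
    (h : ‖energy α β z p q‖ ≤ (M * l) ^ 3) :
    ‖energyDz α β z p q‖ + ‖energyDzBar α β z p q‖ < 3 * (M * l) ^ 2 * M := by
  have hc : 0 ≤ ‖α‖ + ‖β‖ := by positivity
  have hM20 : 20 ≤ M := by linarith
  have hσ : cubeRatio p q ≤ 4 * (M * l) := by
    nlinarith [cubeRatio_le_of_norm_energy_le (by positivity) h]
  have hσsq : cubeRatio p q ^ 2 ≤ (4 * (M * l)) ^ 2 :=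
    pow_le_pow_left₀ (cubeRatio_nonneg p q) hσ 2
  have hzσ : ‖z‖ * cubeRatio p q ≤ l * (4 * (M * l)) :=
    mul_le_mul hz hσ (cubeRatio_nonneg p q) (by linarith)
  have hMl : M ≤ M * l ^ 2 :=
    le_mul_of_one_le_right (by linarith) (one_le_pow₀ hl)
  have hMl2 : 20 * (M * l ^ 2) ≤ M ^ 2 * l ^ 2 := by nlinarith [sq_nonneg l]
  have hMl3 : 20 * (M ^ 2 * l ^ 2) ≤ M ^ 3 * l ^ 2 := by nlinarith [sq_nonneg (M * l)]
  nlinarith [norm_energyDz_le α β z p q, norm_energyDzBar_le α β z p q]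

section AlongCurve

variable {α β e : ℂ} {γ x y : ℝ → ℂ} {s : ℝ}

lemma hasDerivAt_energy_comp (hγ : HasDerivAt γ e s)
    (hx : HasDerivAt x (e * (-(y s) ^ 2 - γ s * x s - α)) s)
    (hy : HasDerivAt y (e * ((x s) ^ 2 + γ s * y s + β)) s) :
    HasDerivAt (fun t => energy α β (γ t) (x t) (y t))
      (e * energyDz α β (γ s) (x s) (y s) + conj e * energyDzBar α β (γ s) (x s) (y s)) s := by
  have hm : x s * conj (x s) + y s * conj (y s) + 1 ≠ 0 := by
    rw [← ofReal_stateNorm_sq]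
    exact_mod_cast (pow_pos (stateNorm_pos _ _) 2).ne'
  have hx' := hx.star
  have hy' := hy.star
  have hcorrection := (((hx.pow 2).mul hy').sub ((hy.pow 2).mul hx')).div
    (((hx.mul hx').add (hy.mul hy')).add_const 1) hm
  have hpolynomial := (((((hx.pow 3).add (hy.pow 3)).div_const 3).add ((hγ.mul hx).mul hy)).add
    (hy.const_mul α)).add (hx.const_mul β)
  refine ((hpolynomial.add hcorrection).congr_deriv ?_).congr_of_eventuallyEq
    (Eventually.of_forall fun t => ?_)
  · simp only [energyDz, energyDzBar, skewCubic, mixedCubic,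
      show 4 = 2 * 2 from rfl, pow_mul, ofReal_stateNorm_sq]
    simp only [Pi.add_apply, Pi.mul_apply, Pi.pow_apply, ← starRingEnd_apply,
      Pi.sub_apply] at hm ⊢
    simp only [map_add, map_sub, map_mul, map_pow, map_neg, Complex.conj_conj]
    field_simp
    ring
  · simp only [energy, skewCubic, ofReal_stateNorm_sq, Pi.add_apply, Pi.mul_apply, Pi.pow_apply,
      Pi.div_apply, ← starRingEnd_apply, Pi.sub_apply]

lemma hasDerivAt_stateNorm_comp
    (hx : HasDerivAt x (e * (-(y s) ^ 2 - γ s * x s - α)) s)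
    (hy : HasDerivAt y (e * ((x s) ^ 2 + γ s * y s + β)) s) :
    HasDerivAt (fun t => stateNorm (x t) (y t))
      ((e * (skewCubic (x s) (y s) + γ s * (y s * conj (y s) - x s * conj (x s))
        + (β * conj (y s) - α * conj (x s)))).re / stateNorm (x s) (y s)) s := by
  have hpos : ‖x s‖ ^ 2 + ‖y s‖ ^ 2 + 1 ≠ 0 := by positivity
  refine (((hx.norm_sq.add hy.norm_sq).add_const 1).sqrt hpos).congr_deriv ?_
  rw [Complex.inner, Complex.inner, ← mul_add, ← Complex.add_re, stateNorm,
    mul_div_mul_left _ _ two_ne_zero, skewCubic]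
  congr 2
  ring

end AlongCurve

lemma abs_deriv_stateNorm_le (α β e z p q : ℂ) :
    |(e * (skewCubic p q + z * (q * conj q - p * conj p) + (β * conj q - α * conj p))).re
      / stateNorm p q| ≤ ‖e‖ * (stateNorm p q ^ 2 + ‖z‖ * stateNorm p q + (‖α‖ + ‖β‖)) := by
  have hm := stateNorm_pos p q
  have hquad : ‖q * conj q - p * conj p‖ ≤ stateNorm p q ^ 2 :=
    calc ‖q * conj q - p * conj p‖ ≤ ‖q‖ ^ 2 + ‖p‖ ^ 2 :=
          (norm_sub_le _ _).trans_eq (by simp only [norm_mul, RCLike.norm_conj, sq])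
      _ ≤ stateNorm p q ^ 2 := by linarith [norm_sq_add_norm_sq_le_stateNorm_sq p q]
  have hlin : ‖β * conj q - α * conj p‖ ≤ (‖α‖ + ‖β‖) * stateNorm p q :=
    calc ‖β * conj q - α * conj p‖ ≤ ‖β‖ * ‖q‖ + ‖α‖ * ‖p‖ :=
          (norm_sub_le _ _).trans_eq (by simp only [norm_mul, RCLike.norm_conj])
      _ ≤ ‖β‖ * stateNorm p q + ‖α‖ * stateNorm p q := by
          gcongr
          · exact norm_snd_le_stateNorm p q
          · exact norm_fst_le_stateNorm p q
      _ = (‖α‖ + ‖β‖) * stateNorm p q := by ring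
  rw [abs_div, abs_of_pos hm, div_le_iff₀ hm]
  calc _ ≤ ‖e‖ * (stateNorm p q ^ 3 + ‖z‖ * stateNorm p q ^ 2
          + (‖α‖ + ‖β‖) * stateNorm p q) := by
        refine (Complex.abs_re_le_norm _).trans ?_
        rw [norm_mul]
        refine mul_le_mul_of_nonneg_left (norm_add₃_le.trans ?_) (norm_nonneg e)
        rw [norm_mul]
        gcongr
        exact norm_skewCubic_le p q
    _ = _ := by ring

lemma norm_sq_comparable {p q : ℂ} (hm : 10 ≤ stateNorm p q)
    (h : 32 * cubeRatio p q ≤ stateNorm p q) :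
    stateNorm p q ^ 2 ≤ 4 * ‖q‖ ^ 2 ∧ ‖p‖ ^ 2 ≤ 5 / 4 * ‖q‖ ^ 2 ∧ 3 / 4 * ‖q‖ ^ 2 ≤ ‖p‖ ^ 2 := by
  have hsq := stateNorm_sq p q
  have hcube : 32 * ‖p ^ 3 + q ^ 3‖ ≤ stateNorm p q ^ 3 := by
    rw [cubeRatio, ← mul_div_assoc, div_le_iff₀ (by positivity)] at h
    linarith
  have hgap : (‖p‖ ^ 2 - ‖q‖ ^ 2) ^ 2 ≤ (stateNorm p q ^ 2 / 16) ^ 2 := by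
    have hle := sq_sub_sq_mul_le_norm_cube_add_cube_sq p q
    have hcube2 := pow_le_pow_left₀ (by positivity) hcube 2
    have : ((‖p‖ ^ 2 - ‖q‖ ^ 2) ^ 2 * 512) * stateNorm p q ^ 2
        ≤ stateNorm p q ^ 4 * stateNorm p q ^ 2 := by
      nlinarith [mul_le_mul_of_nonneg_left
        (show stateNorm p q ^ 2 / 2 ≤ ‖p‖ ^ 2 + ‖q‖ ^ 2 by nlinarith)
        (sq_nonneg (‖p‖ ^ 2 - ‖q‖ ^ 2))]
    nlinarith [le_of_mul_le_mul_right this (by positivity)]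
  obtain ⟨hlo, hhi⟩ := abs_le_of_sq_le_sq' hgap (by positivity)
  have : 100 ≤ stateNorm p q ^ 2 := by nlinarith
  exact ⟨by linarith, by linarith, by linarith⟩

lemma norm_neg_sq_add_div_sq_mem_Icc {p q w : ℂ} (hq : q ≠ 0)
    (hlo : 3 / 4 * ‖q‖ ^ 2 ≤ ‖p‖ ^ 2) (hhi : ‖p‖ ^ 2 ≤ 5 / 4 * ‖q‖ ^ 2)
    (hw : ‖w‖ ≤ 1 / 4 * ‖q‖ ^ 2) :
    ‖-(p ^ 2 + w) / q ^ 2‖ ∈ Set.Icc (1 / 2) (3 / 2) := by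
  have hq : 0 < ‖q‖ ^ 2 := by positivity
  rw [norm_div, norm_neg, norm_pow q, Set.mem_Icc, le_div_iff₀ hq, div_le_iff₀ hq]
  have hadd := norm_add_le (p ^ 2) w
  have hsub := norm_sub_le (p ^ 2 + w) w
  rw [add_sub_cancel_right] at hsub
  rw [norm_pow] at hadd hsub
  constructor <;> linarith

/-- The constant `K` such that, given the energy bound `(M (1 + |z|))³`, the solution behaves as
near a pole wherever `|z| ≤ 3r` and `stateNorm ≥ K r`. -/
noncomputable def polarThreshold (α β : ℂ) (M : ℝ) : ℝ :=
  100 + 64 * ‖β‖ + 32 * (12 * M + 9 + 3 * (‖α‖ + ‖β‖))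

section PolarThreshold

variable {α β z p q : ℂ} {M r : ℝ}

lemma one_hundred_add_le_polarThreshold (α β : ℂ) (hM : 0 ≤ M) :
    100 + 64 * ‖β‖ ≤ polarThreshold α β M :=
  le_add_of_nonneg_right (by positivity)

lemma norm_sq_comparable_of_polarThreshold_le (hM : 0 ≤ M) (hr : 1 ≤ r) (hz : ‖z‖ ≤ 3 * r)
    (henergy : ‖energy α β z p q‖ ≤ (M * (1 + ‖z‖)) ^ 3)
    (hm : polarThreshold α β M * r ≤ stateNorm p q) :
    stateNorm p q ^ 2 ≤ 4 * ‖q‖ ^ 2 ∧ ‖p‖ ^ 2 ≤ 5 / 4 * ‖q‖ ^ 2 ∧ 3 / 4 * ‖q‖ ^ 2 ≤ ‖p‖ ^ 2 := by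
  have hc : 0 ≤ ‖α‖ + ‖β‖ := by positivity
  have hβ := norm_nonneg β
  have hthreshold := one_hundred_add_le_polarThreshold α β hM
  have hcube := cubeRatio_le_of_norm_energy_le (by positivity) henergy
  have hMz : M * (1 + ‖z‖) ≤ M * (4 * r) := by gcongr; linarith
  refine norm_sq_comparable (by nlinarith) (le_trans ?_ hm)
  calc 32 * cubeRatio p q ≤ 32 * ((12 * M + 9 + 3 * (‖α‖ + ‖β‖)) * r) := by nlinarith
    _ ≤ polarThreshold α β M * r := by unfold polarThreshold; nlinarith

lemma stateNorm_le_two_mul_norm_of_polarThreshold_le (hM : 0 ≤ M) (hr : 1 ≤ r)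
    (hz : ‖z‖ ≤ 3 * r) (henergy : ‖energy α β z p q‖ ≤ (M * (1 + ‖z‖)) ^ 3)
    (hm : polarThreshold α β M * r ≤ stateNorm p q) : stateNorm p q ≤ 2 * ‖q‖ := by
  obtain ⟨h, -, -⟩ := norm_sq_comparable_of_polarThreshold_le hM hr hz henergy hm
  exact le_of_sq_le_sq (by linarith) (by positivity)

lemma norm_deriv_inv_mem_Icc_of_polarThreshold_le (hM : 0 ≤ M) (hr : 1 ≤ r)
    (hz : ‖z‖ ≤ 3 * r) (henergy : ‖energy α β z p q‖ ≤ (M * (1 + ‖z‖)) ^ 3)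
    (hm : polarThreshold α β M * r ≤ stateNorm p q) :
    ‖-(p ^ 2 + z * q + β) / q ^ 2‖ ∈ Set.Icc (1 / 2) (3 / 2) := by
  obtain ⟨-, hhi, hlo⟩ := norm_sq_comparable_of_polarThreshold_le hM hr hz henergy hm
  have hmq := stateNorm_le_two_mul_norm_of_polarThreshold_le hM hr hz henergy hm
  have hβ := norm_nonneg β
  have hthreshold : (100 + 64 * ‖β‖) * r ≤ 2 * ‖q‖ :=
    (mul_le_mul_of_nonneg_right (one_hundred_add_le_polarThreshold α β hM)
      (zero_le_one.trans hr)).trans (hm.trans hmq)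
  have hq : 50 * r + 32 * ‖β‖ ≤ ‖q‖ := by nlinarith
  rw [add_assoc]
  refine norm_neg_sq_add_div_sq_mem_Icc (norm_pos_iff.1 (by linarith)) hlo hhi ?_
  calc ‖z * q + β‖ ≤ 3 * r * ‖q‖ + ‖β‖ := by
        refine (norm_add_le _ _).trans ?_
        rw [norm_mul]
        gcongr
    _ ≤ 1 / 4 * ‖q‖ ^ 2 := by nlinarith

end PolarThreshold

end PointwiseAlgebra

section General

open scoped Convex
open MeasureTheory Module

lemma exists_mem_nhds_disjoint_segment {E : Type*} [AddCommGroup E] [Module ℝ E]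
    [TopologicalSpace E] [ContinuousAdd E] [ContinuousSMul ℝ E] (hE : 1 < Module.rank ℝ E)
    {S : Set E} (hS : S.Countable) {a z : E} (hz : z ∉ S) {U : Set E} (hU : U ∈ 𝓝 a) :
    ∃ b ∈ U, Disjoint [z -[ℝ] b] S := by
  rcases eq_or_ne z a with rfl | hza
  · refine ⟨z, mem_of_mem_nhds hU, ?_⟩
    simpa only [segment_same, Set.disjoint_singleton_left] using hz
  obtain ⟨y, hy⟩ := exists_linearIndependent_pair_of_one_lt_rank hE (sub_ne_zero.2 hza)
  -- Distinct segments of the pencil meet only at `z`, so only countably many can meet `S`.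
  have hcountable : {t : ℝ | ([z -[ℝ] a + t • y] ∩ S).Nonempty}.Countable := by
    refine Set.countable_ofPred_nonempty_of_disjoint (fun t t' htt' => ?_)
      (fun t => Set.inter_subset_right) hS
    have hinter := segment_inter_eq_endpoint_of_linearIndependent_of_ne hy htt' a
    rw [add_sub_cancel] at hinter
    refine Set.disjoint_left.2 fun x hx hx' => hz ?_
    have hxz : x ∈ ({z} : Set E) := hinter ▸ ⟨hx'.1, hx.1⟩
    exact hxz ▸ hx.2
  have hnhds : (fun t : ℝ => a + t • y) ⁻¹' U ∈ 𝓝 (0 : ℝ) :=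
    (show Continuous fun t : ℝ => a + t • y by fun_prop).continuousAt.preimage_mem_nhds
      (by simpa only [zero_smul, add_zero] using hU)
  obtain ⟨t, htU, ht⟩ := (hcountable.dense_compl ℝ).inter_nhds_nonempty hnhds
  exact ⟨a + t • y, ht, Set.disjoint_iff_inter_eq_empty.2 (Set.not_nonempty_iff_eq_empty.1 htU)⟩

lemma card_le_of_pairwise_le_dist {E : Type*} [NormedAddCommGroup E] [NormedSpace ℝ E]
    [FiniteDimensional ℝ E] {s : Finset E} {r d : ℝ} (hr : 0 ≤ r) (hd : 0 < d)
    (hs : ∀ x ∈ s, ‖x‖ ≤ r) (hsep : (s : Set E).Pairwise fun x y => d ≤ dist x y) :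
    (s.card : ℝ) ≤ ((2 * r + d) / d) ^ finrank ℝ E := by
  borelize E
  let μ : Measure E := Measure.addHaar
  have hball (x : E) {t : ℝ} (ht : 0 < t) :
      μ.real (Metric.ball x t) = t ^ finrank ℝ E * μ.real (Metric.ball 0 1) := by
    rw [measureReal_def, μ.addHaar_ball_of_pos x ht, ENNReal.toReal_mul,
      ENNReal.toReal_ofReal (by positivity), ← measureReal_def]
  have hunit : 0 < μ.real (Metric.ball (0 : E) 1) :=
    ENNReal.toReal_pos (Metric.measure_ball_pos μ _ one_pos).ne' measure_ball_lt_top.ne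
  have hvolume : (s.card * (d / 2) ^ finrank ℝ E) * μ.real (Metric.ball 0 1) ≤
      (r + d / 2) ^ finrank ℝ E * μ.real (Metric.ball 0 1) :=
    calc (s.card * (d / 2) ^ finrank ℝ E) * μ.real (Metric.ball 0 1)
        = ∑ x ∈ s, μ.real (Metric.ball x (d / 2)) := by
          simp only [hball _ (half_pos hd), Finset.sum_const, nsmul_eq_mul, mul_assoc]
      _ = μ.real (⋃ x ∈ s, Metric.ball x (d / 2)) := by
          refine (measureReal_biUnion_finset (fun x hx y hy hxy => ?_)
            fun x _ => measurableSet_ball).symm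
          exact Metric.ball_disjoint_ball (by linarith [hsep hx hy hxy])
      _ ≤ μ.real (Metric.ball 0 (r + d / 2)) := by
          refine measureReal_mono (Set.iUnion₂_subset fun x hx => Metric.ball_subset_ball' ?_)
          rw [dist_zero_right]
          linarith [hs x hx]
      _ = (r + d / 2) ^ finrank ℝ E * μ.real (Metric.ball 0 1) := hball 0 (by positivity)
  calc (s.card : ℝ) ≤ (r + d / 2) ^ finrank ℝ E / (d / 2) ^ finrank ℝ E :=
        (le_div_iff₀ (by positivity)).2 (le_of_mul_le_mul_right hvolume hunit)
    _ = ((2 * r + d) / d) ^ finrank ℝ E := by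
        rw [← div_pow]
        congr 1
        field_simp

lemma finite_and_ncard_le_of_pairwise_le_dist {E : Type*} [NormedAddCommGroup E]
    [NormedSpace ℝ E] [FiniteDimensional ℝ E] {S : Set E} {r d : ℝ} (hr : 0 ≤ r) (hd : 0 < d)
    (hS : ∀ x ∈ S, ‖x‖ ≤ r) (hsep : S.Pairwise fun x y => d ≤ dist x y) :
    S.Finite ∧ (S.ncard : ℝ) ≤ ((2 * r + d) / d) ^ finrank ℝ E := by
  have hcard {s : Finset E} (hs : (s : Set E) ⊆ S) :=
    card_le_of_pairwise_le_dist hr hd (fun x hx => hS x (hs hx)) (hsep.mono hs)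
  have hfinite : S.Finite := by
    by_contra hinfinite
    obtain ⟨n, hn⟩ := exists_nat_gt (((2 * r + d) / d) ^ finrank ℝ E)
    obtain ⟨s, hs, rfl⟩ := Set.Infinite.exists_subset_card_eq hinfinite n
    exact hn.not_ge (hcard hs)
  refine ⟨hfinite, ?_⟩
  rw [Set.ncard_eq_toFinset_card S hfinite]
  exact hcard (by rw [hfinite.coe_toFinset])

lemma norm_deriv_sub_mul_norm_sub_le {f : ℂ → ℂ} {c z w : ℂ} {R M ρ : ℝ} (hR : 0 < R)
    (hρ : ρ ≤ 1) (hf : DifferentiableOn ℂ f (Metric.ball c R))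
    (hM : ∀ z ∈ Metric.ball c R, ‖deriv f z‖ ≤ M)
    (hz : z ∈ Metric.ball c (ρ * R)) (hw : w ∈ Metric.ball c (ρ * R)) :
    (‖deriv f c‖ - 2 * M * ρ) * ‖z - w‖ ≤ ‖f z - f w‖ := by
  have hM0 : 0 ≤ M := (norm_nonneg _).trans (hM c (Metric.mem_ball_self hR))
  have hsub : Metric.ball c (ρ * R) ⊆ Metric.ball c R :=
    Metric.ball_subset_ball (mul_le_of_le_one_left hR.le hρ)
  have hderiv : ∀ x ∈ Metric.ball c (ρ * R), ‖deriv f x - deriv f c‖ ≤ 2 * M * ρ := by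
    intro x hx
    have hmaps : Set.MapsTo (deriv f) (Metric.ball c R)
        (Metric.closedBall (deriv f c) (2 * M)) := fun y hy => by
      rw [mem_closedBall_iff_norm]
      linarith [norm_sub_le (deriv f y) (deriv f c), hM y hy, hM c (Metric.mem_ball_self hR)]
    have hschwarz := Complex.dist_le_div_mul_dist_of_mapsTo_ball
      (hf.deriv Metric.isOpen_ball) hmaps (hsub hx)
    rw [dist_eq_norm] at hschwarz
    calc ‖deriv f x - deriv f c‖ ≤ 2 * M / R * dist x c := hschwarz
      _ ≤ 2 * M / R * (ρ * R) := by gcongr; exact (Metric.mem_ball.1 hx).le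
      _ = 2 * M * ρ := by field_simp
  have hlinear := (convex_ball c (ρ * R)).norm_image_sub_le_of_norm_hasDerivWithin_le
    (f := fun x => f x - deriv f c * x) (f' := fun x => deriv f x - deriv f c)
    (fun x hx => by
      have hfx := (hf.differentiableAt (Metric.isOpen_ball.mem_nhds (hsub hx))).hasDerivAt
      simpa only [mul_one] using
        (hfx.fun_sub ((hasDerivAt_id' x).const_mul (deriv f c))).hasDerivWithinAt) hderiv hw hz
  have htriangle : ‖deriv f c‖ * ‖z - w‖ ≤
      ‖f z - deriv f c * z - (f w - deriv f c * w)‖ + ‖f z - f w‖ := by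
    rw [← norm_mul, ← norm_neg]
    refine (norm_sub_le _ (f z - f w)).trans' (le_of_eq ?_)
    congr 1
    ring
  linarith

lemma poleMult_le_of_norm_le {f : ℂ → ℂ} {z : ℂ} {k : ℕ} {B : ℝ} (hf : MeromorphicAt f z)
    (hB : ∀ᶠ w in 𝓝[≠] z, ‖(w - z) ^ k * f w‖ ≤ B) : poleMult f z ≤ k := by
  have hmeromorphic : MeromorphicAt (fun w => (w - z) ^ k * f w) z :=
    (MeromorphicAt.fun_pow (by fun_prop) k).fun_mul hf
  refine Nat.sInf_le ((tendsto_nhds_iff_meromorphicOrderAt_nonneg hmeromorphic).2 ?_)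
  by_contra! horder
  obtain ⟨w, hw, hw'⟩ := (hB.and ((tendsto_norm_atTop_iff_cobounded.2
    ((tendsto_cobounded_iff_meromorphicOrderAt_neg hmeromorphic).2 horder)).eventually_gt_atTop
      B)).exists
  exact hw'.not_ge hw

lemma poleMult_eq_zero {f : ℂ → ℂ} {z : ℂ} (hf : ContinuousAt f z) : poleMult f z = 0 :=
  Nat.le_zero.1 <| Nat.sInf_le
    ⟨f z, by simpa only [pow_zero, one_mul] using hf.tendsto.mono_left nhdsWithin_le_nhds⟩

section Counting

variable {f : ℂ → ℂ} {S : Set ℂ}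

lemma nPoles_nonneg (f : ℂ → ℂ) (t : ℝ) : 0 ≤ nPoles f t :=
  finsum_nonneg fun _ => finsum_nonneg fun _ => Nat.cast_nonneg _

lemma nPoles_eq_sum {t : ℝ} (hS : ∀ z ∉ S, poleMult f z = 0)
    (hfinite : (S ∩ Metric.closedBall 0 t).Finite) :
    nPoles f t = ∑ z ∈ hfinite.toFinset, (poleMult f z : ℝ) := by
  refine finsum_mem_eq_sum_of_inter_support_eq _ (Set.ext fun z => ?_)
  rw [hfinite.coe_toFinset]
  refine ⟨fun ⟨hz, hf⟩ => ⟨⟨?_, hz⟩, hf⟩, fun ⟨hz, hf⟩ => ⟨hz.2, hf⟩⟩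
  by_contra hzS
  exact hf (by simp only [hS z hzS, Nat.cast_zero])

lemma nPoles_le_mul_ncard {t : ℝ} {k : ℕ} (hS : ∀ z ∉ S, poleMult f z = 0)
    (hfinite : (S ∩ Metric.closedBall 0 t).Finite) (hk : ∀ z, poleMult f z ≤ k) :
    nPoles f t ≤ (S ∩ Metric.closedBall 0 t).ncard * k := by
  rw [nPoles_eq_sum hS hfinite, Set.ncard_eq_toFinset_card _ hfinite, ← nsmul_eq_mul]
  exact Finset.sum_le_card_nsmul _ _ _ fun z _ => Nat.cast_le.2 (hk z)

lemma nPoles_mono (hS : ∀ z ∉ S, poleMult f z = 0)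
    (hfinite : ∀ t, (S ∩ Metric.closedBall 0 t).Finite) : Monotone (nPoles f) := by
  intro s t hst
  rw [nPoles_eq_sum hS (hfinite s), nPoles_eq_sum hS (hfinite t)]
  refine Finset.sum_le_sum_of_subset_of_nonneg ?_ fun _ _ _ => Nat.cast_nonneg _
  exact Set.Finite.toFinset_subset_toFinset.2
    (Set.inter_subset_inter_right _ (Metric.closedBall_subset_closedBall hst))

lemma exists_nPoles_eq_nPoles_zero (hS : ∀ z ∉ S, poleMult f z = 0)
    (hfinite : ∀ t, (S ∩ Metric.closedBall 0 t).Finite) :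
    ∃ ε ∈ Set.Ioc (0 : ℝ) 1, ∀ t ∈ Set.Ioo 0 ε, nPoles f t = nPoles f 0 := by
  have hnhds : ((S ∩ Metric.closedBall 0 1) \ {0})ᶜ ∈ 𝓝 (0 : ℂ) :=
    ((hfinite 1).subset Set.sdiff_subset).isClosed.isOpen_compl.mem_nhds fun h => h.2 rfl
  obtain ⟨ε, hε, hball⟩ := Metric.mem_nhds_iff.1 hnhds
  refine ⟨min ε 1, ⟨lt_min hε one_pos, min_le_right _ _⟩, fun t ⟨ht0, ht⟩ => ?_⟩
  rw [nPoles_eq_sum hS (hfinite t), nPoles_eq_sum hS (hfinite 0)]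
  congr 1
  ext z
  simp only [Set.Finite.mem_toFinset, Set.mem_inter_iff, mem_closedBall_zero_iff]
  refine and_congr_right fun hzS => ⟨fun hz => ?_, fun hz => hz.trans ht0.le⟩
  by_contra! hz0
  have hzt : ‖z‖ < min ε 1 := hz.trans_lt ht
  exact hball (mem_ball_zero_iff.2 (hzt.trans_le (min_le_left _ _)))
    ⟨⟨hzS, mem_closedBall_zero_iff.2 (hzt.trans_le (min_le_right _ _)).le⟩, norm_pos_iff.1 hz0⟩

lemma exists_nPoles_sub_le {k : ℕ} {C : ℝ} (hS : ∀ z ∉ S, poleMult f z = 0)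
    (hfinite : ∀ t, (S ∩ Metric.closedBall 0 t).Finite)
    (hC : ∀ t, 1 ≤ t → nPoles f t ≤ C * t ^ k) :
    ∃ D, 0 ≤ D ∧ ∀ t, 0 < t → nPoles f t - nPoles f 0 ≤ D * t ^ k := by
  obtain ⟨ε, ⟨hε0, hε1⟩, hε⟩ := exists_nPoles_eq_nPoles_zero hS hfinite
  have hC0 : 0 ≤ C := by simpa using (nPoles_nonneg f 1).trans (hC 1 le_rfl)
  refine ⟨C / ε ^ k, by positivity, fun t ht => ?_⟩
  rcases lt_or_ge t ε with htε | htε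
  · rw [hε t ⟨ht, htε⟩, sub_self]
    positivity
  rw [sub_le_iff_le_add]
  refine le_add_of_le_of_nonneg ?_ (nPoles_nonneg f 0)
  rw [div_mul_eq_mul_div, le_div_iff₀ (by positivity)]
  rcases le_total 1 t with ht1 | ht1
  · calc nPoles f t * ε ^ k ≤ nPoles f t :=
          mul_le_of_le_one_right (nPoles_nonneg f t) (pow_le_one₀ hε0.le hε1)
      _ ≤ C * t ^ k := hC t ht1
  · have hnt : nPoles f t ≤ C := by
      simpa using (nPoles_mono hS hfinite ht1).trans (hC 1 le_rfl)
    gcongr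

lemma exists_countingN_le {k : ℕ} {C : ℝ} (hS : ∀ z ∉ S, poleMult f z = 0)
    (hfinite : ∀ t, (S ∩ Metric.closedBall 0 t).Finite)
    (hC : ∀ t, 1 ≤ t → nPoles f t ≤ C * t ^ (k + 1)) :
    ∃ D, ∀ r, 1 ≤ r → countingN f r ≤ D * r ^ (k + 1) := by
  obtain ⟨D, hD0, hD⟩ := exists_nPoles_sub_le hS hfinite hC
  refine ⟨D + nPoles f 0, fun r hr => ?_⟩
  have hr0 : 0 ≤ r := zero_le_one.trans hr
  have hintegral : ∫ t in (0 : ℝ)..r, (nPoles f t - nPoles f 0) / t ≤ D * r ^ k * r := by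
    refine (le_abs_self _).trans ?_
    have hbound : ∀ t ∈ Set.uIoc 0 r, ‖(nPoles f t - nPoles f 0) / t‖ ≤ D * r ^ k := by
      intro t ht
      rw [Set.uIoc_of_le hr0] at ht
      rw [Real.norm_of_nonneg (div_nonneg (sub_nonneg.2 (nPoles_mono hS hfinite ht.1.le)) ht.1.le),
        div_le_iff₀ ht.1]
      calc nPoles f t - nPoles f 0 ≤ D * t ^ k * t := by
            simpa only [pow_succ, mul_assoc] using hD t ht.1
        _ ≤ D * r ^ k * t := by gcongr; exacts [ht.1.le, ht.1.le, ht.2]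
    simpa only [Real.norm_eq_abs, sub_zero, abs_of_nonneg hr0] using
      intervalIntegral.norm_integral_le_of_norm_le_const hbound
  have hlog : nPoles f 0 * Real.log r ≤ nPoles f 0 * r ^ (k + 1) := by
    refine mul_le_mul_of_nonneg_left ?_ (nPoles_nonneg f 0)
    exact (Real.log_le_self hr0).trans (le_self_pow₀ hr k.succ_ne_zero)
  calc countingN f r ≤ D * r ^ k * r + nPoles f 0 * r ^ (k + 1) := add_le_add hintegral hlog
    _ = (D + nPoles f 0) * r ^ (k + 1) := by ring

end Counting

section Proximity

open scoped Real

lemma integral_log_sub_log_sub_le {L y : ℝ} (hy : y ∈ Set.Icc 0 L) :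
    ∫ x in (0 : ℝ)..L, (Real.log L - Real.log (x - y)) ≤ 2 * L := by
  have hL : 0 ≤ L := hy.1.trans hy.2
  have hconvex := Real.convexOn_mul_log.2 (Set.mem_Ici.2 (sub_nonneg.2 hy.2))
    (Set.mem_Ici.2 hy.1) one_half_pos.le one_half_pos.le (add_halves (1 : ℝ))
  have hhalf : L * Real.log (L / 2) = L * Real.log L - L * Real.log 2 := by
    rcases hL.eq_or_lt with rfl | hL
    · simp only [zero_mul, sub_zero]
    · rw [Real.log_div hL.ne' two_ne_zero, mul_sub]
  rw [intervalIntegral.integral_sub (by simp)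
      (by simpa using (intervalIntegral.intervalIntegrable_log'
        (a := -y) (b := L - y)).comp_sub_right y),
    intervalIntegral.integral_const, intervalIntegral.integral_comp_sub_right, integral_log,
    smul_eq_mul, zero_sub, Real.log_neg_eq_log]
  simp only [smul_eq_mul, show 1 / 2 * (L - y) + 1 / 2 * y = L / 2 by ring] at hconvex
  have hlog : L * Real.log 2 ≤ L * 1 := by
    gcongr
    linarith [Real.log_two_lt_d9]
  linarith

lemma proximity_eq_circleAverage (f : ℂ → ℂ) (r : ℝ) :
    proximity f r = Real.circleAverage (fun z => Real.posLog ‖f z‖) 0 r := by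
  simp only [proximity, Real.circleAverage, circleMap_zero, smul_eq_mul]
  rfl

lemma proximity_le_of_posLog_le {f : ℂ → ℂ} {r B : ℝ} {s : Finset ℝ}
    (hs : ∀ y ∈ s, y ∈ Set.Icc 0 (2 * π))
    (h : ∀ᵐ x, x ∈ Set.Ioc 0 (2 * π) → Real.posLog ‖f (circleMap 0 r x)‖ ≤
      B + ∑ y ∈ s, (Real.log (2 * π) - Real.log (x - y))) :
    proximity f r ≤ B + 2 * s.card := by
  have hlog (y : ℝ) : IntervalIntegrable (fun x => Real.log (2 * π) - Real.log (x - y))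
      volume 0 (2 * π) := by
    refine intervalIntegrable_const.sub ?_
    simpa using (intervalIntegral.intervalIntegrable_log'
      (a := -y) (b := 2 * π - y)).comp_sub_right y
  have hsum : IntervalIntegrable
      (fun x => ∑ y ∈ s, (Real.log (2 * π) - Real.log (x - y))) volume 0 (2 * π) := by
    simpa only [Finset.sum_fn] using IntervalIntegrable.sum s fun y _ => hlog y
  have hmono : ∫ x in (0 : ℝ)..2 * π, Real.posLog ‖f (circleMap 0 r x)‖ ≤
      ∫ x in (0 : ℝ)..2 * π, (B + ∑ y ∈ s, (Real.log (2 * π) - Real.log (x - y))) := by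
    rw [intervalIntegral.integral_of_le Real.two_pi_pos.le,
      intervalIntegral.integral_of_le Real.two_pi_pos.le]
    exact integral_mono_of_nonneg (.of_forall fun _ => Real.posLog_nonneg)
      (intervalIntegrable_const.add hsum).1 ((ae_restrict_iff' measurableSet_Ioc).2 h)
  rw [proximity_eq_circleAverage, Real.circleAverage, smul_eq_mul,
    inv_mul_le_iff₀ Real.two_pi_pos]
  calc ∫ x in (0 : ℝ)..2 * π, Real.posLog ‖f (circleMap 0 r x)‖
      ≤ 2 * π * B + ∑ y ∈ s, ∫ x in (0 : ℝ)..2 * π, (Real.log (2 * π) - Real.log (x - y)) := by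
        refine hmono.trans_eq ?_
        rw [intervalIntegral.integral_add intervalIntegrable_const hsum,
          intervalIntegral.integral_const, sub_zero, smul_eq_mul,
          intervalIntegral.integral_finsetSum fun y _ => hlog y]
    _ ≤ 2 * π * B + s.card • (2 * (2 * π)) := by
        gcongr
        exact Finset.sum_le_card_nsmul _ _ _ fun y hy => integral_log_sub_log_sub_le (hs y hy)
    _ = 2 * π * (B + 2 * s.card) := by rw [nsmul_eq_mul]; ring

lemma mul_abs_sub_le_norm_circleMap_sub (c : ℂ) {r x y : ℝ} (hr : 0 ≤ r) (hxy : |x - y| ≤ π) :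
    2 / π * r * |x - y| ≤ ‖circleMap c r x - circleMap c r y‖ := by
  have hsin : 2 / π * |(x - y) / 2| ≤ |Real.sin ((x - y) / 2)| :=
    Real.mul_abs_le_abs_sin (by rw [abs_div, abs_two]; linarith)
  have hchord : circleMap c r x - circleMap c r y =
      r * (Complex.exp (y * Complex.I) * (Complex.exp (Complex.I * (x - y : ℝ)) - 1)) := by
    simp only [circleMap, mul_sub, ← Complex.exp_add, mul_one, add_sub_add_left_eq_sub]
    congr 3
    push_cast
    ring
  rw [hchord, norm_mul, norm_mul, Complex.norm_exp_ofReal_mul_I, one_mul,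
    Complex.norm_exp_I_mul_ofReal_sub_one, Complex.norm_real, Real.norm_of_nonneg hr, norm_mul,
    Real.norm_eq_abs, Real.norm_eq_abs, abs_two]
  rw [abs_div, abs_two] at hsin
  calc 2 / π * r * |x - y| = r * (2 * (2 / π * (|x - y| / 2))) := by ring
    _ ≤ r * (2 * |Real.sin ((x - y) / 2)|) := by gcongr

end Proximity

section Congruence

variable {f g : ℂ → ℂ}

lemma poleMult_congr {z : ℂ} (h : f =ᶠ[𝓝[≠] z] g) : poleMult f z = poleMult g z := by
  unfold poleMult
  congr! 5 with k c
  exact tendsto_congr' (h.mono fun w hw => congrArg ((w - z) ^ k * ·) hw)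

lemma eventuallyEq_nhdsNE_of_codiscrete (h : f =ᶠ[codiscrete ℂ] g) (z : ℂ) :
    f =ᶠ[𝓝[≠] z] g := by
  have hz := mem_codiscreteWithin_iff_forall_mem_nhdsNE.1 h z (Set.mem_univ z)
  rwa [Set.compl_univ, Set.union_empty] at hz

lemma nevT_congr_codiscrete (h : f =ᶠ[codiscrete ℂ] g) {r : ℝ} (hr : r ≠ 0) :
    nevT f r = nevT g r := by
  have hproximity : proximity f r = proximity g r := by
    simp only [proximity_eq_circleAverage]
    exact Real.circleAverage_congr_codiscreteWithin
      ((h.mono fun z hz => congrArg (fun w => Real.posLog ‖w‖) hz).filter_mono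
        (codiscreteWithin_mono (Set.subset_univ _))) hr
  have hpoleMult : poleMult f = poleMult g :=
    funext fun z => poleMult_congr (eventuallyEq_nhdsNE_of_codiscrete h z)
  simp only [nevT, hproximity, countingN, nPoles, hpoleMult]

end Congruence

lemma exists_lt_mem_Icc_mul {n : ℕ} {ℓ x : ℝ} (hx : x ∈ Set.Ioc 0 (n * ℓ)) :
    ∃ i < n, x ∈ Set.Icc (i * ℓ) ((i + 1 : ℕ) * ℓ) := by
  have hℓ : 0 < ℓ := pos_of_mul_pos_right (hx.1.trans_le hx.2) n.cast_nonneg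
  have hcover := (Nat.mono_cast.mul_const hℓ.le : Monotone fun i : ℕ => (i : ℝ) * ℓ)
    |>.biUnion_Ico_Ioc_map_succ 0 n
  rw [Nat.cast_zero, zero_mul] at hcover
  obtain ⟨i, hi, hxi⟩ := Set.mem_iUnion₂.1 (hcover.symm.subset hx)
  exact ⟨i, hi.2, Set.Ioc_subset_Icc_self hxi⟩

lemma proximity_le_of_forall_arc {f : ℂ → ℂ} {r B : ℝ} {n : ℕ} (hn : n ≠ 0)
    (h : ∀ i < n, ∃ φ ∈ Set.Icc 0 (2 * Real.pi), ∀ᵐ x : ℝ,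
      x ∈ Set.Icc (i * (2 * Real.pi / n)) ((i + 1 : ℕ) * (2 * Real.pi / n)) →
        Real.posLog ‖f (circleMap 0 r x)‖ ≤ B + (Real.log (2 * Real.pi) - Real.log (x - φ))) :
    proximity f r ≤ B + 2 * n := by
  choose! φ hφ_mem hφ using h
  set s := (Finset.range n).image φ
  have hs : ∀ y ∈ s, y ∈ Set.Icc 0 (2 * Real.pi) :=
    Finset.forall_mem_image.2 fun i hi => hφ_mem i (Finset.mem_range.1 hi)
  have hcard : (s.card : ℝ) ≤ n :=
    mod_cast Finset.card_image_le.trans_eq (Finset.card_range n)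
  refine (proximity_le_of_posLog_le hs ?_).trans (by gcongr)
  filter_upwards [(MeasureTheory.ae_ball_iff (Set.to_countable {i | i < n})).2 hφ,
    s.finite_toSet.countable.ae_notMem MeasureTheory.volume] with x hφx hxs hx
  obtain ⟨i, hi, hxi⟩ := exists_lt_mem_Icc_mul (n := n) (ℓ := 2 * Real.pi / n)
    (by rwa [mul_div_cancel₀ _ (Nat.cast_ne_zero.2 hn)])
  refine (hφx i hi hxi).trans (add_le_add_right ?_ B)
  refine Finset.single_le_sum (f := fun y => Real.log (2 * Real.pi) - Real.log (x - y))
    (fun y hy => sub_nonneg.2 ?_) (Finset.mem_image_of_mem φ (Finset.mem_range.2 hi))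
  rw [← Real.log_abs (x - y)]
  refine Real.log_le_log (abs_pos.2 (sub_ne_zero.2 (ne_of_mem_of_not_mem hy hxs).symm)) ?_
  have hxy := Real.dist_le_of_mem_Icc (Set.Ioc_subset_Icc_self hx) (hs y hy)
  rwa [sub_zero] at hxy

lemma exists_nat_two_le_lt_le {a : ℝ} (ha : 0 ≤ a) : ∃ n : ℕ, 2 ≤ n ∧ a < n ∧ n ≤ a + 2 := by
  refine ⟨⌊a⌋₊ + 2, Nat.le_add_left _ _, ?_, ?_⟩ <;> push_cast
  · linarith [Nat.lt_floor_add_one a]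
  · linarith [Nat.floor_le ha]

end General

section Solutions

open Metric Bornology
open scoped Convex

variable {α β : ℂ} {p q : ℂ → ℂ}

/-- The points at which at least one of `p` and `q` fails to be analytic; for solutions in normal
form these are the poles. -/
def singularSet (p q : ℂ → ℂ) : Set ℂ := {z | ¬(AnalyticAt ℂ p z ∧ AnalyticAt ℂ q z)}

lemma notMem_singularSet {z : ℂ} : z ∉ singularSet p q ↔ AnalyticAt ℂ p z ∧ AnalyticAt ℂ q z :=
  not_not

lemma countable_singularSet (hp : Meromorphic p) (hq : Meromorphic q) :
    (singularSet p q).Countable :=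
  (hp.countable_compl_analyticAt.union hq.countable_compl_analyticAt).mono
    fun _ hz => not_and_or.1 hz

lemma eventually_notMem_singularSet {z : ℂ} (hp : MeromorphicAt p z) (hq : MeromorphicAt q z) :
    ∀ᶠ w in 𝓝[≠] z, w ∉ singularSet p q := by
  filter_upwards [hp.eventually_analyticAt, hq.eventually_analyticAt] with w hpw hqw
  exact notMem_singularSet.2 ⟨hpw, hqw⟩

lemma tendsto_norm_atTop_of_not_analyticAt {f : ℂ → ℂ} {z : ℂ} (hf : MeromorphicNFAt f z)
    (hz : ¬AnalyticAt ℂ f z) : Tendsto (fun w => ‖f w‖) (𝓝[≠] z) atTop := by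
  rw [← hf.meromorphicOrderAt_nonneg_iff_analyticAt, not_le] at hz
  exact tendsto_norm_atTop_iff_cobounded.2
    ((tendsto_cobounded_iff_meromorphicOrderAt_neg hf.meromorphicAt).2 hz)

lemma eq_zero_and_analyticAt_inv_of_tendsto_cobounded {f : ℂ → ℂ} {z : ℂ}
    (hf : MeromorphicNFAt f z) (h : Tendsto f (𝓝[≠] z) (cobounded ℂ)) :
    f z = 0 ∧ AnalyticAt ℂ f⁻¹ z := by
  have horder := (tendsto_cobounded_iff_meromorphicOrderAt_neg hf.meromorphicAt).1 h
  have hf_not_analytic : ¬AnalyticAt ℂ f z := by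
    rw [← hf.meromorphicOrderAt_nonneg_iff_analyticAt]
    exact horder.not_ge
  refine ⟨((meromorphicNFAt_iff_analyticAt_or.1 hf).resolve_left hf_not_analytic).2.2, ?_⟩
  rw [← hf.inv.meromorphicOrderAt_nonneg_iff_analyticAt, meromorphicOrderAt_inv]
  exact (LinearOrderedAddCommGroupWithTop.neg_pos.2 (Or.inl horder)).le

lemma tendsto_stateNorm_atTop {z : ℂ} (hp : MeromorphicNFAt p z) (hq : MeromorphicNFAt q z)
    (hz : z ∈ singularSet p q) : Tendsto (fun w => stateNorm (p w) (q w)) (𝓝[≠] z) atTop := by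
  rcases not_and_or.1 hz with hz | hz
  · exact tendsto_atTop_mono (fun w => norm_fst_le_stateNorm _ _)
      (tendsto_norm_atTop_of_not_analyticAt hp hz)
  · exact tendsto_atTop_mono (fun w => norm_snd_le_stateNorm _ _)
      (tendsto_norm_atTop_of_not_analyticAt hq hz)

/-- A solution of the Hamiltonian system whose components are in normal form everywhere, so that
analyticity fails only at genuine poles and the value there is the junk value `0`. -/
structure IsNormalHamSolution (α β : ℂ) (p q : ℂ → ℂ) : Prop where
  isHamSolution : IsHamSolution α β p q
  meromorphicNFAt_fst : ∀ z, MeromorphicNFAt p z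
  meromorphicNFAt_snd : ∀ z, MeromorphicNFAt q z

lemma IsHamSolution.congr_codiscrete {P Q : ℂ → ℂ} (h : IsHamSolution α β p q)
    (hP : p =ᶠ[codiscrete ℂ] P) (hQ : q =ᶠ[codiscrete ℂ] Q) : IsHamSolution α β P Q := by
  have hPz := eventuallyEq_nhdsNE_of_codiscrete hP
  have hQz := eventuallyEq_nhdsNE_of_codiscrete hQ
  refine ⟨fun z hz => (h.1 z hz).congr (hPz z), fun z hz => (h.2.1 z hz).congr (hQz z),
    fun z hPa hQa => ?_⟩
  have hode : ∀ᶠ w in 𝓝[≠] z, deriv P w = -(Q w) ^ 2 - w * P w - α ∧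
      deriv Q w = (P w) ^ 2 + w * Q w + β := by
    filter_upwards [hPz z, hQz z, (hPz z).nhdsNE_deriv, (hQz z).nhdsNE_deriv,
      (h.1 z (Set.mem_univ z)).eventually_analyticAt,
      (h.2.1 z (Set.mem_univ z)).eventually_analyticAt] with w hPw hQw hP' hQ' hpa hqa
    rw [← hPw, ← hQw, ← hP', ← hQ']
    exact h.2.2 w hpa hqa
  have hPc := hPa.continuousAt
  have hQc := hQa.continuousAt
  exact ⟨((hPa.deriv.continuousAt.eventuallyEq_nhds_iff_eventuallyEq_nhdsNE (by fun_prop)).1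
      (hode.mono fun w hw => hw.1)).eq_of_nhds,
    ((hQa.deriv.continuousAt.eventuallyEq_nhds_iff_eventuallyEq_nhdsNE (by fun_prop)).1
      (hode.mono fun w hw => hw.2)).eq_of_nhds⟩

lemma IsHamSolution.isNormalHamSolution_toMeromorphicNFOn (h : IsHamSolution α β p q) :
    IsNormalHamSolution α β (toMeromorphicNFOn p Set.univ) (toMeromorphicNFOn q Set.univ) where
  isHamSolution := h.congr_codiscrete (toMeromorphicNFOn_eqOn_codiscrete h.1)
    (toMeromorphicNFOn_eqOn_codiscrete h.2.1)
  meromorphicNFAt_fst z := meromorphicNFOn_toMeromorphicNFOn p Set.univ (Set.mem_univ z)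
  meromorphicNFAt_snd z := meromorphicNFOn_toMeromorphicNFOn q Set.univ (Set.mem_univ z)

lemma mul_le_of_abs_inv_add_sub_inv_add_le {K r x y : ℝ} (hK : 1 ≤ K) (hr : 0 < r) (hx : 0 < x)
    (hy : 2 * K * r ≤ y) (hxy : |(x + r)⁻¹ - (y + r)⁻¹| ≤ 1 / (6 * K * r)) : K * r ≤ x := by
  have hinv : (x + r)⁻¹ ≤ ((K + 1) * r)⁻¹ := by
    calc (x + r)⁻¹ ≤ (y + r)⁻¹ + 1 / (6 * K * r) := by linarith [le_of_abs_le hxy]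
      _ ≤ ((2 * K + 1) * r)⁻¹ + 1 / (6 * K * r) := by
          gcongr
          linarith
      _ ≤ ((K + 1) * r)⁻¹ := by
          field_simp
          nlinarith
  have hle := (inv_le_inv₀ (by positivity) (by positivity)).1 hinv
  linarith

/-- On the ball `ball c ρ` the function `q⁻¹` is a coordinate with bounded distortion, in which the
singular points are the zeros; the size of the state is controlled by `q`. -/
structure IsPolarChart (p q : ℂ → ℂ) (c : ℂ) (ρ : ℝ) : Prop where
  continuousOn_inv : ContinuousOn q⁻¹ (ball c ρ)
  norm_sub_le_four_mul : ∀ z ∈ ball c ρ, ∀ w ∈ ball c ρ, ‖z - w‖ ≤ 4 * ‖(q z)⁻¹ - (q w)⁻¹‖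
  snd_eq_zero : ∀ z ∈ ball c ρ, z ∈ singularSet p q → q z = 0
  stateNorm_le : ∀ z ∈ ball c ρ, z ∉ singularSet p q → stateNorm (p z) (q z) ≤ 2 * ‖q z‖

lemma snd_ne_zero_of_stateNorm_le {x y : ℂ} (h : stateNorm x y ≤ 2 * ‖y‖) : y ≠ 0 := by
  rw [← norm_pos_iff]
  linarith [stateNorm_pos x y]

namespace IsPolarChart

variable {c : ℂ} {ρ : ℝ}

lemma eq_of_mem_singularSet (hc : IsPolarChart p q c ρ) {z w : ℂ} (hz : z ∈ ball c ρ)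
    (hw : w ∈ ball c ρ) (hz_sing : z ∈ singularSet p q) (hw_sing : w ∈ singularSet p q) :
    z = w := by
  have hzw := hc.norm_sub_le_four_mul z hz w hw
  rwa [hc.snd_eq_zero z hz hz_sing, hc.snd_eq_zero w hw hw_sing, sub_self, norm_zero, mul_zero,
    norm_le_zero_iff, sub_eq_zero] at hzw

lemma stateNorm_mul_norm_sub_le (hc : IsPolarChart p q c ρ) {z w : ℂ} (hz : z ∈ ball c ρ)
    (hw : w ∈ ball c ρ) (hz_reg : z ∉ singularSet p q) (hwz : ‖(q w)⁻¹‖ ≤ ‖(q z)⁻¹‖) :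
    stateNorm (p z) (q z) * ‖z - w‖ ≤ 16 := by
  have hm := hc.stateNorm_le z hz hz_reg
  calc _ ≤ 2 * ‖q z‖ * (4 * (‖(q z)⁻¹‖ + ‖(q z)⁻¹‖)) := by
        refine mul_le_mul hm ((hc.norm_sub_le_four_mul z hz w hw).trans ?_) (norm_nonneg _)
          (by positivity)
        gcongr
        exact (norm_sub_le _ _).trans (by gcongr)
    _ = 16 * (‖q z‖ * ‖q z‖⁻¹) := by
        rw [norm_inv]
        ring
    _ = 16 := by
        rw [mul_inv_cancel₀ (norm_ne_zero_iff.2 (snd_ne_zero_of_stateNorm_le hm)), mul_one]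

lemma exists_stateNorm_mul_abs_sub_le (hc : IsPolarChart p q c ρ) {a : ℂ} {r θ₁ θ₂ : ℝ}
    (hr : 0 ≤ r) (hθ : θ₁ ≤ θ₂) (hθπ : θ₂ - θ₁ ≤ Real.pi)
    (harc : Set.MapsTo (circleMap a r) (Set.Icc θ₁ θ₂) (ball c ρ)) :
    ∃ φ ∈ Set.Icc θ₁ θ₂, ∀ x ∈ Set.Icc θ₁ θ₂, circleMap a r x ∉ singularSet p q →
      stateNorm (p (circleMap a r x)) (q (circleMap a r x)) * (r * |x - φ|) ≤ 8 * Real.pi := by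
  obtain ⟨φ, hφ, hmin⟩ := isCompact_Icc.exists_isMinOn (Set.nonempty_Icc.2 hθ)
    (hc.continuousOn_inv.comp (continuous_circleMap a r).continuousOn harc).norm
  refine ⟨φ, hφ, fun x hx hx_reg => ?_⟩
  have hchord := mul_abs_sub_le_norm_circleMap_sub a hr
    ((Real.dist_le_of_mem_Icc hx hφ).trans hθπ)
  have hstate := hc.stateNorm_mul_norm_sub_le (harc hx) (harc hφ) hx_reg (hmin hx)
  have hm := stateNorm_pos (p (circleMap a r x)) (q (circleMap a r x))
  set m := stateNorm (p (circleMap a r x)) (q (circleMap a r x))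
  calc m * (r * |x - φ|) = Real.pi / 2 * (m * (2 / Real.pi * r * |x - φ|)) := by
        field_simp
    _ ≤ Real.pi / 2 * 16 := by
        gcongr
        exact (mul_le_mul_of_nonneg_left hchord hm.le).trans hstate
    _ = 8 * Real.pi := by ring

end IsPolarChart

namespace IsNormalHamSolution

lemma countable_singularSet (h : IsNormalHamSolution α β p q) : (singularSet p q).Countable :=
  _root_.countable_singularSet (fun z => (h.meromorphicNFAt_fst z).meromorphicAt)
    fun z => (h.meromorphicNFAt_snd z).meromorphicAt

lemma eventually_notMem_singularSet (h : IsNormalHamSolution α β p q) (z : ℂ) :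
    ∀ᶠ w in 𝓝[≠] z, w ∉ singularSet p q :=
  _root_.eventually_notMem_singularSet (h.meromorphicNFAt_fst z).meromorphicAt
    (h.meromorphicNFAt_snd z).meromorphicAt

lemma tendsto_stateNorm_atTop (h : IsNormalHamSolution α β p q) {z : ℂ}
    (hz : z ∈ singularSet p q) : Tendsto (fun w => stateNorm (p w) (q w)) (𝓝[≠] z) atTop :=
  _root_.tendsto_stateNorm_atTop (h.meromorphicNFAt_fst z) (h.meromorphicNFAt_snd z) hz

lemma hasDerivAt_fst (h : IsNormalHamSolution α β p q) {z : ℂ} (hz : z ∉ singularSet p q) :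
    HasDerivAt p (-(q z) ^ 2 - z * p z - α) z := by
  obtain ⟨hp, hq⟩ := notMem_singularSet.1 hz
  exact (h.isHamSolution.2.2 z hp hq).1 ▸ hp.differentiableAt.hasDerivAt

lemma hasDerivAt_snd (h : IsNormalHamSolution α β p q) {z : ℂ} (hz : z ∉ singularSet p q) :
    HasDerivAt q ((p z) ^ 2 + z * q z + β) z := by
  obtain ⟨hp, hq⟩ := notMem_singularSet.1 hz
  exact (h.isHamSolution.2.2 z hp hq).2 ▸ hq.differentiableAt.hasDerivAt

section Curve

variable {γ : ℝ → ℂ} {e : ℂ} {s : ℝ}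

lemma hasDerivAt_energy_comp_curve (h : IsNormalHamSolution α β p q) (hγ : HasDerivAt γ e s)
    (hs : γ s ∉ singularSet p q) :
    HasDerivAt (fun t => energy α β (γ t) (p (γ t)) (q (γ t)))
      (e * energyDz α β (γ s) (p (γ s)) (q (γ s)) +
        (starRingEnd ℂ) e * energyDzBar α β (γ s) (p (γ s)) (q (γ s))) s :=
  hasDerivAt_energy_comp (x := p ∘ γ) (y := q ∘ γ) hγ ((h.hasDerivAt_fst hs).scomp s hγ)
    ((h.hasDerivAt_snd hs).scomp s hγ)

lemma exists_hasDerivAt_stateNorm_comp_curve (h : IsNormalHamSolution α β p q)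
    (hγ : HasDerivAt γ e s) (hs : γ s ∉ singularSet p q) :
    ∃ m', HasDerivAt (fun t => stateNorm (p (γ t)) (q (γ t))) m' s ∧
      |m'| ≤ ‖e‖ * (stateNorm (p (γ s)) (q (γ s)) ^ 2 + ‖γ s‖ * stateNorm (p (γ s)) (q (γ s)) +
        (‖α‖ + ‖β‖)) :=
  ⟨_, hasDerivAt_stateNorm_comp (x := p ∘ γ) (y := q ∘ γ) ((h.hasDerivAt_fst hs).scomp s hγ)
    ((h.hasDerivAt_snd hs).scomp s hγ), abs_deriv_stateNorm_le α β e _ _ _⟩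

end Curve

lemma norm_energy_le_of_disjoint_segment (h : IsNormalHamSolution α β p q) {M : ℝ} {a z : ℂ}
    (hM : 20 + 5 * (‖α‖ + ‖β‖) ≤ M) (hseg : Disjoint [a -[ℝ] z] (singularSet p q))
    (ha : ‖energy α β a (p a) (q a)‖ ≤ (M * (1 + ‖a‖)) ^ 3) :
    ‖energy α β z (p z) (q z)‖ ≤ (M * (1 + ‖a‖ + ‖z - a‖)) ^ 3 := by
  rcases eq_or_ne z a with rfl | hza
  · simpa using ha
  have hza' : 0 < ‖z - a‖ := norm_sub_pos_iff.2 hza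
  set γ : ℝ →ᵃ[ℝ] ℂ := AffineMap.lineMap a z
  have hγ (s : ℝ) : HasDerivAt γ (z - a) s := AffineMap.hasDerivAt_lineMap
  have hγ_norm {s : ℝ} (hs : 0 ≤ s) : ‖γ s‖ ≤ 1 + ‖a‖ + s * ‖z - a‖ := by
    have hadd := norm_add_le a (s • (z - a))
    rw [norm_smul, Real.norm_of_nonneg hs] at hadd
    simp only [γ, AffineMap.lineMap_apply, vsub_eq_sub, vadd_eq_add, add_comm _ a]
    linarith
  have henergy (s : ℝ) (hs : s ∈ Set.Icc 0 1) := h.hasDerivAt_energy_comp_curve (hγ s)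
    (Set.disjoint_left.1 hseg (segment_eq_image_lineMap ℝ a z ▸ Set.mem_image_of_mem _ hs))
  have hbarrier (s : ℝ) : HasDerivAt (fun s : ℝ => (M * (1 + ‖a‖ + s * ‖z - a‖)) ^ 3)
      (3 * (M * (1 + ‖a‖ + s * ‖z - a‖)) ^ 2 * (M * ‖z - a‖)) s := by
    simpa using ((((hasDerivAt_id s).mul_const ‖z - a‖).const_add (1 + ‖a‖)).const_mul M).fun_pow 3
  have hgronwall := image_norm_le_of_norm_deriv_right_lt_deriv_boundary' (a := 0) (b := 1)
    (fun s hs => (henergy s hs).continuousAt.continuousWithinAt)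
    (fun s hs => (henergy s ⟨hs.1, hs.2.le⟩).hasDerivWithinAt) (by simpa [γ] using ha)
    (fun s _ => (hbarrier s).continuousAt.continuousWithinAt)
    (fun s _ => (hbarrier s).hasDerivWithinAt) ?_ (Set.right_mem_Icc.2 zero_le_one)
  · simpa [γ] using hgronwall
  · intro s hs heq
    have hone : 1 ≤ 1 + ‖a‖ + s * ‖z - a‖ := by
      linarith [norm_nonneg a, mul_nonneg hs.1 hza'.le]
    calc _ ≤ ‖z - a‖ * (‖energyDz α β (γ s) (p (γ s)) (q (γ s))‖ +
          ‖energyDzBar α β (γ s) (p (γ s)) (q (γ s))‖) :=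
          (norm_add_le _ _).trans_eq (by simp only [norm_mul, RCLike.norm_conj, mul_add])
      _ < ‖z - a‖ * (3 * (M * (1 + ‖a‖ + s * ‖z - a‖)) ^ 2 * M) := by
          gcongr
          exact norm_energyDz_add_norm_energyDzBar_lt hM hone (hγ_norm hs.1) heq.le
      _ = _ := by ring

lemma continuousAt_energy (h : IsNormalHamSolution α β p q) {z : ℂ} (hz : z ∉ singularSet p q) :
    ContinuousAt (fun w => energy α β w (p w) (q w)) z :=
  (continuous_energy α β).continuousAt.comp (f := fun w => (w, p w, q w))
    (continuousAt_id.prodMk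
      ((h.hasDerivAt_fst hz).continuousAt.prodMk (h.hasDerivAt_snd hz).continuousAt))

lemma exists_norm_energy_le (h : IsNormalHamSolution α β p q) :
    ∃ M : ℝ, 0 ≤ M ∧
      ∀ z ∉ singularSet p q, ‖energy α β z (p z) (q z)‖ ≤ (M * (1 + ‖z‖)) ^ 3 := by
  obtain ⟨a₀, ha₀⟩ := (h.countable_singularSet.dense_compl ℂ).nonempty
  set L := ‖energy α β a₀ (p a₀) (q a₀)‖ + 1
  have hL : 1 ≤ L := le_add_of_nonneg_left (norm_nonneg _)
  have hnear : {a | ‖energy α β a (p a) (q a)‖ < L} ∩ ball a₀ 1 ∈ 𝓝 a₀ :=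
    inter_mem ((h.continuousAt_energy ha₀).norm.eventually_lt_const (lt_add_one _))
      (ball_mem_nhds _ one_pos)
  set M := 20 + 5 * (‖α‖ + ‖β‖) + L
  have hLM : L ≤ M := by linarith [norm_nonneg α, norm_nonneg β]
  refine ⟨M * (3 + 2 * ‖a₀‖), by positivity, fun z hz => ?_⟩
  obtain ⟨a, ⟨haL, ha⟩, hseg⟩ := exists_mem_nhds_disjoint_segment
    (by simp [Complex.rank_real_complex]) h.countable_singularSet hz hnear
  have haM : ‖energy α β a (p a) (q a)‖ ≤ (M * (1 + ‖a‖)) ^ 3 := by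
    calc _ ≤ M := haL.le.trans hLM
      _ ≤ M * (1 + ‖a‖) := le_mul_of_one_le_right (by linarith) (by linarith [norm_nonneg a])
      _ ≤ _ := le_self_pow₀ (one_le_mul_of_one_le_of_one_le (hL.trans hLM)
        (by linarith [norm_nonneg a])) three_ne_zero
  refine (h.norm_energy_le_of_disjoint_segment (by linarith) (segment_symm ℝ z a ▸ hseg)
    haM).trans (pow_le_pow_left₀ (by positivity) ?_ 3)
  rw [mul_assoc]
  gcongr
  have ha_norm := norm_le_norm_add_norm_sub' a a₀
  have hza := norm_sub_le z a
  rw [mem_ball, dist_eq_norm] at ha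
  nlinarith [mul_nonneg (norm_nonneg z) (norm_nonneg a₀), norm_nonneg z]

lemma abs_inv_stateNorm_add_sub_le (h : IsNormalHamSolution α β p q) {r : ℝ} {a z : ℂ}
    (hr : 1 ≤ r) (hseg : Disjoint [a -[ℝ] z] (singularSet p q)) (ha : ‖a‖ ≤ 3 * r)
    (hz : ‖z‖ ≤ 3 * r) :
    |(stateNorm (p z) (q z) + r)⁻¹ - (stateNorm (p a) (q a) + r)⁻¹| ≤
      (2 + (‖α‖ + ‖β‖)) * ‖z - a‖ := by
  set γ : ℝ →ᵃ[ℝ] ℂ := AffineMap.lineMap a z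
  have hγ (s : ℝ) : HasDerivAt γ (z - a) s := AffineMap.hasDerivAt_lineMap
  have hγ_mem {s : ℝ} (hs : s ∈ Set.Icc 0 1) : γ s ∈ [a -[ℝ] z] :=
    segment_eq_image_lineMap ℝ a z ▸ Set.mem_image_of_mem _ hs
  have hγ_norm {s : ℝ} (hs : s ∈ Set.Icc 0 1) : ‖γ s‖ ≤ 3 * r :=
    mem_closedBall_zero_iff.1 ((convex_closedBall (0 : ℂ) (3 * r)).segment_subset
      (mem_closedBall_zero_iff.2 ha) (mem_closedBall_zero_iff.2 hz) (hγ_mem hs))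
  have hderiv (s : ℝ) (hs : s ∈ Set.Icc 0 1) := h.exists_hasDerivAt_stateNorm_comp_curve (hγ s)
    (Set.disjoint_left.1 hseg (hγ_mem hs))
  choose! m' hm' hm'_le using hderiv
  have hpos (s : ℝ) : 0 < stateNorm (p (γ s)) (q (γ s)) + r :=
    add_pos (stateNorm_pos _ _) (by linarith)
  have hinv_le : ∀ s ∈ Set.Icc (0 : ℝ) 1,
      ‖-m' s / (stateNorm (p (γ s)) (q (γ s)) + r) ^ 2‖ ≤ (2 + (‖α‖ + ‖β‖)) * ‖z - a‖ := by
    intro s hs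
    rw [norm_div, norm_neg, Real.norm_eq_abs, norm_pow, Real.norm_of_nonneg (hpos s).le,
      div_le_iff₀ (pow_pos (hpos s) 2)]
    have hm := one_le_stateNorm (p (γ s)) (q (γ s))
    set m := stateNorm (p (γ s)) (q (γ s))
    calc |m' s| ≤ ‖z - a‖ * (m ^ 2 + 3 * r * m + (‖α‖ + ‖β‖)) := (hm'_le s hs).trans (by
          gcongr
          exact hγ_norm hs)
      _ ≤ ‖z - a‖ * (2 * (m + r) ^ 2 + (‖α‖ + ‖β‖) * (m + r) ^ 2) := by
          gcongr
          · nlinarith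
          · exact le_mul_of_one_le_right (by positivity) (one_le_pow₀ (by linarith))
      _ = _ := by ring
  simpa [γ] using Convex.norm_image_sub_le_of_norm_hasDerivWithin_le
    (fun s hs => (((hm' s hs).add_const r).fun_inv (hpos s).ne').hasDerivWithinAt) hinv_le
    (convex_Icc 0 1) (Set.left_mem_Icc.2 zero_le_one) (Set.right_mem_Icc.2 zero_le_one)

lemma mul_le_stateNorm_of_eventually_le (h : IsNormalHamSolution α β p q) {K r : ℝ} {c z : ℂ}
    (hK : 1 ≤ K) (hr : 1 ≤ r) (hc : ‖c‖ ≤ r)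
    (hlarge : ∀ᶠ a in 𝓝[(singularSet p q)ᶜ] c, 2 * K * r ≤ stateNorm (p a) (q a))
    (hz : z ∈ ball c (1 / (6 * (2 + (‖α‖ + ‖β‖)) * K) / r)) (hz_reg : z ∉ singularSet p q) :
    K * r ≤ stateNorm (p z) (q z) := by
  set L := 2 + (‖α‖ + ‖β‖)
  have hL : 2 ≤ L := le_add_of_nonneg_right (by positivity)
  set ρ := 1 / (6 * L * K) / r with hρ
  have hρ_le : ρ ≤ 1 := by
    rw [hρ, div_div, div_le_one (by positivity)]
    exact one_le_mul_of_one_le_of_one_le (one_le_mul_of_one_le_of_one_le (by linarith) hK) hr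
  have hnorm {w : ℂ} (hw : w ∈ ball c ρ) : ‖w‖ ≤ 3 * r := by
    rw [mem_ball, dist_eq_norm] at hw
    linarith [norm_le_norm_add_norm_sub' w c]
  obtain ⟨a, ⟨ha_large, ha_near⟩, hseg⟩ := exists_mem_nhds_disjoint_segment
    (by simp [Complex.rank_real_complex]) h.countable_singularSet hz_reg
    (inter_mem (eventually_nhdsWithin_iff.1 hlarge)
      (ball_mem_nhds c (sub_pos.2 (mem_ball.1 hz))))
  have ha : a ∈ ball c ρ :=
    ball_subset_ball (sub_le_self _ dist_nonneg) ha_near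
  have haK := ha_large (Set.disjoint_left.1 hseg (right_mem_segment ℝ z a))
  have hza : ‖z - a‖ ≤ ρ := by
    rw [← dist_eq_norm]
    linarith [dist_triangle_right z a c, mem_ball.1 ha_near]
  refine mul_le_of_abs_inv_add_sub_inv_add_le hK (by linarith) (stateNorm_pos _ _) haK ?_
  calc _ ≤ L * ‖z - a‖ :=
        h.abs_inv_stateNorm_add_sub_le hr (segment_symm ℝ z a ▸ hseg) (hnorm ha) (hnorm hz)
    _ ≤ L * ρ := by gcongr
    _ = 1 / (6 * K * r) := by
        rw [hρ]
        field_simp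

section OpenSet

variable {U : Set ℂ}

lemma snd_eq_zero_and_analyticAt_inv (h : IsNormalHamSolution α β p q) (hU : IsOpen U)
    (hq : ∀ z ∈ U, z ∉ singularSet p q → stateNorm (p z) (q z) ≤ 2 * ‖q z‖) {z : ℂ} (hz : z ∈ U)
    (hz_sing : z ∈ singularSet p q) : q z = 0 ∧ AnalyticAt ℂ q⁻¹ z := by
  refine eq_zero_and_analyticAt_inv_of_tendsto_cobounded (h.meromorphicNFAt_snd z)
    (tendsto_norm_atTop_iff_cobounded.1 (Tendsto.atTop_of_const_mul₀ two_pos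
      (tendsto_atTop_mono' _ ?_ (h.tendsto_stateNorm_atTop hz_sing))))
  filter_upwards [h.eventually_notMem_singularSet z,
    (hU.eventually_mem hz).filter_mono nhdsWithin_le_nhds] with w hw_reg hw
  exact hq w hw hw_reg

lemma differentiableOn_inv_snd (h : IsNormalHamSolution α β p q) (hU : IsOpen U)
    (hq : ∀ z ∈ U, z ∉ singularSet p q → stateNorm (p z) (q z) ≤ 2 * ‖q z‖) :
    DifferentiableOn ℂ q⁻¹ U := by
  intro z hz
  refine DifferentiableAt.differentiableWithinAt ?_
  by_cases hz_sing : z ∈ singularSet p q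
  · exact (h.snd_eq_zero_and_analyticAt_inv hU hq hz hz_sing).2.differentiableAt
  · exact (h.hasDerivAt_snd hz_sing).differentiableAt.inv
      (snd_ne_zero_of_stateNorm_le (hq z hz hz_sing))

lemma norm_deriv_inv_snd_mem_Icc (h : IsNormalHamSolution α β p q) (hU : IsOpen U) {b B : ℝ}
    (hq : ∀ z ∈ U, z ∉ singularSet p q → stateNorm (p z) (q z) ≤ 2 * ‖q z‖)
    (hderiv : ∀ z ∈ U, z ∉ singularSet p q →
      ‖-((p z) ^ 2 + z * q z + β) / (q z) ^ 2‖ ∈ Set.Icc b B) {z : ℂ} (hz : z ∈ U) :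
    ‖deriv q⁻¹ z‖ ∈ Set.Icc b B := by
  have hcontinuous : ContinuousAt (deriv q⁻¹) z :=
    (((h.differentiableOn_inv_snd hU hq).deriv hU).differentiableAt (hU.mem_nhds hz)).continuousAt
  refine isClosed_Icc.mem_of_tendsto
    (hcontinuous.norm.mono_left (nhdsWithin_le_nhds (s := {z}ᶜ))) ?_
  filter_upwards [h.eventually_notMem_singularSet z,
    (hU.eventually_mem hz).filter_mono nhdsWithin_le_nhds] with w hw_reg hw
  rw [((h.hasDerivAt_snd hw_reg).inv (snd_ne_zero_of_stateNorm_le (hq w hw hw_reg))).deriv]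
  exact hderiv w hw hw_reg

end OpenSet

lemma isPolarChart_of_norm_deriv_mem_Icc (h : IsNormalHamSolution α β p q) {c : ℂ} {R : ℝ}
    (hR : 0 < R)
    (hq : ∀ z ∈ ball c R, z ∉ singularSet p q → stateNorm (p z) (q z) ≤ 2 * ‖q z‖)
    (hderiv : ∀ z ∈ ball c R, z ∉ singularSet p q →
      ‖-((p z) ^ 2 + z * q z + β) / (q z) ^ 2‖ ∈ Set.Icc (1 / 2) (3 / 2)) :
    IsPolarChart p q c (1 / 12 * R) := by
  have hderiv_inv {z : ℂ} (hz : z ∈ ball c R) :=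
    h.norm_deriv_inv_snd_mem_Icc isOpen_ball hq hderiv hz
  have hdiff := h.differentiableOn_inv_snd isOpen_ball hq
  have hsub : ball c (1 / 12 * R) ⊆ ball c R := ball_subset_ball (by linarith)
  refine ⟨hdiff.continuousOn.mono hsub, fun z hz w hw => ?_, fun z hz hz_sing =>
    (h.snd_eq_zero_and_analyticAt_inv isOpen_ball hq (hsub hz) hz_sing).1,
    fun z hz => hq z (hsub hz)⟩
  have hcentre := (hderiv_inv (mem_ball_self hR)).1
  have hlower := norm_deriv_sub_mul_norm_sub_le hR (by norm_num) hdiff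
    (fun z hz => (hderiv_inv hz).2) hz hw
  rw [Pi.inv_apply, Pi.inv_apply] at hlower
  have hquarter : 1 / 4 * ‖z - w‖ ≤ (‖deriv q⁻¹ c‖ - 2 * (3 / 2) * (1 / 12)) * ‖z - w‖ := by
    gcongr
    linarith
  linarith

lemma exists_forall_isPolarChart (h : IsNormalHamSolution α β p q) :
    ∃ K δ : ℝ, 1 ≤ K ∧ 0 < δ ∧ ∀ r, 1 ≤ r → ∀ c, ‖c‖ ≤ r →
      (∀ᶠ a in 𝓝[(singularSet p q)ᶜ] c, 2 * K * r ≤ stateNorm (p a) (q a)) →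
        IsPolarChart p q c (δ / r) := by
  obtain ⟨M, hM, henergy⟩ := h.exists_norm_energy_le
  set K := polarThreshold α β M
  have hK : 1 ≤ K := by
    linarith [one_hundred_add_le_polarThreshold α β hM, norm_nonneg β]
  set δ := 1 / (6 * (2 + (‖α‖ + ‖β‖)) * K)
  have hδ : δ ≤ 1 := by
    rw [div_le_one (by positivity)]
    exact one_le_mul_of_one_le_of_one_le (by linarith [norm_nonneg α, norm_nonneg β]) hK
  refine ⟨K, 1 / 12 * δ, hK, by positivity, fun r hr c hc hlarge => ?_⟩
  have hK_le {z : ℂ} (hz : z ∈ ball c (δ / r)) (hz_reg : z ∉ singularSet p q) :=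
    h.mul_le_stateNorm_of_eventually_le hK hr hc hlarge hz hz_reg
  have hnorm {z : ℂ} (hz : z ∈ ball c (δ / r)) : ‖z‖ ≤ 3 * r := by
    have hδr : δ / r ≤ 1 := (div_le_self (by positivity) hr).trans hδ
    rw [mem_ball, dist_eq_norm] at hz
    linarith [norm_le_norm_add_norm_sub' z c]
  rw [mul_div_assoc]
  exact h.isPolarChart_of_norm_deriv_mem_Icc (by positivity)
    (fun z hz hz_reg => stateNorm_le_two_mul_norm_of_polarThreshold_le hM hr (hnorm hz)
      (henergy z hz_reg) (hK_le hz hz_reg))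
    fun z hz hz_reg => norm_deriv_inv_mem_Icc_of_polarThreshold_le hM hr (hnorm hz)
      (henergy z hz_reg) (hK_le hz hz_reg)

lemma eventually_le_stateNorm (h : IsNormalHamSolution α β p q) {z : ℂ}
    (hz : z ∈ singularSet p q) (B : ℝ) :
    ∀ᶠ a in 𝓝[(singularSet p q)ᶜ] z, B ≤ stateNorm (p a) (q a) :=
  ((h.tendsto_stateNorm_atTop hz).eventually_ge_atTop B).filter_mono
    (nhdsWithin_mono z (Set.compl_subset_compl.2 (Set.singleton_subset_iff.2 hz)))

lemma stateNorm_le_of_not_eventually_le (h : IsNormalHamSolution α β p q) {z : ℂ} {B : ℝ}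
    (hz : z ∉ singularSet p q)
    (hB : ¬∀ᶠ a in 𝓝[(singularSet p q)ᶜ] z, B ≤ stateNorm (p a) (q a)) :
    stateNorm (p z) (q z) ≤ B := by
  contrapose! hB
  have hcontinuous : ContinuousAt (fun w => stateNorm (p w) (q w)) z :=
    continuous_stateNorm.continuousAt.comp (f := fun w => (p w, q w))
      ((h.hasDerivAt_fst hz).continuousAt.prodMk (h.hasDerivAt_snd hz).continuousAt)
  exact ((hcontinuous.eventually_const_lt hB).mono fun _ => le_of_lt).filter_mono
    nhdsWithin_le_nhds

lemma exists_finite_and_ncard_singularSet_le (h : IsNormalHamSolution α β p q) :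
    ∃ C : ℝ, ∀ r, 1 ≤ r → (singularSet p q ∩ closedBall 0 r).Finite ∧
      (singularSet p q ∩ closedBall 0 r).ncard ≤ C * r ^ 4 := by
  obtain ⟨K, δ, -, hδ, hchart⟩ := h.exists_forall_isPolarChart
  refine ⟨(2 / δ + 1) ^ 2, fun r hr => ?_⟩
  have hseparated : (singularSet p q ∩ closedBall 0 r).Pairwise fun z w => δ / r ≤ dist z w := by
    rintro z ⟨hz, hzr⟩ w ⟨hw, -⟩ hzw
    by_contra! hlt
    exact hzw ((hchart r hr z (mem_closedBall_zero_iff.1 hzr)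
      (h.eventually_le_stateNorm hz _)).eq_of_mem_singularSet (mem_ball_self (by positivity))
        (mem_ball'.2 hlt) hz hw)
  have hcount := finite_and_ncard_le_of_pairwise_le_dist (by linarith) (by positivity)
    (fun z hz => mem_closedBall_zero_iff.1 hz.2) hseparated
  refine ⟨hcount.1, hcount.2.trans ?_⟩
  rw [Complex.finrank_real_complex,
    show (2 / δ + 1) ^ 2 * r ^ 4 = ((2 / δ + 1) * r ^ 2) ^ 2 by ring]
  gcongr
  calc (2 * r + δ / r) / (δ / r) = 2 / δ * r ^ 2 + 1 := by field_simp
    _ ≤ (2 / δ + 1) * r ^ 2 := by linarith [one_le_pow₀ hr (n := 2)]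

lemma norm_sub_mul_stateNorm_eventually_le (h : IsNormalHamSolution α β p q) {z : ℂ}
    (hz : z ∈ singularSet p q) : ∀ᶠ w in 𝓝[≠] z, ‖w - z‖ * stateNorm (p w) (q w) ≤ 16 := by
  obtain ⟨K, δ, -, hδ, hchart⟩ := h.exists_forall_isPolarChart
  set r := ‖z‖ + 1
  have hr : 1 ≤ r := le_add_of_nonneg_left (norm_nonneg z)
  have hc := hchart r hr z (le_add_of_nonneg_right zero_le_one) (h.eventually_le_stateNorm hz _)
  have hball : ball z (δ / r) ∈ 𝓝 z := ball_mem_nhds z (by positivity)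
  filter_upwards [h.eventually_notMem_singularSet z, nhdsWithin_le_nhds hball] with w hw_reg hw
  have hz_ball := mem_of_mem_nhds hball
  rw [mul_comm]
  refine hc.stateNorm_mul_norm_sub_le hw hz_ball hw_reg ?_
  rw [hc.snd_eq_zero z hz_ball hz, inv_zero, norm_zero]
  exact norm_nonneg _

lemma exists_stateNorm_circleMap_mul_abs_sub_le (h : IsNormalHamSolution α β p q)
    {K r ρ θ₁ θ₂ : ℝ}
    (hK : 1 ≤ K) (hr : 1 ≤ r) (hθ : θ₁ ≤ θ₂) (hθπ : θ₂ - θ₁ ≤ Real.pi) (hθρ : r * (θ₂ - θ₁) < ρ)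
    (hchart : ∀ c, ‖c‖ ≤ r →
      (∀ᶠ a in 𝓝[(singularSet p q)ᶜ] c, 2 * K * r ≤ stateNorm (p a) (q a)) →
        IsPolarChart p q c ρ) :
    ∃ φ ∈ Set.Icc θ₁ θ₂, ∀ x ∈ Set.Icc θ₁ θ₂, circleMap 0 r x ∉ singularSet p q →
      stateNorm (p (circleMap 0 r x)) (q (circleMap 0 r x)) * |x - φ| ≤
        4 * K * r * (2 * Real.pi) := by
  by_cases hlarge : ∃ x₀ ∈ Set.Icc θ₁ θ₂, ∀ᶠ a in 𝓝[(singularSet p q)ᶜ] (circleMap 0 r x₀),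
      2 * K * r ≤ stateNorm (p a) (q a)
  · obtain ⟨x₀, hx₀, hlarge⟩ := hlarge
    have hc := hchart _ (norm_circleMap_zero r x₀ ▸ (abs_of_nonneg (by linarith)).le) hlarge
    have harc : Set.MapsTo (circleMap 0 r) (Set.Icc θ₁ θ₂) (ball (circleMap 0 r x₀) ρ) := by
      intro x hx
      refine mem_ball.2 (((lipschitzWith_circleMap 0 r).dist_le_mul x x₀).trans_lt ?_)
      rw [Real.coe_nnabs, abs_of_nonneg (by linarith), Real.dist_eq]
      refine lt_of_le_of_lt ?_ hθρ
      gcongr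
      exact Real.dist_le_of_mem_Icc hx hx₀
    obtain ⟨φ, hφ, hmul⟩ := hc.exists_stateNorm_mul_abs_sub_le (by linarith) hθ hθπ harc
    refine ⟨φ, hφ, fun x hx hx_reg => ?_⟩
    calc _ ≤ _ := mul_le_mul_of_nonneg_left (le_mul_of_one_le_left (abs_nonneg _) hr)
          (stateNorm_pos _ _).le
      _ ≤ 8 * Real.pi := hmul x hx hx_reg
      _ ≤ K * r * (8 * Real.pi) :=
          le_mul_of_one_le_left (by positivity) (one_le_mul_of_one_le_of_one_le hK hr)
      _ = _ := by ring
  · push Not at hlarge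
    refine ⟨θ₁, Set.left_mem_Icc.2 hθ, fun x hx hx_reg => ?_⟩
    have habs : |x - θ₁| ≤ 2 * Real.pi := by
      rw [abs_of_nonneg (sub_nonneg.2 hx.1)]
      linarith [hx.2, Real.pi_pos]
    have hsmall := h.stateNorm_le_of_not_eventually_le hx_reg (by simpa using hlarge x hx)
    refine mul_le_mul (hsmall.trans ?_) habs (abs_nonneg _) (by positivity)
    gcongr
    norm_num

lemma exists_log_stateNorm_circleMap_le (h : IsNormalHamSolution α β p q) {K r ρ θ₁ θ₂ : ℝ}
    (hK : 1 ≤ K) (hr : 1 ≤ r) (hθ : θ₁ ≤ θ₂) (hθπ : θ₂ - θ₁ ≤ Real.pi) (hθρ : r * (θ₂ - θ₁) < ρ)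
    (hchart : ∀ c, ‖c‖ ≤ r →
      (∀ᶠ a in 𝓝[(singularSet p q)ᶜ] c, 2 * K * r ≤ stateNorm (p a) (q a)) →
        IsPolarChart p q c ρ) :
    ∃ φ ∈ Set.Icc θ₁ θ₂, ∀ x ∈ Set.Icc θ₁ θ₂, x ≠ φ → circleMap 0 r x ∉ singularSet p q →
      Real.log (stateNorm (p (circleMap 0 r x)) (q (circleMap 0 r x))) ≤
        Real.log (4 * K * r) + (Real.log (2 * Real.pi) - Real.log (x - φ)) := by
  obtain ⟨φ, hφ, hmul⟩ := h.exists_stateNorm_circleMap_mul_abs_sub_le hK hr hθ hθπ hθρ hchart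
  refine ⟨φ, hφ, fun x hx hxφ hx_reg => ?_⟩
  have hsub : 0 < |x - φ| := abs_pos.2 (sub_ne_zero.2 hxφ)
  have hlog := Real.log_le_log (mul_pos (stateNorm_pos _ _) hsub) (hmul x hx hx_reg)
  rw [Real.log_mul (stateNorm_pos _ _).ne' hsub.ne', Real.log_mul (by positivity) (by positivity),
    Real.log_abs] at hlog
  linarith

lemma proximity_le (h : IsNormalHamSolution α β p q) {f : ℂ → ℂ}
    (hf : ∀ z, ‖f z‖ ≤ stateNorm (p z) (q z)) {K r ρ : ℝ} {n : ℕ} (hK : 1 ≤ K) (hr : 1 ≤ r)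
    (hn : 2 ≤ n) (hnρ : r * (2 * Real.pi / n) < ρ)
    (hchart : ∀ c, ‖c‖ ≤ r →
      (∀ᶠ a in 𝓝[(singularSet p q)ᶜ] c, 2 * K * r ≤ stateNorm (p a) (q a)) →
        IsPolarChart p q c ρ) :
    proximity f r ≤ Real.log (4 * K * r) + 2 * n := by
  refine proximity_le_of_forall_arc (by positivity) fun i hi => ?_
  have hlength : ((i + 1 : ℕ) : ℝ) * (2 * Real.pi / n) - i * (2 * Real.pi / n) =
      2 * Real.pi / n := by
    push_cast
    ring
  have hlength_le : 2 * Real.pi / n ≤ Real.pi := by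
    rw [div_le_iff₀ (by positivity), mul_comm]
    gcongr
    exact_mod_cast hn
  obtain ⟨φ, hφ_mem, hφ⟩ := h.exists_log_stateNorm_circleMap_le hK hr
    (sub_nonneg.1 (by rw [hlength]; positivity)) (hlength.trans_le hlength_le) (by rwa [hlength])
    hchart
  have hstart : 0 ≤ i * (2 * Real.pi / n) := by positivity
  refine ⟨φ, ⟨hstart.trans hφ_mem.1, hφ_mem.2.trans ?_⟩, ?_⟩
  · rw [mul_div_left_comm]
    exact mul_le_of_le_one_right (by positivity) (div_le_one_of_le₀ (mod_cast hi) (by positivity))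
  · filter_upwards [(h.countable_singularSet.preimage_circleMap 0 (by positivity : r ≠ 0)).ae_notMem
      MeasureTheory.volume, MeasureTheory.Measure.ae_ne MeasureTheory.volume φ] with x hx_reg hxφ hx
    refine le_trans ?_ (hφ x hx hxφ hx_reg)
    rw [← Real.posLog_eq_log ((one_le_stateNorm _ _).trans (le_abs_self _))]
    exact Real.posLog_le_posLog (norm_nonneg _) (hf _)

lemma exists_proximity_le_mul_sq (h : IsNormalHamSolution α β p q) {f : ℂ → ℂ}
    (hf : ∀ z, ‖f z‖ ≤ stateNorm (p z) (q z)) :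
    ∃ C : ℝ, ∀ r, 1 ≤ r → proximity f r ≤ C * r ^ 2 := by
  obtain ⟨K, δ, hK, hδ, hchart⟩ := h.exists_forall_isPolarChart
  refine ⟨4 * K + 2 * (2 * Real.pi / δ + 2), fun r hr => ?_⟩
  obtain ⟨n, hn, hn_lower, hn_upper⟩ :=
    exists_nat_two_le_lt_le (a := 2 * Real.pi * r ^ 2 / δ) (by positivity)
  have hshort : r * (2 * Real.pi / n) < δ / r := by
    field_simp at hn_lower ⊢
    linarith
  have hr_le : r ≤ r ^ 2 := le_self_pow₀ hr two_ne_zero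
  calc proximity f r ≤ Real.log (4 * K * r) + 2 * n :=
        h.proximity_le hf hK hr hn hshort (hchart r hr)
    _ ≤ 4 * K * r + 2 * (2 * Real.pi * r ^ 2 / δ + 2) := by
        gcongr
        exact Real.log_le_self (by positivity)
    _ ≤ 4 * K * r ^ 2 + 2 * (2 * Real.pi * r ^ 2 / δ + 2 * r ^ 2) := by
        gcongr
        linarith
    _ = (4 * K + 2 * (2 * Real.pi / δ + 2)) * r ^ 2 := by ring

lemma poleMult_le_one (h : IsNormalHamSolution α β p q) {f : ℂ → ℂ} {z : ℂ}
    (hf : ∀ z, ‖f z‖ ≤ stateNorm (p z) (q z)) (hmero : MeromorphicAt f z)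
    (hz : z ∈ singularSet p q) : poleMult f z ≤ 1 := by
  refine poleMult_le_of_norm_le (B := 16) hmero ?_
  filter_upwards [h.norm_sub_mul_stateNorm_eventually_le hz] with w hw
  rw [pow_one, norm_mul]
  exact hw.trans' (by gcongr; exact hf w)

lemma exists_countingN_le_mul_pow_four (h : IsNormalHamSolution α β p q) {f : ℂ → ℂ}
    (hf : ∀ z, ‖f z‖ ≤ stateNorm (p z) (q z)) (hmero : ∀ z, MeromorphicAt f z)
    (hcont : ∀ z ∉ singularSet p q, ContinuousAt f z) :
    ∃ C : ℝ, ∀ r, 1 ≤ r → countingN f r ≤ C * r ^ 4 := by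
  obtain ⟨C, hC⟩ := h.exists_finite_and_ncard_singularSet_le
  have hregular : ∀ z ∉ singularSet p q, poleMult f z = 0 :=
    fun z hz => poleMult_eq_zero (hcont z hz)
  have hmult : ∀ z, poleMult f z ≤ 1 := fun z => by
    by_cases hz : z ∈ singularSet p q
    · exact h.poleMult_le_one hf (hmero z) hz
    · exact (hregular z hz).trans_le zero_le_one
  have hfinite : ∀ t, (singularSet p q ∩ closedBall 0 t).Finite := fun t =>
    (hC (max 1 t) (le_max_left _ _)).1.subset
      (Set.inter_subset_inter_right _ (closedBall_subset_closedBall (le_max_right _ _)))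
  refine exists_countingN_le (C := C) hregular hfinite fun t ht => ?_
  have hcount := nPoles_le_mul_ncard hregular (hfinite t) hmult
  rw [Nat.cast_one, mul_one] at hcount
  exact hcount.trans (hC t ht).2

theorem exists_nevT_le_mul_pow_four (h : IsNormalHamSolution α β p q) {f : ℂ → ℂ}
    (hf : ∀ z, ‖f z‖ ≤ stateNorm (p z) (q z)) (hmero : ∀ z, MeromorphicAt f z)
    (hcont : ∀ z ∉ singularSet p q, ContinuousAt f z) :
    ∃ C : ℝ, ∀ r, 1 ≤ r → nevT f r ≤ C * r ^ 4 := by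
  obtain ⟨A, hA⟩ := h.exists_proximity_le_mul_sq hf
  obtain ⟨B, hB⟩ := h.exists_countingN_le_mul_pow_four hf hmero hcont
  refine ⟨|A| + B, fun r hr => ?_⟩
  rw [nevT, add_mul]
  refine add_le_add ((hA r hr).trans ?_) (hB r hr)
  gcongr
  · exact le_abs_self A
  · norm_num

end IsNormalHamSolution

end Solutions

/-- Any meromorphic solution of the Hamiltonian system on `ℂ` has order
of growth at most four: `T(r, p) + T(r, q) ≤ C·r⁴` for `r ≥ 1`. -/
theorem stmt_7 (α β : ℂ) (p q : ℂ → ℂ) (h : IsHamSolution α β p q) :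
    ∃ C : ℝ, ∀ r : ℝ, 1 ≤ r → nevT p r + nevT q r ≤ C * r ^ 4 := by
  have hsol := h.isNormalHamSolution_toMeromorphicNFOn
  obtain ⟨A, hA⟩ := hsol.exists_nevT_le_mul_pow_four (fun z => norm_fst_le_stateNorm _ _)
    (fun z => (hsol.meromorphicNFAt_fst z).meromorphicAt)
    (fun z hz => (hsol.hasDerivAt_fst hz).continuousAt)
  obtain ⟨B, hB⟩ := hsol.exists_nevT_le_mul_pow_four (fun z => norm_snd_le_stateNorm _ _)
    (fun z => (hsol.meromorphicNFAt_snd z).meromorphicAt)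
    (fun z hz => (hsol.hasDerivAt_snd hz).continuousAt)
  refine ⟨A + B, fun r hr => ?_⟩
  have hr0 : r ≠ 0 := (zero_lt_one.trans_le hr).ne'
  rw [nevT_congr_codiscrete (toMeromorphicNFOn_eqOn_codiscrete h.1) hr0,
    nevT_congr_codiscrete (toMeromorphicNFOn_eqOn_codiscrete h.2.1) hr0, add_mul]
  exact add_le_add (hA r hr) (hB r hr)
end
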